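/- Let u₀ be the exhaustion of the unit disc 𝔻 given by u₀ = −(1 − Re z)^{3/4} − ρ (ρ the harmonic extension of the boundary values of −(1 − Re z)^{3/4}), with boundary Monge–Ampère measure dμ_{u₀} = β dσ, and let φ(z) = e^{iθ₀}(z − a)/(1 − ā z) with a ∈ 𝔻 be a Möbius automorphism of 𝔻. Then for 1 ≤ p < ∞ the following are equivalent: (i) the composition operator C_φ(f) = f∘φ is bounded on H^p_{u₀}(𝔻); (ii) there exists a constant K > 0 such that ∫_E β(φ^{−1}(η)) dσ(η) ≤ K ∫_E β(η) dσ(η) for every measurable set E ⊂ ∂𝔻 (where φ^{−1} denotes the boundary map induced by the inverse automorphism); (iii) φ(1) = 1. -/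

import Mathlib

open MeasureTheory Filter Metric Complex Set
open scoped Real ENNReal Topology

noncomputable section

/-- The Laplacian of a real-valued function on `ℂ ≅ ℝ²`. -/
def lap (φ : ℂ → ℝ) (z : ℂ) : ℝ :=
  fderiv ℝ (fun w => fderiv ℝ φ w 1) z 1 +
    fderiv ℝ (fun w => fderiv ℝ φ w Complex.I) z Complex.I

/-- `h` is harmonic on `s`. -/
def HarmonicOn (h : ℂ → ℝ) (s : Set ℂ) : Prop :=
  ContDiffOn ℝ 2 h s ∧ ∀ z ∈ s, lap h z = 0

/-- `u` is subharmonic on `s` (continuous with the sub-mean-value property). -/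
def SubharmonicOn (u : ℂ → ℝ) (s : Set ℂ) : Prop :=
  ContinuousOn u s ∧ ∀ z ∈ s, ∀ r : ℝ, 0 < r → closedBall z r ⊆ s →
    u z ≤ (2 * Real.pi)⁻¹ *
      ∫ t in (0:ℝ)..(2 * Real.pi), u (z + (r : ℂ) * Complex.exp ((t : ℂ) * Complex.I))

/-- `u` is a negative continuous subharmonic exhaustion function for `Ω`:
sublevel sets `{u < c}`, `c < 0`, are relatively compact in `Ω`. -/
structure IsExhaustion (u : ℂ → ℝ) (Ω : Set ℂ) : Prop where
  neg : ∀ z ∈ Ω, u z < 0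
  subh : SubharmonicOn u Ω
  exh : ∀ c : ℝ, c < 0 → IsCompact (closure {z | z ∈ Ω ∧ u z < c}) ∧
    closure {z | z ∈ Ω ∧ u z < c} ⊆ Ω

/-- `ν` is the Riesz measure `dd^c u = (1/4) Δu dA` of `u` on `Ω`, characterized
distributionally: `∫ φ dν = (1/4) ∫_Ω u Δφ dA` for test functions `φ`. -/
def IsRieszMeasure (u : ℂ → ℝ) (Ω : Set ℂ) (ν : Measure ℂ) : Prop :=
  ν Ωᶜ = 0 ∧
  ∀ φ : ℂ → ℝ, ContDiff ℝ 2 φ → HasCompactSupport φ → tsupport φ ⊆ Ω →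
    ∫ z, φ z ∂ν = (4 : ℝ)⁻¹ * ∫ z in Ω, u z * lap φ z

/-- `μ` is the Monge–Ampère measure `μ_{u,r} = dd^c max(u,r) - χ_{Ω∖{u<r}} dd^c u`,
where `ν = dd^c u`. -/
def IsMAMeasure (u : ℂ → ℝ) (Ω : Set ℂ) (ν : Measure ℂ) (r : ℝ) (μ : Measure ℂ) : Prop :=
  ∃ νr : Measure ℂ, IsRieszMeasure (fun z => max (u z) r) Ω νr ∧
    μ = νr - ν.restrict {z | z ∈ Ω ∧ r ≤ u z}

/-- The `p`-th power of the Poletsky–Stessin Hardy "norm",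
`limsup_{r→0⁻} ∫ |f|^p dμ_{u,r}`. -/
def psNormPow (p : ℝ) (μfam : ℝ → Measure ℂ) (f : ℂ → ℂ) : ℝ≥0∞ :=
  Filter.limsup (fun r => ∫⁻ z, ENNReal.ofReal (‖f z‖ ^ p) ∂(μfam r))
    (nhdsWithin 0 (Set.Iio 0))

/-- The Poletsky–Stessin Hardy norm. -/
def psNorm (p : ℝ) (μfam : ℝ → Measure ℂ) (f : ℂ → ℂ) : ℝ≥0∞ :=
  psNormPow p μfam f ^ (1 / p)

/-- Membership in the Poletsky–Stessin Hardy space `H^p_u(Ω)`, where `μfam r = μ_{u,r}`. -/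
def MemPS (p : ℝ) (Ω : Set ℂ) (μfam : ℝ → Measure ℂ) (f : ℂ → ℂ) : Prop :=
  DifferentiableOn ℂ f Ω ∧ psNormPow p μfam f < ⊤

/-- Membership in the classical Hardy space `H^p(Ω)`: `|f|^p` has a harmonic majorant. -/
def MemHClassical (p : ℝ) (Ω : Set ℂ) (f : ℂ → ℂ) : Prop :=
  DifferentiableOn ℂ f Ω ∧
    ∃ h : ℂ → ℝ, HarmonicOn h Ω ∧ ∀ z ∈ Ω, ‖f z‖ ^ p ≤ h z

/-- A bounded domain in `ℂ` containing `0` whose boundary is an analytic Jordan curve: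
there is a conformal map of the unit disc onto `Ω` extending analytically and injectively
across the closed disc, carrying the unit circle onto the boundary of `Ω`. -/
structure AnalyticJordanDomain (Ω : Set ℂ) : Prop where
  isOpen : IsOpen Ω
  isConnected : IsConnected Ω
  isBounded : Bornology.IsBounded Ω
  zero_mem : (0:ℂ) ∈ Ω
  analyticBoundary : ∃ (U : Set ℂ) (ψ : ℂ → ℂ), IsOpen U ∧ closedBall (0:ℂ) 1 ⊆ U ∧
    DifferentiableOn ℂ ψ U ∧ Set.InjOn ψ U ∧ ψ '' ball (0:ℂ) 1 = Ω ∧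
    ψ '' sphere (0:ℂ) 1 = frontier Ω

/-- `μ` is the boundary Monge–Ampère measure: the weak* limit of the measures
`μfam r = μ_{u,r}` as `r → 0⁻`. -/
def IsBoundaryMA (μfam : ℝ → Measure ℂ) (μ : Measure ℂ) : Prop :=
  ∀ φ : ℂ → ℝ, Continuous φ →
    Filter.Tendsto (fun r => ∫ z, φ z ∂(μfam r)) (nhdsWithin 0 (Set.Iio 0))
      (nhds (∫ z, φ z ∂μ))

/-- `f` has nontangential limit `L` at the boundary point `ξ` of `Ω`. -/
def NTLim (Ω : Set ℂ) (f : ℂ → ℂ) (ξ : ℂ) (L : ℂ) : Prop :=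
  ∀ C : ℝ, 1 < C →
    Filter.Tendsto f
      (nhdsWithin ξ {z | z ∈ Ω ∧ dist z ξ ≤ C * infDist z (frontier Ω)}) (nhds L)

/-- Arc length measure on the boundary of `Ω` (1-dimensional Hausdorff measure). -/
def arcLen (Ω : Set ℂ) : Measure ℂ := (μH[1] : Measure ℂ).restrict (frontier Ω)


/-- The composition operator `C_φ : f ↦ f ∘ φ` is bounded on `H^p_u(𝔻)`. -/
def BoundedCompOp (p : ℝ) (μfam : ℝ → Measure ℂ) (φ : ℂ → ℂ) : Prop :=
  ∃ M : ℝ, 0 < M ∧ ∀ f : ℂ → ℂ, MemPS p (ball (0:ℂ) 1) μfam f →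
    MemPS p (ball (0:ℂ) 1) μfam (f ∘ φ) ∧
      psNorm p μfam (f ∘ φ) ≤ ENNReal.ofReal M * psNorm p μfam f

/-
Integrating by parts against `max (u, r)` gives the Lelong–Jensen formula
`∫ v dμ_{u,r} = ¼ ∫_{u < r} (v Δu + (r - u) Δv)`, so that everything is decided by the sizes of
`u` and `Δu`. The maximum principle yields `-u ≍ (1 - |z|²) (1 - re z)^(-1/4)`.

If `φ(1) = 1`, then `1 - re φ(z) ≍ 1 - re z`, hence `u ∘ φ ≍ u`, and a change of variables gives
`∫ v ∘ φ dμ_{u,r} ≤ C ∫ v dμ_{u,r/C}` for subharmonic `v ≥ 0`. The choice `v = |f|^p` bounds the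
composition operator. Real parts of entire functions are dense in the continuous functions on the
circle, so as `r → 0⁻` the inequality passes to the boundary measure.

If `φ(1) = b ≠ 1`, test with `|1 + δ - b̄ z|^(-3/4)`, a power of the modulus of a holomorphic
function. Its integrals stay bounded as `δ → 0`, because `Δu` is bounded near `b`, but those of its
pullback under `φ` grow like `δ^(-1/8)`: on a box of side lengths `δ` and `√δ` at `1` the density
`Δu ≍ (1 - re z)^(-5/4)` is of order `δ^(-5/4)` and the pullback of order `δ^(-3/8)`.
-/

section SecondDerivative

variable {E : Type*} [NormedAddCommGroup E] [NormedSpace ℝ E] {v w : E → ℝ} {x : E}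

/-- The second derivative of `v` at `x` in the direction `e`, written as an iterated first
derivative so that `lap` is by definition a sum of two of these. -/
def dirDeriv₂ (e : E) (v : E → ℝ) (x : E) : ℝ :=
  fderiv ℝ (fun y => fderiv ℝ v y e) x e

lemma eventually_differentiableAt_of_contDiffAt (hv : ContDiffAt ℝ 2 v x) :
    ∀ᶠ y in 𝓝 x, DifferentiableAt ℝ v y :=
  (hv.eventually (by simp)).mono fun _ hy => hy.differentiableAt two_ne_zero

lemma differentiableAt_fderiv_of_contDiffAt (hv : ContDiffAt ℝ 2 v x) :
    DifferentiableAt ℝ (fderiv ℝ v) x :=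
  (hv.fderiv_right (m := 1) (by norm_num)).differentiableAt one_ne_zero

lemma differentiableAt_fderiv_apply (hv : ContDiffAt ℝ 2 v x) (e : E) :
    DifferentiableAt ℝ (fun y => fderiv ℝ v y e) x :=
  (differentiableAt_fderiv_of_contDiffAt hv).clm_apply (differentiableAt_const e)

lemma dirDeriv₂_eq_fderiv_fderiv (hv : ContDiffAt ℝ 2 v x) (e : E) :
    dirDeriv₂ e v x = fderiv ℝ (fderiv ℝ v) x e e := by
  rw [dirDeriv₂, fderiv_clm_apply (differentiableAt_fderiv_of_contDiffAt hv)
    (differentiableAt_const e)]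
  simp

lemma dirDeriv₂_mul (hv : ContDiffAt ℝ 2 v x) (hw : ContDiffAt ℝ 2 w x) (e : E) :
    dirDeriv₂ e (fun y => v y * w y) x =
      v x * dirDeriv₂ e w x + w x * dirDeriv₂ e v x + 2 * (fderiv ℝ v x e * fderiv ℝ w x e) := by
  have hfirst : (fun y => fderiv ℝ (fun y => v y * w y) y e) =ᶠ[𝓝 x]
      fun y => v y * fderiv ℝ w y e + w y * fderiv ℝ v y e := by
    filter_upwards [eventually_differentiableAt_of_contDiffAt hv,
      eventually_differentiableAt_of_contDiffAt hw] with y hy hy'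
    simp [fderiv_fun_mul hy hy']
  have hv' := hv.differentiableAt two_ne_zero
  have hw' := hw.differentiableAt two_ne_zero
  have hvd := differentiableAt_fderiv_apply hv e
  have hwd := differentiableAt_fderiv_apply hw e
  rw [dirDeriv₂, hfirst.fderiv_eq, fderiv_fun_add (hv'.fun_mul hwd) (hw'.fun_mul hvd),
    fderiv_fun_mul hv' hwd, fderiv_fun_mul hw' hvd]
  simp only [dirDeriv₂, add_apply, smul_apply, smul_eq_mul]
  ring

lemma dirDeriv₂_comp {M M' : ℝ → ℝ} {M'' : ℝ} (hv : ContDiffAt ℝ 2 v x)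
    (hM : ∀ᶠ t in 𝓝 (v x), HasDerivAt M (M' t) t) (hM' : HasDerivAt M' M'' (v x)) (e : E) :
    dirDeriv₂ e (fun y => M (v y)) x = M' (v x) * dirDeriv₂ e v x + M'' * fderiv ℝ v x e ^ 2 := by
  have hfirst : (fun y => fderiv ℝ (fun y => M (v y)) y e) =ᶠ[𝓝 x]
      fun y => M' (v y) * fderiv ℝ v y e := by
    filter_upwards [eventually_differentiableAt_of_contDiffAt hv, hv.continuousAt.eventually hM]
      with y hy hMy
    have hMv : HasFDerivAt (fun y => M (v y)) (M' (v y) • fderiv ℝ v y) y :=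
      hMy.comp_hasFDerivAt y hy.hasFDerivAt
    simp [hMv.fderiv]
  have hM'v : HasFDerivAt (fun y => M' (v y)) (M'' • fderiv ℝ v x) x :=
    hM'.comp_hasFDerivAt x (hv.differentiableAt two_ne_zero).hasFDerivAt
  rw [dirDeriv₂, hfirst.fderiv_eq,
    fderiv_fun_mul hM'v.differentiableAt (differentiableAt_fderiv_apply hv e), hM'v.fderiv]
  simp only [dirDeriv₂, add_apply, smul_apply, smul_eq_mul]
  ring

lemma dirDeriv₂_clm (L : E →L[ℝ] ℝ) (e x : E) : dirDeriv₂ e (fun y => L y) x = 0 := by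
  simp [dirDeriv₂]

lemma hasDerivAt_line (x e : E) (t : ℝ) : HasDerivAt (fun t : ℝ => x + t • e) e t := by
  simpa using ((hasDerivAt_id t).smul_const e).const_add x

lemma deriv_line_eventuallyEq (hv : ContDiffAt ℝ 2 v x) (e : E) :
    deriv (fun t : ℝ => v (x + t • e)) =ᶠ[𝓝 0] fun t : ℝ => fderiv ℝ v (x + t • e) e := by
  have hline : Tendsto (fun t : ℝ => x + t • e) (𝓝 0) (𝓝 x) := by
    simpa using (hasDerivAt_line x e 0).continuousAt.tendsto
  filter_upwards [hline.eventually (eventually_differentiableAt_of_contDiffAt hv)] with t ht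
  exact (ht.hasFDerivAt.comp_hasDerivAt t (hasDerivAt_line x e t)).deriv

lemma deriv_deriv_line (hv : ContDiffAt ℝ 2 v x) (e : E) :
    deriv (deriv fun t : ℝ => v (x + t • e)) 0 = dirDeriv₂ e v x := by
  rw [(deriv_line_eventuallyEq hv e).deriv_eq]
  exact (HasFDerivAt.comp_hasDerivAt_of_eq 0 (differentiableAt_fderiv_apply hv e).hasFDerivAt
    (hasDerivAt_line x e 0) (by simp)).deriv

lemma dirDeriv₂_nonpos_of_isLocalMax (hv : ContDiffAt ℝ 2 v x) (hmax : IsLocalMax v x) (e : E) :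
    dirDeriv₂ e v x ≤ 0 := by
  by_contra! hpos
  set γ : ℝ → ℝ := fun t => v (x + t • e)
  have hx : x + (0 : ℝ) • e = x := by simp
  have hline : ContinuousAt (fun t : ℝ => x + t • e) 0 := (hasDerivAt_line x e 0).continuousAt
  have hγmax : IsLocalMax γ 0 := by
    have := hline.tendsto.eventually (hx.symm ▸ hmax)
    filter_upwards [this] with t ht using by simpa only [γ, hx] using ht
  have hγcont : ContinuousAt γ 0 :=
    ContinuousAt.comp_of_eq hv.continuousAt hline hx
  rw [← deriv_deriv_line hv e] at hpos
  have hγmin : IsLocalMin γ 0 := isLocalMin_of_deriv_deriv_pos hpos hγmax.deriv_eq_zero hγcont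
  have hγconst : γ =ᶠ[𝓝 0] fun _ => γ 0 := by
    filter_upwards [hγmax, hγmin] with t h₁ h₂ using le_antisymm h₁ h₂
  rw [hγconst.deriv.deriv_eq] at hpos
  simp at hpos

end SecondDerivative

section Laplacian

variable {v w : ℂ → ℝ} {z : ℂ} {Ω : Set ℂ}

lemma lap_eq_dirDeriv₂ (v : ℂ → ℝ) (z : ℂ) : lap v z = dirDeriv₂ 1 v z + dirDeriv₂ I v z := rfl

lemma lap_eq_fderiv_fderiv (hv : ContDiffAt ℝ 2 v z) :
    lap v z = fderiv ℝ (fderiv ℝ v) z 1 1 + fderiv ℝ (fderiv ℝ v) z I I := by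
  rw [lap_eq_dirDeriv₂, dirDeriv₂_eq_fderiv_fderiv hv, dirDeriv₂_eq_fderiv_fderiv hv]

lemma lap_eq_laplacian (hv : ContDiffAt ℝ 2 v z) : lap v z = Laplacian.laplacian v z := by
  simp [lap_eq_fderiv_fderiv hv, InnerProductSpace.laplacian_eq_iteratedFDeriv_complexPlane,
    iteratedFDeriv_two_apply]

lemma lap_congr (h : v =ᶠ[𝓝 z] w) : lap v z = lap w z := by
  have hfirst (e : ℂ) : (fun y => fderiv ℝ v y e) =ᶠ[𝓝 z] fun y => fderiv ℝ w y e :=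
    h.fderiv.fun_comp fun L => L e
  simp only [lap, (hfirst _).fderiv_eq]

lemma lap_add (hv : ContDiffAt ℝ 2 v z) (hw : ContDiffAt ℝ 2 w z) :
    lap (fun y => v y + w y) z = lap v z + lap w z := by
  rw [lap_eq_laplacian (hv.add hw), lap_eq_laplacian hv, lap_eq_laplacian hw]
  exact hv.laplacian_add hw

lemma lap_sub (hv : ContDiffAt ℝ 2 v z) (hw : ContDiffAt ℝ 2 w z) :
    lap (fun y => v y - w y) z = lap v z - lap w z := by
  rw [lap_eq_laplacian (hv.sub hw), lap_eq_laplacian hv, lap_eq_laplacian hw]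
  exact hv.laplacian_sub hw

lemma lap_const_mul (hv : ContDiffAt ℝ 2 v z) (c : ℝ) :
    lap (fun y => c * v y) z = c * lap v z := by
  rw [lap_eq_laplacian (contDiffAt_const.mul hv), lap_eq_laplacian hv]
  exact InnerProductSpace.laplacian_smul c hv

lemma lap_mul (hv : ContDiffAt ℝ 2 v z) (hw : ContDiffAt ℝ 2 w z) :
    lap (fun y => v y * w y) z = v z * lap w z + w z * lap v z +
      2 * (fderiv ℝ v z 1 * fderiv ℝ w z 1 + fderiv ℝ v z I * fderiv ℝ w z I) := by
  simp only [lap_eq_dirDeriv₂, dirDeriv₂_mul hv hw]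
  ring

lemma lap_comp {M M' : ℝ → ℝ} {M'' : ℝ} (hv : ContDiffAt ℝ 2 v z)
    (hM : ∀ᶠ t in 𝓝 (v z), HasDerivAt M (M' t) t) (hM' : HasDerivAt M' M'' (v z)) :
    lap (fun y => M (v y)) z =
      M' (v z) * lap v z + M'' * (fderiv ℝ v z 1 ^ 2 + fderiv ℝ v z I ^ 2) := by
  simp only [lap_eq_dirDeriv₂, dirDeriv₂_comp hv hM hM']
  ring

lemma lap_re (z : ℂ) : lap re z = 0 := by
  simp only [lap_eq_dirDeriv₂, show re = fun y => reCLM y from rfl, dirDeriv₂_clm, add_zero]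

lemma fderiv_re_apply (z e : ℂ) : fderiv ℝ re z e = e.re :=
  congrArg (· e) (reCLM.hasFDerivAt (x := z)).fderiv

lemma contDiff_normSq {n : WithTop ℕ∞} : ContDiff ℝ n (normSq : ℂ → ℝ) := by
  simp only [funext normSq_eq_norm_sq]
  exact contDiff_norm_sq ℝ

lemma fderiv_normSq_apply (z e : ℂ) : fderiv ℝ normSq z e = 2 * (z.re * e.re + z.im * e.im) := by
  simp only [funext normSq_eq_norm_sq, fderiv_norm_sq_apply, smul_apply,
    innerSL_apply_apply, Complex.inner, nsmul_eq_mul, mul_re, conj_re, conj_im]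
  ring

lemma lap_normSq (z : ℂ) : lap normSq z = 4 := by
  have (e w : ℂ) : HasFDerivAt (fun y : ℂ => 2 * (y.re * e.re + y.im * e.im))
      ((2 : ℝ) • (e.re • reCLM + e.im • imCLM)) w := by
    have h := ((reCLM.hasFDerivAt (x := w)).mul_const e.re).add
      ((imCLM.hasFDerivAt (x := w)).mul_const e.im)
    simpa using h.const_mul 2
  simp only [lap, fderiv_normSq_apply, (this _ _).fderiv]
  norm_num

lemma lap_nonpos_of_isLocalMax (hv : ContDiffAt ℝ 2 v z) (hmax : IsLocalMax v z) : lap v z ≤ 0 :=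
  add_nonpos (dirDeriv₂_nonpos_of_isLocalMax hv hmax 1) (dirDeriv₂_nonpos_of_isLocalMax hv hmax I)

lemma nonpos_of_lap_nonneg_of_frontier (hΩ : IsOpen Ω) (hb : Bornology.IsBounded Ω)
    (hc : ContinuousOn v (closure Ω)) (hv : ContDiffOn ℝ 2 v Ω) (hlap : ∀ z ∈ Ω, 0 ≤ lap v z)
    (hfr : ∀ z ∈ frontier Ω, v z ≤ 0) (hz : z ∈ Ω) : v z ≤ 0 := by
  by_contra! hpos
  obtain ⟨R, hR⟩ := hb.closure.exists_norm_le
  -- A small multiple of `|z|²` makes the Laplacian strictly positive without moving the maximum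
  -- to the frontier.
  set ε := v z / (R ^ 2 + 1)
  have hε : 0 < ε := by positivity
  set w : ℂ → ℝ := fun y => v y + ε * normSq y
  have hsq : ContDiff ℝ 2 fun y => ε * normSq y := contDiff_const.mul contDiff_normSq
  obtain ⟨m, hm, hmax⟩ := hb.isCompact_closure.exists_isMaxOn ⟨z, subset_closure hz⟩
    (hc.add hsq.continuous.continuousOn)
  have hzm : v z ≤ w m :=
    (le_add_of_nonneg_right (mul_nonneg hε.le (normSq_nonneg z))).trans (hmax (subset_closure hz))
  have hmΩ : m ∈ Ω := by
    by_contra hmΩ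
    have hvm := hfr m ⟨hm, hΩ.interior_eq.symm ▸ hmΩ⟩
    have hεm : ε * normSq m ≤ ε * R ^ 2 := by
      rw [normSq_eq_norm_sq]
      gcongr
      exact hR m hm
    have hεR : ε * R ^ 2 + ε = v z := by
      simp only [ε]
      field_simp
    linarith
  have hvm := hv.contDiffAt (hΩ.mem_nhds hmΩ)
  have hlapw : lap w m = lap v m + ε * 4 := by
    rw [lap_add hvm hsq.contDiffAt, lap_const_mul contDiff_normSq.contDiffAt, lap_normSq]
  have hlocal : IsLocalMax w m :=
    (hmax.on_subset subset_closure).isLocalMax (hΩ.mem_nhds hmΩ)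
  linarith [lap_nonpos_of_isLocalMax (hvm.add hsq.contDiffAt) hlocal, hlap m hmΩ]

end Laplacian

section Holomorphic

variable {V : ℂ → ℝ} {f : ℂ → ℂ} {z : ℂ} {Ω : Set ℂ}

lemma contDiffAt_real_of_analyticAt {n : WithTop ℕ∞} (hf : AnalyticAt ℂ f z) :
    ContDiffAt ℝ n f z :=
  hf.contDiffAt.restrict_scalars ℝ

lemma fderiv_comp_holomorphic_apply {w : ℂ} (hV : DifferentiableAt ℝ V (f w))
    (hf : DifferentiableAt ℂ f w) (e : ℂ) :
    fderiv ℝ (fun y => V (f y)) w e = fderiv ℝ V (f w) (deriv f w * e) := by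
  have h := hV.hasFDerivAt.comp w hf.hasDerivAt.complexToReal_fderiv
  rw [show fderiv ℝ (fun y => V (f y)) w = _ from h.fderiv]
  simp

lemma dirDeriv₂_comp_holomorphic (hf : AnalyticAt ℂ f z) (hV : ContDiffAt ℝ 2 V (f z)) (e : ℂ) :
    dirDeriv₂ e (fun y => V (f y)) z =
      fderiv ℝ (fderiv ℝ V) (f z) (deriv f z * e) (deriv f z * e) +
        fderiv ℝ V (f z) (deriv (deriv f) z * (e * e)) := by
  have hfirst : (fun w => fderiv ℝ (fun y => V (f y)) w e) =ᶠ[𝓝 z]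
      fun w => fderiv ℝ V (f w) (deriv f w * e) := by
    filter_upwards [hf.eventually_analyticAt,
      hf.continuousAt.eventually (eventually_differentiableAt_of_contDiffAt hV)] with w hw hVw
    exact fderiv_comp_holomorphic_apply hVw hw.differentiableAt e
  have hDV : HasFDerivAt (fun w => fderiv ℝ V (f w)) _ z :=
    (differentiableAt_fderiv_of_contDiffAt hV).hasFDerivAt.comp z
      hf.differentiableAt.hasDerivAt.complexToReal_fderiv
  have hDf : HasFDerivAt (fun w => deriv f w * e) _ z :=
    (hf.deriv.differentiableAt.hasDerivAt.mul_const e).complexToReal_fderiv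
  rw [dirDeriv₂, hfirst.fderiv_eq, (hDV.clm_apply hDf).fderiv]
  simp [mul_assoc, add_comm]

lemma bilin_apply_add_apply_mul_I (B : ℂ →L[ℝ] ℂ →L[ℝ] ℝ) (w : ℂ) :
    B w w + B (w * I) (w * I) = normSq w * (B 1 1 + B I I) := by
  have hw : w = w.re • (1 : ℂ) + w.im • I := by simp
  have hwI : w * I = (-w.im) • (1 : ℂ) + w.re • I := by
    apply Complex.ext <;> simp
  rw [hwI]
  nth_rw 1 2 [hw]
  simp only [map_add, map_smul, add_apply, smul_apply,
    smul_eq_mul, normSq_apply]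
  ring

lemma lap_comp_holomorphic (hf : AnalyticAt ℂ f z) (hV : ContDiffAt ℝ 2 V (f z)) :
    lap (fun y => V (f y)) z = normSq (deriv f z) * lap V (f z) := by
  rw [lap_eq_dirDeriv₂, dirDeriv₂_comp_holomorphic hf hV, dirDeriv₂_comp_holomorphic hf hV,
    lap_eq_fderiv_fderiv hV, ← bilin_apply_add_apply_mul_I]
  simp only [mul_one, I_mul_I, mul_neg, map_neg]
  ring

lemma contDiffOn_comp_holomorphicOn {Ω' : Set ℂ} (hΩ : IsOpen Ω) (hV : ContDiffOn ℝ 2 V Ω')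
    (hf : DifferentiableOn ℂ f Ω) (hmaps : MapsTo f Ω Ω') :
    ContDiffOn ℝ 2 (fun y => V (f y)) Ω :=
  hV.comp (fun _ hz => (contDiffAt_real_of_analyticAt
    (hf.analyticAt (hΩ.mem_nhds hz))).contDiffWithinAt) hmaps

lemma contDiff_re {n : WithTop ℕ∞} : ContDiff ℝ n re := reCLM.contDiff

lemma lap_re_comp_holomorphic (hf : AnalyticAt ℂ f z) : lap (fun y => (f y).re) z = 0 := by
  rw [lap_comp_holomorphic hf contDiff_re.contDiffAt, lap_re, mul_zero]

lemma hasDerivAt_add_rpow {ε q t : ℝ} (h : 0 < t + ε) :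
    HasDerivAt (fun s => (s + ε) ^ q) (q * (t + ε) ^ (q - 1)) t := by
  simpa using ((hasDerivAt_id t).add_const ε).rpow_const (p := q) (Or.inl h.ne')

lemma contDiffAt_normSq_add_rpow {ε q : ℝ} {w : ℂ} {n : WithTop ℕ∞} (h : 0 < normSq w + ε) :
    ContDiffAt ℝ n (fun y : ℂ => (normSq y + ε) ^ q) w :=
  (contDiff_normSq.contDiffAt.add contDiffAt_const).rpow_const_of_ne h.ne'

lemma lap_normSq_add_rpow {ε q : ℝ} {w : ℂ} (h : 0 < normSq w + ε) :
    lap (fun y : ℂ => (normSq y + ε) ^ q) w =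
      4 * q * (normSq w + ε) ^ (q - 2) * (ε + q * normSq w) := by
  have hM : ∀ᶠ t in 𝓝 (normSq w), HasDerivAt (fun s => (s + ε) ^ q) (q * (t + ε) ^ (q - 1)) t := by
    filter_upwards [lt_mem_nhds (show -ε < normSq w by linarith)] with t ht
    exact hasDerivAt_add_rpow (by linarith)
  rw [lap_comp contDiff_normSq.contDiffAt hM ((hasDerivAt_add_rpow h).const_mul q), lap_normSq,
    fderiv_normSq_apply, fderiv_normSq_apply, show q - 1 - 1 = q - 2 by ring,
    show q - 1 = q - 2 + 1 by ring, Real.rpow_add_one h.ne']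
  simp only [one_re, one_im, I_re, I_im, normSq_apply]
  ring

lemma lap_normSq_comp_add_rpow {ε q : ℝ} (hf : AnalyticAt ℂ f z) (h : 0 < normSq (f z) + ε) :
    lap (fun y => (normSq (f y) + ε) ^ q) z =
      normSq (deriv f z) * (4 * q * (normSq (f z) + ε) ^ (q - 2) * (ε + q * normSq (f z))) := by
  rw [lap_comp_holomorphic hf (contDiffAt_normSq_add_rpow h), lap_normSq_add_rpow h]

end Holomorphic

section TestFunctions

/-- The `C²` functions with compact support in `Ω`, against which `IsRieszMeasure` tests. -/
structure IsTestFun (Ω : Set ℂ) (ψ : ℂ → ℝ) : Prop where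
  contDiff : ContDiff ℝ 2 ψ
  hasCompactSupport : HasCompactSupport ψ
  tsupport_subset : tsupport ψ ⊆ Ω

variable {Ω Ω' : Set ℂ} {w ψ χ : ℂ → ℝ}

lemma IsTestFun.mono (h : IsTestFun Ω ψ) (hΩ : Ω ⊆ Ω') : IsTestFun Ω' ψ :=
  ⟨h.contDiff, h.hasCompactSupport, h.tsupport_subset.trans hΩ⟩

lemma IsTestFun.add (hψ : IsTestFun Ω ψ) (hχ : IsTestFun Ω χ) :
    IsTestFun Ω (fun z => ψ z + χ z) :=
  ⟨hψ.contDiff.add hχ.contDiff, hψ.hasCompactSupport.add hχ.hasCompactSupport,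
    (tsupport_add ψ χ).trans (union_subset hψ.tsupport_subset hχ.tsupport_subset)⟩

lemma IsTestFun.mul_contDiffOn (hΩ : IsOpen Ω) (hψ : IsTestFun Ω ψ) (hw : ContDiffOn ℝ 2 w Ω) :
    IsTestFun Ω (fun z => ψ z * w z) := by
  have hsub : tsupport (fun z => ψ z * w z) ⊆ tsupport ψ := tsupport_mul_subset_left
  refine ⟨contDiff_iff_contDiffAt.2 fun z => ?_, hψ.hasCompactSupport.mul_right,
    hsub.trans hψ.tsupport_subset⟩
  by_cases hz : z ∈ tsupport (fun z => ψ z * w z)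
  · exact hψ.contDiff.contDiffAt.mul
      (hw.contDiffAt (hΩ.mem_nhds (hψ.tsupport_subset (hsub hz))))
  · exact contDiffAt_const.congr_of_eventuallyEq (notMem_tsupport_iff_eventuallyEq.1 hz)

lemma IsTestFun.eq_zero (h : IsTestFun Ω ψ) {z : ℂ} (hz : z ∉ Ω) : ψ z = 0 :=
  image_eq_zero_of_notMem_tsupport fun hz' => hz (h.tsupport_subset hz')

lemma exists_isTestFun_eq_one (hΩ : IsOpen Ω) {K : Set ℂ} (hK : IsCompact K) (hKΩ : K ⊆ Ω) :
    ∃ χ, IsTestFun Ω χ ∧ (∀ᶠ z in 𝓝ˢ K, χ z = 1) ∧ ∀ z, χ z ∈ Icc (0 : ℝ) 1 := by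
  obtain ⟨L, hL, hKL, hLΩ⟩ := exists_compact_between hK hΩ hKΩ
  obtain ⟨χ, hone, hzero, hχ⟩ := exists_contMDiffMap_one_nhds_of_subset_interior
    (modelWithCornersSelf ℝ ℂ) (n := 2) hK.isClosed hKL
  have hsupp : tsupport χ ⊆ L :=
    closure_minimal (fun z hz => by_contra fun hzL => hz (hzero z hzL)) hL.isClosed
  exact ⟨χ, ⟨χ.contMDiff.contDiff, hL.of_isClosed_subset (isClosed_tsupport _) hsupp,
    hsupp.trans hLΩ⟩, hone, hχ⟩

lemma IsTestFun.integrable (h : IsTestFun Ω ψ) {m : Measure ℂ}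
    (hm : ∀ K ⊆ Ω, IsCompact K → m K < ⊤) : Integrable ψ m :=
  (integrableOn_iff_integrable_of_support_subset (subset_tsupport ψ)).1 <|
    h.contDiff.continuous.continuousOn.integrableOn_of_subset_isCompact h.hasCompactSupport
      (isClosed_tsupport ψ).measurableSet subset_rfl
      (hm _ h.tsupport_subset h.hasCompactSupport).ne

lemma integrable_mul_of_tsupport_subset (hΩ : IsOpen Ω) (hw : ContinuousOn w Ω)
    (hψ : Continuous ψ) (hc : HasCompactSupport ψ) (hs : tsupport ψ ⊆ Ω) :
    Integrable (fun z => w z * ψ z) := by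
  refine Continuous.integrable_of_hasCompactSupport (continuous_of_tsupport fun z hz => ?_)
    hc.mul_left
  have hz' : z ∈ tsupport ψ := tsupport_mul_subset_right hz
  exact (hw.continuousAt (hΩ.mem_nhds (hs hz'))).mul hψ.continuousAt

lemma contDiffOn_fderiv_apply (hΩ : IsOpen Ω) (hw : ContDiffOn ℝ 2 w Ω) (e : ℂ) :
    ContDiffOn ℝ 1 (fun z => fderiv ℝ w z e) Ω :=
  (hw.fderiv_of_isOpen hΩ (by norm_num)).clm_apply contDiffOn_const

lemma continuousOn_dirDeriv₂ (hΩ : IsOpen Ω) (hw : ContDiffOn ℝ 2 w Ω) (e : ℂ) :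
    ContinuousOn (dirDeriv₂ e w) Ω :=
  ((contDiffOn_fderiv_apply hΩ hw e).continuousOn_fderiv_of_isOpen hΩ le_rfl).clm_apply
    continuousOn_const

lemma continuousOn_lap (hΩ : IsOpen Ω) (hw : ContDiffOn ℝ 2 w Ω) : ContinuousOn (lap w) Ω :=
  (continuousOn_dirDeriv₂ hΩ hw 1).add (continuousOn_dirDeriv₂ hΩ hw I)

lemma tsupport_dirDeriv₂_subset (ψ : ℂ → ℝ) (e : ℂ) : tsupport (dirDeriv₂ e ψ) ⊆ tsupport ψ :=
  (tsupport_fderiv_apply_subset ℝ e).trans (tsupport_fderiv_apply_subset ℝ e)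

lemma IsTestFun.integrable_mul_dirDeriv₂ (hΩ : IsOpen Ω) (hw : ContinuousOn w Ω)
    (h : IsTestFun Ω ψ) (e : ℂ) : Integrable (fun z => w z * dirDeriv₂ e ψ z) := by
  refine integrable_mul_of_tsupport_subset hΩ hw ?_
    (h.hasCompactSupport.of_isClosed_subset (isClosed_tsupport _) (tsupport_dirDeriv₂_subset ψ e))
    ((tsupport_dirDeriv₂_subset ψ e).trans h.tsupport_subset)
  exact continuousOn_univ.1 (continuousOn_dirDeriv₂ isOpen_univ h.contDiff.contDiffOn e)

lemma IsTestFun.integrable_mul_lap (hΩ : IsOpen Ω) (hw : ContinuousOn w Ω) (h : IsTestFun Ω ψ) :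
    Integrable (fun z => w z * lap ψ z) := by
  simp only [lap_eq_dirDeriv₂, mul_add]
  exact (h.integrable_mul_dirDeriv₂ hΩ hw 1).add (h.integrable_mul_dirDeriv₂ hΩ hw I)

lemma integral_mul_dirDeriv₂ (hΩ : IsOpen Ω) (hw : ContDiffOn ℝ 2 w Ω) (h : IsTestFun Ω ψ)
    (e : ℂ) : ∫ z, w z * dirDeriv₂ e ψ z = ∫ z, dirDeriv₂ e w z * ψ z := by
  have hw' := contDiffOn_fderiv_apply hΩ hw e
  have hψ' : ContDiff ℝ 1 (fun z => fderiv ℝ ψ z e) :=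
    (h.contDiff.fderiv_right (m := 1) (by norm_num)).clm_apply contDiff_const
  have hsub : tsupport (fun z => fderiv ℝ ψ z e) ⊆ tsupport ψ := tsupport_fderiv_apply_subset ℝ e
  have hc : HasCompactSupport (fun z => fderiv ℝ ψ z e) := h.hasCompactSupport.fderiv_apply ℝ e
  have hs := hsub.trans h.tsupport_subset
  have int_w'ψ' := integrable_mul_of_tsupport_subset hΩ hw'.continuousOn hψ'.continuous hc hs
  calc ∫ z, w z * dirDeriv₂ e ψ z
      = -∫ z, fderiv ℝ w z e * fderiv ℝ ψ z e :=
        integral_mul_fderiv_eq_neg_fderiv_mul_of_integrable int_w'ψ'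
          (h.integrable_mul_dirDeriv₂ hΩ hw.continuousOn e)
          (integrable_mul_of_tsupport_subset hΩ hw.continuousOn hψ'.continuous hc hs)
          (fun z hz => (hw.contDiffAt (hΩ.mem_nhds (hs hz))).differentiableAt two_ne_zero)
          (fun z _ => hψ'.differentiable one_ne_zero z)
    _ = ∫ z, dirDeriv₂ e w z * ψ z := by
        rw [integral_mul_fderiv_eq_neg_fderiv_mul_of_integrable
          (integrable_mul_of_tsupport_subset hΩ (continuousOn_dirDeriv₂ hΩ hw e)
            h.contDiff.continuous h.hasCompactSupport h.tsupport_subset) int_w'ψ'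
          (integrable_mul_of_tsupport_subset hΩ hw'.continuousOn h.contDiff.continuous
            h.hasCompactSupport h.tsupport_subset)
          (fun z hz => (hw'.contDiffAt (hΩ.mem_nhds (h.tsupport_subset hz))).differentiableAt
            one_ne_zero)
          (fun z _ => h.contDiff.differentiable two_ne_zero z), neg_neg]
        rfl

lemma integral_mul_lap (hΩ : IsOpen Ω) (hw : ContDiffOn ℝ 2 w Ω) (h : IsTestFun Ω ψ) :
    ∫ z in Ω, w z * lap ψ z = ∫ z in Ω, lap w z * ψ z := by
  have int_left := h.integrable_mul_dirDeriv₂ hΩ hw.continuousOn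
  have int_right e := integrable_mul_of_tsupport_subset hΩ (continuousOn_dirDeriv₂ hΩ hw e)
    h.contDiff.continuous h.hasCompactSupport h.tsupport_subset
  have lap_zero : ∀ z ∉ Ω, lap ψ z = 0 := fun z hz => by
    rw [lap_congr (w := fun _ => 0) (notMem_tsupport_iff_eventuallyEq.1
      fun hz' => hz (h.tsupport_subset hz'))]
    simp [lap]
  rw [setIntegral_eq_integral_of_forall_compl_eq_zero fun z hz => by rw [lap_zero z hz, mul_zero],
    setIntegral_eq_integral_of_forall_compl_eq_zero fun z hz => by rw [h.eq_zero hz, mul_zero]]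
  simp only [lap_eq_dirDeriv₂, mul_add, add_mul]
  rw [integral_add (int_left 1) (int_left I), integral_add (int_right 1) (int_right I),
    integral_mul_dirDeriv₂ hΩ hw h, integral_mul_dirDeriv₂ hΩ hw h]

end TestFunctions

section MeasureComparison

lemma measure_le_of_forall_isCompact_le {X : Type*} [MetricSpace X] [ProperSpace X]
    [MeasurableSpace X] [BorelSpace X] {U : Set X} {m₁ m₂ : Measure X} (hU : IsOpen U)
    (hm₁ : m₁ Uᶜ = 0) (hm₂ : ∀ K ⊆ U, IsCompact K → m₂ K < ⊤)
    (h : ∀ K ⊆ U, IsCompact K → m₁ K ≤ m₂ K) : m₁ ≤ m₂ := by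
  obtain ⟨F, hF, hFU, hFeq, hFmono⟩ := hU.exists_iUnion_isClosed
  have le_on_compact : ∀ C ⊆ U, IsCompact C → m₁.restrict C ≤ m₂ := by
    intro C hCU hC
    have : IsFiniteMeasure (m₁.restrict C) :=
      isFiniteMeasure_restrict.2 ((h C hCU hC).trans_lt (hm₂ C hCU hC)).ne
    refine Measure.le_iff.2 fun E hE => ?_
    rw [hE.measure_eq_iSup_isCompact_of_ne_top (measure_ne_top _ E)]
    refine iSup₂_le fun L hLE => iSup_le fun hL => ?_
    rw [Measure.restrict_apply hL.measurableSet]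
    exact (h _ (inter_subset_right.trans hCU) (hL.inter hC)).trans
      (measure_mono (inter_subset_left.trans hLE))
  refine Measure.le_iff.2 fun E hE => ?_
  rcases isEmpty_or_nonempty X with _ | ⟨⟨x₀⟩⟩
  · simp [eq_empty_of_isEmpty E]
  let C : ℕ → Set X := fun n => closedBall x₀ n ∩ F n
  have hCU : ∀ n, C n ⊆ U := fun n => inter_subset_right.trans (hFU n)
  have hCc : ∀ n, IsCompact (C n) := fun n => (isCompact_closedBall x₀ n).inter_right (hF n)
  have hCmono : Monotone fun n => E ∩ C n := fun i j hij =>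
    inter_subset_inter_right E
      (inter_subset_inter (closedBall_subset_closedBall (Nat.cast_le.2 hij)) (hFmono hij))
  have hcover : E ∩ U ⊆ ⋃ n, E ∩ C n := by
    rintro x ⟨hxE, hxU⟩
    obtain ⟨i, hi⟩ := mem_iUnion.1 (hFeq ▸ hxU)
    obtain ⟨j, hj⟩ := exists_nat_ge (dist x x₀)
    refine mem_iUnion.2 ⟨max i j, hxE, ?_, hFmono (le_max_left i j) hi⟩
    exact mem_closedBall.2 (hj.trans (Nat.cast_le.2 (le_max_right i j)))
  calc m₁ E ≤ m₁ (E ∩ U) := by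
        rw [← measure_inter_add_sdiff E hU.measurableSet]
        simp [measure_mono_null (sdiff_subset_compl E U) hm₁]
    _ ≤ m₁ (⋃ n, E ∩ C n) := measure_mono hcover
    _ = ⨆ n, m₁ (E ∩ C n) := hCmono.measure_iUnion
    _ ≤ m₂ E := iSup_le fun n => by
        rw [← Measure.restrict_apply hE]
        exact le_on_compact (C n) (hCU n) (hCc n) E

lemma measure_le_of_forall_isTestFun {Ω : Set ℂ} {m₁ m₂ : Measure ℂ} (hΩ : IsOpen Ω)
    (hm₁ : m₁ Ωᶜ = 0) (hm₂ : ∀ K ⊆ Ω, IsCompact K → m₂ K < ⊤)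
    (h : ∀ ψ, IsTestFun Ω ψ → (∀ z, 0 ≤ ψ z) →
      ∫⁻ z, ENNReal.ofReal (ψ z) ∂m₁ ≤ ∫⁻ z, ENNReal.ofReal (ψ z) ∂m₂) : m₁ ≤ m₂ := by
  refine measure_le_of_forall_isCompact_le hΩ hm₁ hm₂ fun K hKΩ hK => ?_
  obtain ⟨L, hL, hKL, hLΩ⟩ := exists_compact_between hK hΩ hKΩ
  have : IsFiniteMeasure (m₂.restrict L) := isFiniteMeasure_restrict.2 (hm₂ L hLΩ hL).ne
  refine le_of_forall_gt fun c hc => ?_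
  obtain ⟨V, hKV, hV, hVc⟩ := K.exists_isOpen_lt_of_lt (μ := m₂.restrict L) c
    ((Measure.restrict_apply_le L K).trans_lt hc)
  obtain ⟨χ, hχ, hone, hχ01⟩ := exists_isTestFun_eq_one (hV.inter isOpen_interior) hK
    (subset_inter hKV hKL)
  calc m₁ K = ∫⁻ z, K.indicator 1 z ∂m₁ := (lintegral_indicator_one hK.measurableSet).symm
    _ ≤ ∫⁻ z, ENNReal.ofReal (χ z) ∂m₁ := lintegral_mono fun z => by
        by_cases hz : z ∈ K
        · simp [hz, hone.self_of_nhdsSet z hz]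
        · simp [hz]
    _ ≤ ∫⁻ z, ENNReal.ofReal (χ z) ∂m₂ :=
        h χ (hχ.mono (inter_subset_right.trans (interior_subset.trans hLΩ))) fun z => (hχ01 z).1
    _ ≤ ∫⁻ z, (V ∩ L).indicator 1 z ∂m₂ := lintegral_mono fun z => by
        by_cases hz : z ∈ V ∩ interior L
        · rw [indicator_of_mem (inter_subset_inter_right V interior_subset hz)]
          exact ENNReal.ofReal_le_one.2 (hχ01 z).2
        · simp [hχ.eq_zero hz]
    _ = m₂.restrict L V := by
        rw [lintegral_indicator_one (hV.measurableSet.inter hL.measurableSet),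
          Measure.restrict_apply hV.measurableSet]
    _ < c := hVc

end MeasureComparison

section RieszMeasure

/-- The measure `(1 / 4) Δu dA` on `Ω`, which is the Riesz measure of a `C²` subharmonic `u`. -/
def smoothRieszMeasure (u : ℂ → ℝ) (Ω : Set ℂ) : Measure ℂ :=
  (volume.restrict Ω).withDensity fun z => ENNReal.ofReal (lap u z / 4)

variable {u w ψ : ℂ → ℝ} {Ω V : Set ℂ} {ν : Measure ℂ}

lemma smoothRieszMeasure_compl (hΩ : IsOpen Ω) : smoothRieszMeasure u Ω Ωᶜ = 0 := by
  apply withDensity_absolutelyContinuous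
  simp [Measure.restrict_apply hΩ.measurableSet.compl]

lemma setIntegral_smoothRieszMeasure (hΩ : IsOpen Ω) (hu : ContDiffOn ℝ 2 u Ω)
    (hlap : ∀ z ∈ Ω, 0 ≤ lap u z) (F : ℂ → ℝ) {s : Set ℂ} (hs : MeasurableSet s) (hsΩ : s ⊆ Ω) :
    ∫ z in s, F z ∂smoothRieszMeasure u Ω = ∫ z in s, lap u z / 4 * F z := by
  have hmeas : AEMeasurable (fun z => ENNReal.ofReal (lap u z / 4)) (volume.restrict s) :=
    ((((continuousOn_lap hΩ hu).mono hsΩ).aemeasurable hs).div_const 4).ennreal_ofReal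
  rw [smoothRieszMeasure, restrict_withDensity hs, Measure.restrict_restrict hs,
    inter_eq_self_of_subset_left hsΩ,
    integral_withDensity_eq_integral_toReal_smul₀ hmeas (by simp)]
  refine setIntegral_congr_fun hs fun z hz => ?_
  simp only [ENNReal.toReal_ofReal (div_nonneg (hlap z (hsΩ hz)) zero_le_four), smul_eq_mul]

lemma integral_smoothRieszMeasure (hΩ : IsOpen Ω) (hu : ContDiffOn ℝ 2 u Ω)
    (hlap : ∀ z ∈ Ω, 0 ≤ lap u z) (F : ℂ → ℝ) :
    ∫ z, F z ∂smoothRieszMeasure u Ω = ∫ z in Ω, lap u z / 4 * F z := by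
  have ae_mem : ∀ᵐ z ∂smoothRieszMeasure u Ω, z ∈ Ω := smoothRieszMeasure_compl hΩ
  rw [← setIntegral_smoothRieszMeasure hΩ hu hlap F hΩ.measurableSet subset_rfl,
    Measure.restrict_eq_self_of_ae_mem ae_mem]

lemma smoothRieszMeasure_lt_top_of_isCompact (hΩ : IsOpen Ω) (hu : ContDiffOn ℝ 2 u Ω) :
    ∀ K ⊆ Ω, IsCompact K → smoothRieszMeasure u Ω K < ⊤ := by
  intro K hKΩ hK
  rw [smoothRieszMeasure, withDensity_apply _ hK.measurableSet,
    Measure.restrict_restrict hK.measurableSet, inter_eq_self_of_subset_left hKΩ]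
  exact ((((continuousOn_lap hΩ hu).mono hKΩ).integrableOn_compact hK).div_const 4).lintegral_lt_top

lemma isFiniteMeasure_smoothRieszMeasure (hu : IntegrableOn (lap u) Ω) :
    IsFiniteMeasure (smoothRieszMeasure u Ω) :=
  isFiniteMeasure_withDensity_ofReal (hu.div_const 4).2

lemma smoothRieszMeasure_restrict (hV : MeasurableSet V) (hVΩ : V ⊆ Ω) :
    (smoothRieszMeasure u Ω).restrict V = smoothRieszMeasure u V := by
  rw [smoothRieszMeasure, restrict_withDensity hV, Measure.restrict_restrict hV,
    inter_eq_self_of_subset_left hVΩ, smoothRieszMeasure]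

lemma IsRieszMeasure.integral_eq (hν : IsRieszMeasure w Ω ν) (hψ : IsTestFun Ω ψ) :
    ∫ z, ψ z ∂ν = (4 : ℝ)⁻¹ * ∫ z in Ω, w z * lap ψ z :=
  hν.2 ψ hψ.contDiff hψ.hasCompactSupport hψ.tsupport_subset

lemma IsRieszMeasure.integral_eq_of_eqOn (hν : IsRieszMeasure w Ω ν) (hΩ : IsOpen Ω)
    (hV : IsOpen V) (hVΩ : V ⊆ Ω) (hu : ContDiffOn ℝ 2 u V) (hwu : EqOn w u V)
    (hψ : IsTestFun V ψ) : ∫ z, ψ z ∂ν = ∫ z in V, lap u z / 4 * ψ z := by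
  have lap_zero : ∀ z ∈ Ω \ V, w z * lap ψ z = 0 := fun z hz => by
    rw [lap_congr (w := fun _ => 0) (notMem_tsupport_iff_eventuallyEq.1
      fun hz' => hz.2 (hψ.tsupport_subset hz'))]
    simp [lap]
  calc ∫ z, ψ z ∂ν = (4 : ℝ)⁻¹ * ∫ z in Ω, w z * lap ψ z := hν.integral_eq (hψ.mono hVΩ)
    _ = (4 : ℝ)⁻¹ * ∫ z in V, u z * lap ψ z := by
        rw [setIntegral_eq_of_subset_of_forall_sdiff_eq_zero hΩ.measurableSet hVΩ lap_zero,
          setIntegral_congr_fun (g := fun z => u z * lap ψ z) hV.measurableSet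
            fun z hz => by simp only [hwu hz]]
    _ = ∫ z in V, lap u z / 4 * ψ z := by
        rw [integral_mul_lap hV hu hψ, ← integral_const_mul]
        simp only [div_eq_inv_mul, mul_assoc]

/- A test function of infinite `ν`-mass has integral `0` by convention, and so does its sum with
`χ`; but the right-hand side of the defining identity is additive. -/
lemma IsRieszMeasure.integrable_of_integral_ne_zero {χ : ℂ → ℝ} (hν : IsRieszMeasure w Ω ν)
    (hΩ : IsOpen Ω) (hw : ContinuousOn w Ω) (hχ : IsTestFun Ω χ) (hχ0 : ∀ z, 0 ≤ χ z)
    (hχν : ∫ z, χ z ∂ν ≠ 0) (hψ : IsTestFun Ω ψ) (hψ0 : ∀ z, 0 ≤ ψ z) : Integrable ψ ν := by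
  by_contra hInt
  have hint_add : ¬Integrable (fun z => ψ z + χ z) ν := fun h =>
    hInt <| h.mono' hψ.contDiff.continuous.aestronglyMeasurable <| Eventually.of_forall fun z => by
      rw [Real.norm_of_nonneg (hψ0 z)]
      exact le_add_of_nonneg_right (hχ0 z)
  have lap_sum : ∀ z, lap (fun z => ψ z + χ z) z = lap ψ z + lap χ z := fun z =>
    lap_add hψ.contDiff.contDiffAt hχ.contDiff.contDiffAt
  have hadd := hν.integral_eq (hψ.add hχ)
  simp only [lap_sum, mul_add] at hadd
  rw [integral_undef hint_add, integral_add (hψ.integrable_mul_lap hΩ hw).integrableOn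
    (hχ.integrable_mul_lap hΩ hw).integrableOn, mul_add, ← hν.integral_eq hψ,
    ← hν.integral_eq hχ, integral_undef hInt, zero_add] at hadd
  exact hχν hadd.symm

lemma exists_isTestFun_integral_pos (hV : IsOpen V) (hVne : V.Nonempty) {k : ℂ → ℝ}
    (hk : ContinuousOn k V) (hkpos : ∀ z ∈ V, 0 < k z) :
    ∃ χ, IsTestFun V χ ∧ (∀ z, 0 ≤ χ z) ∧ 0 < ∫ z in V, k z * χ z := by
  obtain ⟨z₀, hz₀⟩ := hVne
  obtain ⟨χ, hχ, hone, hχ01⟩ :=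
    exists_isTestFun_eq_one hV isCompact_singleton (singleton_subset_iff.2 hz₀)
  have hInt : IntegrableOn (fun z => k z * χ z) V :=
    (integrable_mul_of_tsupport_subset hV hk hχ.contDiff.continuous hχ.hasCompactSupport
      hχ.tsupport_subset).integrableOn
  refine ⟨χ, hχ, fun z => (hχ01 z).1, ?_⟩
  rw [setIntegral_pos_iff_support_of_nonneg_ae _ hInt]
  · have hsub : Function.support χ ⊆ Function.support (fun z => k z * χ z) ∩ V := fun z hz =>
      have hzV : z ∈ V := by_contra fun hzV => hz (hχ.eq_zero hzV)
      ⟨mul_ne_zero (hkpos z hzV).ne' hz, hzV⟩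
    refine lt_of_lt_of_le ?_ (measure_mono hsub)
    refine hχ.contDiff.continuous.isOpen_support.measure_pos volume ⟨z₀, ?_⟩
    simp [hone.self_of_nhdsSet z₀ rfl]
  · filter_upwards [ae_restrict_mem hV.measurableSet] with z hz
      using mul_nonneg (hkpos z hz).le (hχ01 z).1

lemma IsRieszMeasure.lt_top_of_isCompact (hν : IsRieszMeasure w Ω ν) (hΩ : IsOpen Ω)
    (hw : ContinuousOn w Ω) (hV : IsOpen V) (hVne : V.Nonempty) (hVΩ : V ⊆ Ω)
    (hu : ContDiffOn ℝ 2 u V) (hlap : ∀ z ∈ V, 0 < lap u z) (hwu : EqOn w u V) :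
    ∀ K ⊆ Ω, IsCompact K → ν K < ⊤ := by
  intro K hKΩ hK
  obtain ⟨χ, hχ, hχ0, hχpos⟩ := exists_isTestFun_integral_pos (k := fun z => lap u z / 4) hV hVne
    ((continuousOn_lap hV hu).div_const 4) fun z hz => div_pos (hlap z hz) zero_lt_four
  rw [← hν.integral_eq_of_eqOn hΩ hV hVΩ hu hwu hχ] at hχpos
  obtain ⟨ψ, hψ, hone, hψ01⟩ := exists_isTestFun_eq_one hΩ hK hKΩ
  have hInt := hν.integrable_of_integral_ne_zero hΩ hw (hχ.mono hVΩ) hχ0 hχpos.ne' hψ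
    fun z => (hψ01 z).1
  calc ν K = ∫⁻ z, K.indicator 1 z ∂ν := (lintegral_indicator_one hK.measurableSet).symm
    _ ≤ ∫⁻ z, ENNReal.ofReal (ψ z) ∂ν := lintegral_mono fun z => by
        by_cases hz : z ∈ K
        · simp [hz, hone.self_of_nhdsSet z hz]
        · simp [hz]
    _ < ⊤ := hInt.lintegral_lt_top

lemma IsRieszMeasure.restrict_eq (hν : IsRieszMeasure w Ω ν) (hΩ : IsOpen Ω)
    (hνc : ∀ K ⊆ Ω, IsCompact K → ν K < ⊤) (hV : IsOpen V) (hVΩ : V ⊆ Ω)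
    (hu : ContDiffOn ℝ 2 u V) (hlap : ∀ z ∈ V, 0 ≤ lap u z) (hwu : EqOn w u V) :
    ν.restrict V = smoothRieszMeasure u V := by
  have hνV : ∀ K ⊆ V, IsCompact K → ν.restrict V K < ⊤ := fun K hKV hK =>
    (Measure.restrict_apply_le V K).trans_lt (hνc K (hKV.trans hVΩ) hK)
  have hκ := smoothRieszMeasure_lt_top_of_isCompact hV hu
  have heq : ∀ ψ, IsTestFun V ψ → (∀ z, 0 ≤ ψ z) → ∫⁻ z, ENNReal.ofReal (ψ z) ∂ν.restrict V =
      ∫⁻ z, ENNReal.ofReal (ψ z) ∂smoothRieszMeasure u V := by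
    intro ψ hψ hψ0
    rw [← ofReal_integral_eq_lintegral_ofReal (hψ.integrable hνV) (Eventually.of_forall hψ0),
      ← ofReal_integral_eq_lintegral_ofReal (hψ.integrable hκ) (Eventually.of_forall hψ0),
      integral_smoothRieszMeasure hV hu hlap, ← hν.integral_eq_of_eqOn hΩ hV hVΩ hu hwu hψ,
      setIntegral_eq_integral_of_forall_compl_eq_zero fun z hz => hψ.eq_zero hz]
  refine le_antisymm
    (measure_le_of_forall_isTestFun hV ?_ hκ fun ψ hψ hψ0 => (heq ψ hψ hψ0).le)
    (measure_le_of_forall_isTestFun hV (smoothRieszMeasure_compl hV) hνV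
      fun ψ hψ hψ0 => (heq ψ hψ hψ0).ge)
  simp [Measure.restrict_apply hV.measurableSet.compl]

end RieszMeasure

section LelongJensen

/-- A `C²` strictly subharmonic function on `Ω` with finite Monge–Ampère mass whose closed
sublevel sets below `0` are compact. -/
structure IsStrictExhaustion (u : ℂ → ℝ) (Ω : Set ℂ) : Prop where
  isOpen : IsOpen Ω
  nonempty : Ω.Nonempty
  contDiffOn : ContDiffOn ℝ 2 u Ω
  lap_pos : ∀ z ∈ Ω, 0 < lap u z
  integrableOn_lap : IntegrableOn (lap u) Ω
  isCompact_sublevel : ∀ r < 0, IsCompact {z | z ∈ Ω ∧ u z ≤ r}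

/-- `ν = dd^c u` and `μ r = μ_{u,r}` are the measures which Poletsky and Stessin attach to the
exhaustion `u`. -/
structure IsMAFamily (u : ℂ → ℝ) (Ω : Set ℂ) (ν : Measure ℂ) (μ : ℝ → Measure ℂ) : Prop where
  isStrictExhaustion : IsStrictExhaustion u Ω
  isRieszMeasure : IsRieszMeasure u Ω ν
  isMAMeasure : ∀ r < 0, IsMAMeasure u Ω ν r (μ r)

/-- The density `(1 / 4) (v Δu + (r - u) Δv)` of the Lelong–Jensen formula. -/
def lelongJensenDensity (u : ℂ → ℝ) (r : ℝ) (v : ℂ → ℝ) (z : ℂ) : ℝ :=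
  lap u z / 4 * v z + (r - u z) * lap v z / 4

variable {u v ψ : ℂ → ℝ} {Ω : Set ℂ} {r s : ℝ} {ν m : Measure ℂ} {μ : ℝ → Measure ℂ}

namespace IsStrictExhaustion

lemma isOpen_sublevel (h : IsStrictExhaustion u Ω) (r : ℝ) : IsOpen {z | z ∈ Ω ∧ u z < r} :=
  h.contDiffOn.continuousOn.isOpen_inter_preimage h.isOpen isOpen_Iio

lemma isOpen_superlevel (h : IsStrictExhaustion u Ω) (r : ℝ) : IsOpen {z | z ∈ Ω ∧ r < u z} :=
  h.contDiffOn.continuousOn.isOpen_inter_preimage h.isOpen isOpen_Ioi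

lemma measurableSet_superlevel (h : IsStrictExhaustion u Ω) (r : ℝ) :
    MeasurableSet {z | z ∈ Ω ∧ r ≤ u z} := by
  convert h.isOpen.measurableSet.diff (h.isOpen_sublevel r).measurableSet using 1
  ext z
  simp only [Set.mem_ofPred_eq, Set.mem_sdiff, not_and, not_lt]
  tauto

lemma nonempty_superlevel (h : IsStrictExhaustion u Ω) (hr : r < 0) :
    {z | z ∈ Ω ∧ r < u z}.Nonempty := by
  by_contra hempty
  have sublevel_eq : {z | z ∈ Ω ∧ u z ≤ r} = Ω := by
    ext z
    exact ⟨And.left, fun hz => ⟨hz, not_lt.1 fun hlt => hempty ⟨z, hz, hlt⟩⟩⟩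
  have hcompact : IsCompact Ω := sublevel_eq ▸ h.isCompact_sublevel r hr
  exact hcompact.ne_univ ((IsClopen.eq_univ ⟨hcompact.isClosed, h.isOpen⟩) h.nonempty)

lemma isFiniteMeasure (h : IsStrictExhaustion u Ω) : IsFiniteMeasure (smoothRieszMeasure u Ω) :=
  isFiniteMeasure_smoothRieszMeasure h.integrableOn_lap

lemma continuousOn_max (h : IsStrictExhaustion u Ω) (r : ℝ) :
    ContinuousOn (fun z => max (u z) r) Ω :=
  h.contDiffOn.continuousOn.sup continuousOn_const

lemma riesz_lt_top_of_isCompact (h : IsStrictExhaustion u Ω) (hr : r < 0)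
    (hm : IsRieszMeasure (fun z => max (u z) r) Ω m) : ∀ K ⊆ Ω, IsCompact K → m K < ⊤ :=
  hm.lt_top_of_isCompact h.isOpen (h.continuousOn_max r) (h.isOpen_superlevel r)
    (h.nonempty_superlevel hr) (fun _ hz => hz.1) (h.contDiffOn.mono fun _ hz => hz.1)
    (fun z hz => h.lap_pos z hz.1) fun _ hz => max_eq_left hz.2.le

lemma riesz_restrict_superlevel (h : IsStrictExhaustion u Ω) (hr : r < 0)
    (hm : IsRieszMeasure (fun z => max (u z) r) Ω m) :
    m.restrict {z | z ∈ Ω ∧ r < u z} =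
      (smoothRieszMeasure u Ω).restrict {z | z ∈ Ω ∧ r < u z} := by
  rw [smoothRieszMeasure_restrict (h.isOpen_superlevel r).measurableSet fun _ hz => hz.1]
  exact hm.restrict_eq h.isOpen (h.riesz_lt_top_of_isCompact hr hm) (h.isOpen_superlevel r)
    (fun _ hz => hz.1) (h.contDiffOn.mono fun _ hz => hz.1) (fun z hz => (h.lap_pos z hz.1).le)
    fun _ hz => max_eq_left hz.2.le

lemma tendsto_integral_max_mul_lap (h : IsStrictExhaustion u Ω) (hψ : IsTestFun Ω ψ) (r : ℝ) :
    Tendsto (fun s => ∫ z in Ω, max (u z) s * lap ψ z) (𝓝 r)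
      (𝓝 (∫ z in Ω, max (u z) r * lap ψ z)) := by
  refine tendsto_integral_filter_of_dominated_convergence
    (fun z => ‖(|u z| + (|r| + 1)) * lap ψ z‖)
    (Eventually.of_forall fun s =>
      (hψ.integrable_mul_lap h.isOpen (h.continuousOn_max s)).integrableOn.aestronglyMeasurable)
    ?_ ?_ ?_
  · filter_upwards [(continuous_abs.tendsto r).eventually_lt_const (lt_add_one |r|)] with s hs
    refine Eventually.of_forall fun z => ?_
    rw [norm_mul, norm_mul]
    gcongr
    rw [Real.norm_eq_abs, Real.norm_of_nonneg (by positivity)]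
    exact abs_max_le_max_abs_abs.trans (max_le_add_of_nonneg (abs_nonneg _) (abs_nonneg _)
      |>.trans (by gcongr))
  · exact (hψ.integrable_mul_lap h.isOpen
      (h.contDiffOn.continuousOn.abs.add continuousOn_const)).integrableOn.norm
  · exact Eventually.of_forall fun z =>
      ((continuous_const.max continuous_id).tendsto r).mul_const _

lemma setIntegral_superlevel_le (h : IsStrictExhaustion u Ω) (hs : s < 0)
    (hm : IsRieszMeasure (fun z => max (u z) s) Ω m) (hψ : IsTestFun Ω ψ) (hψ0 : ∀ z, 0 ≤ ψ z) :
    ∫ z in {z | z ∈ Ω ∧ s < u z}, ψ z ∂smoothRieszMeasure u Ω ≤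
      (4 : ℝ)⁻¹ * ∫ z in Ω, max (u z) s * lap ψ z := by
  rw [← h.riesz_restrict_superlevel hs hm, ← hm.integral_eq hψ]
  exact setIntegral_le_integral (hψ.integrable (h.riesz_lt_top_of_isCompact hs hm))
    (Eventually.of_forall hψ0)

lemma setIntegral_max_sub_self_mul_lap (h : IsStrictExhaustion u Ω) (hψ : IsTestFun Ω ψ) (r : ℝ) :
    (∫ z in Ω, max (u z) r * lap ψ z) - ∫ z in Ω, u z * lap ψ z =
      ∫ z in {z | z ∈ Ω ∧ u z < r}, (r - u z) * lap ψ z := by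
  rw [← integral_sub (hψ.integrable_mul_lap h.isOpen (h.continuousOn_max r)).integrableOn
    (hψ.integrable_mul_lap h.isOpen h.contDiffOn.continuousOn).integrableOn,
    setIntegral_eq_of_subset_of_forall_sdiff_eq_zero (s := {z | z ∈ Ω ∧ u z < r})
      h.isOpen.measurableSet (fun _ hz => hz.1)]
  · refine setIntegral_congr_fun (h.isOpen_sublevel r).measurableSet fun z hz => ?_
    simp only [max_eq_right hz.2.le]
    ring
  · intro z hz
    rw [max_eq_left (not_lt.1 fun hlt => hz.2 ⟨hz.1, hlt⟩), sub_self]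

lemma integrableOn_lelongJensenDensity (h : IsStrictExhaustion u Ω) (hr : r < 0)
    (hv : ContDiffOn ℝ 2 v Ω) :
    IntegrableOn (lelongJensenDensity u r v) {z | z ∈ Ω ∧ u z < r} := by
  have hcont : ContinuousOn (lelongJensenDensity u r v) Ω :=
    (((continuousOn_lap h.isOpen h.contDiffOn).div_const 4).mul hv.continuousOn).add
      (((continuousOn_const.sub h.contDiffOn.continuousOn).mul
        (continuousOn_lap h.isOpen hv)).div_const 4)
  exact ((hcont.mono fun _ hz => hz.1).integrableOn_compact (h.isCompact_sublevel r hr)).mono_set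
    fun z hz => ⟨hz.1, hz.2.le⟩

lemma setIntegral_sublevel_add_superlevel (h : IsStrictExhaustion u Ω) (hψ : IsTestFun Ω ψ)
    (r : ℝ) :
    (∫ z in {z | z ∈ Ω ∧ u z < r}, lap u z / 4 * ψ z) +
        ∫ z in {z | z ∈ Ω ∧ r ≤ u z}, ψ z ∂smoothRieszMeasure u Ω =
      ∫ z in Ω, ψ z ∂smoothRieszMeasure u Ω := by
  have := h.isFiniteMeasure
  have hInt : Integrable ψ (smoothRieszMeasure u Ω) :=
    hψ.integrable fun _ _ _ => measure_lt_top _ _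
  rw [← setIntegral_smoothRieszMeasure h.isOpen h.contDiffOn (fun z hz => (h.lap_pos z hz).le) ψ
      (h.isOpen_sublevel r).measurableSet fun _ hz => hz.1,
    ← setIntegral_union (disjoint_left.2 fun z hz hz' => hz'.2.not_gt hz.2)
      (h.measurableSet_superlevel r) hInt.integrableOn hInt.integrableOn]
  congr 2
  ext z
  have := lt_or_ge (u z) r
  simp only [Set.mem_ofPred_eq, mem_union]
  tauto

end IsStrictExhaustion

namespace IsMAFamily

lemma riesz_eq (h : IsMAFamily u Ω ν μ) : ν = smoothRieszMeasure u Ω := by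
  have hu := h.isStrictExhaustion
  have ae_mem : ∀ᵐ z ∂ν, z ∈ Ω := h.isRieszMeasure.1
  rw [← h.isRieszMeasure.restrict_eq hu.isOpen ?_ hu.isOpen subset_rfl hu.contDiffOn
    (fun z hz => (hu.lap_pos z hz).le) fun _ _ => rfl, Measure.restrict_eq_self_of_ae_mem ae_mem]
  exact h.isRieszMeasure.lt_top_of_isCompact hu.isOpen hu.contDiffOn.continuousOn hu.isOpen
    hu.nonempty subset_rfl hu.contDiffOn hu.lap_pos fun _ _ => rfl

/- For `s < r` the measure `dd^c max(u, s)` coincides with `dd^c u` on `{s < u} ⊇ {r ≤ u}`, and it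
tends weakly to `dd^c max(u, r)` as `s → r`. -/
lemma restrict_le_riesz (h : IsMAFamily u Ω ν μ) (hr : r < 0)
    (hm : IsRieszMeasure (fun z => max (u z) r) Ω m) :
    (smoothRieszMeasure u Ω).restrict {z | z ∈ Ω ∧ r ≤ u z} ≤ m := by
  have hu := h.isStrictExhaustion
  have := hu.isFiniteMeasure
  have hmc := hu.riesz_lt_top_of_isCompact hr hm
  refine measure_le_of_forall_isTestFun hu.isOpen ?_ hmc fun ψ hψ hψ0 => ?_
  · exact Measure.absolutelyContinuous_of_le Measure.restrict_le_self
      (smoothRieszMeasure_compl hu.isOpen)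
  have hInt : Integrable ψ (smoothRieszMeasure u Ω) :=
    hψ.integrable fun _ _ _ => measure_lt_top _ _
  rw [← ofReal_integral_eq_lintegral_ofReal hInt.restrict (Eventually.of_forall hψ0),
    ← ofReal_integral_eq_lintegral_ofReal (hψ.integrable hmc) (Eventually.of_forall hψ0),
    hm.integral_eq hψ]
  refine ENNReal.ofReal_le_ofReal <| ge_of_tendsto
    (((hu.tendsto_integral_max_mul_lap hψ r).mono_left
      (nhdsWithin_le_nhds (s := Iio r))).const_mul _) ?_
  filter_upwards [self_mem_nhdsWithin] with s (hsr : s < r)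
  obtain ⟨νs, hνs, -⟩ := h.isMAMeasure s (hsr.trans hr)
  have hsub : {z | z ∈ Ω ∧ r ≤ u z} ⊆ {z | z ∈ Ω ∧ s < u z} :=
    fun z hz => ⟨hz.1, hsr.trans_le hz.2⟩
  exact (setIntegral_mono_set hInt.integrableOn (Eventually.of_forall hψ0)
    hsub.eventuallyLE).trans (hu.setIntegral_superlevel_le (hsr.trans hr) hνs hψ hψ0)

lemma isRieszMeasure_add (h : IsMAFamily u Ω ν μ) (hr : r < 0) :
    IsRieszMeasure (fun z => max (u z) r) Ω
      (μ r + (smoothRieszMeasure u Ω).restrict {z | z ∈ Ω ∧ r ≤ u z}) := by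
  have := h.isStrictExhaustion.isFiniteMeasure
  obtain ⟨νr, hνr, heq⟩ := h.isMAMeasure r hr
  rwa [heq, h.riesz_eq, Measure.sub_add_cancel_of_le (h.restrict_le_riesz hr hνr)]

lemma measure_compl (h : IsMAFamily u Ω ν μ) (hr : r < 0) : μ r Ωᶜ = 0 :=
  (add_eq_zero.1 (h.isRieszMeasure_add hr).1).1

lemma measure_superlevel (h : IsMAFamily u Ω ν μ) (hr : r < 0) :
    μ r {z | z ∈ Ω ∧ r < u z} = 0 := by
  have hu := h.isStrictExhaustion
  have := hu.isFiniteMeasure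
  have hsub : {z | z ∈ Ω ∧ r < u z} ⊆ {z | z ∈ Ω ∧ r ≤ u z} := fun z hz => ⟨hz.1, hz.2.le⟩
  have heq := congrArg (fun m => m {z | z ∈ Ω ∧ r < u z})
    (hu.riesz_restrict_superlevel hr (h.isRieszMeasure_add hr))
  simp only [Measure.restrict_apply_self, Measure.add_apply] at heq
  rw [Measure.restrict_apply (hu.isOpen_superlevel r).measurableSet,
    inter_eq_self_of_subset_left hsub] at heq
  exact (ENNReal.add_left_inj (measure_ne_top _ _)).1 (heq.trans (zero_add _).symm)

lemma measure_compl_sublevel (h : IsMAFamily u Ω ν μ) (hr : r < 0) :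
    μ r {z | z ∈ Ω ∧ u z ≤ r}ᶜ = 0 := by
  refine measure_mono_null (fun z hz => ?_)
    (measure_union_null (h.measure_compl hr) (h.measure_superlevel hr))
  by_cases hzΩ : z ∈ Ω
  · exact Or.inr ⟨hzΩ, not_le.1 fun hle => hz ⟨hzΩ, hle⟩⟩
  · exact Or.inl hzΩ

lemma lt_top_of_isCompact (h : IsMAFamily u Ω ν μ) (hr : r < 0) :
    ∀ K ⊆ Ω, IsCompact K → μ r K < ⊤ := fun K hKΩ hK =>
  (le_add_right le_rfl : μ r K ≤ _).trans_lt
    (h.isStrictExhaustion.riesz_lt_top_of_isCompact hr (h.isRieszMeasure_add hr) K hKΩ hK)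

lemma isFiniteMeasure (h : IsMAFamily u Ω ν μ) (hr : r < 0) : IsFiniteMeasure (μ r) := by
  have hK := h.isStrictExhaustion.isCompact_sublevel r hr
  refine ⟨?_⟩
  rw [← measure_add_measure_compl hK.measurableSet, h.measure_compl_sublevel hr, add_zero]
  exact h.lt_top_of_isCompact hr _ (fun _ hz => hz.1) hK

lemma integral_testFun (h : IsMAFamily u Ω ν μ) (hr : r < 0) (hψ : IsTestFun Ω ψ) :
    ∫ z, ψ z ∂μ r = ∫ z in {z | z ∈ Ω ∧ u z < r}, lelongJensenDensity u r ψ z := by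
  have hu := h.isStrictExhaustion
  have := hu.isFiniteMeasure
  have hIntμ : Integrable ψ (μ r) := hψ.integrable (h.lt_top_of_isCompact hr)
  have hIntν : Integrable ψ (smoothRieszMeasure u Ω) :=
    hψ.integrable fun _ _ _ => measure_lt_top _ _
  have riesz_max := (h.isRieszMeasure_add hr).integral_eq hψ
  rw [integral_add_measure hIntμ hIntν.restrict] at riesz_max
  have riesz_u := h.isRieszMeasure.integral_eq hψ
  rw [h.riesz_eq, ← setIntegral_eq_integral_of_forall_compl_eq_zero (s := Ω)
    fun z hz => hψ.eq_zero hz,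
    ← hu.setIntegral_sublevel_add_superlevel hψ r] at riesz_u
  have int_left : IntegrableOn (fun z => lap u z / 4 * ψ z) {z | z ∈ Ω ∧ u z < r} :=
    (integrable_mul_of_tsupport_subset hu.isOpen
      ((continuousOn_lap hu.isOpen hu.contDiffOn).div_const 4) hψ.contDiff.continuous
      hψ.hasCompactSupport hψ.tsupport_subset).integrableOn
  have int_right : IntegrableOn (fun z => (r - u z) * lap ψ z / 4) {z | z ∈ Ω ∧ u z < r} :=
    ((hψ.integrable_mul_lap hu.isOpen
      (continuousOn_const.sub hu.contDiffOn.continuousOn)).div_const 4).integrableOn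
  unfold lelongJensenDensity
  rw [integral_add int_left int_right, integral_div, ← hu.setIntegral_max_sub_self_mul_lap hψ r]
  linarith

theorem integrable_and_integral_eq (h : IsMAFamily u Ω ν μ) (hr : r < 0)
    (hv : ContDiffOn ℝ 2 v Ω) :
    Integrable v (μ r) ∧
      ∫ z, v z ∂μ r = ∫ z in {z | z ∈ Ω ∧ u z < r}, lelongJensenDensity u r v z := by
  have hu := h.isStrictExhaustion
  obtain ⟨χ, hχ, hone, -⟩ := exists_isTestFun_eq_one hu.isOpen (hu.isCompact_sublevel r hr)
    fun _ hz => hz.1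
  have hχv := hχ.mul_contDiffOn hu.isOpen hv
  have ae_eq : (fun z => χ z * v z) =ᵐ[μ r] v := by
    have ae_mem : ∀ᵐ z ∂μ r, z ∈ {z | z ∈ Ω ∧ u z ≤ r} := h.measure_compl_sublevel hr
    filter_upwards [ae_mem] with z hz
    rw [hone.self_of_nhdsSet z hz, one_mul]
  refine ⟨(hχv.integrable (h.lt_top_of_isCompact hr)).congr ae_eq, ?_⟩
  rw [← integral_congr_ae ae_eq, h.integral_testFun hr hχv]
  refine setIntegral_congr_fun (hu.isOpen_sublevel r).measurableSet fun z hz => ?_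
  have hzK : z ∈ {z | z ∈ Ω ∧ u z ≤ r} := ⟨hz.1, hz.2.le⟩
  have near : (fun z => χ z * v z) =ᶠ[𝓝 z] v := by
    filter_upwards [eventually_nhdsSet_iff_forall.1 hone z hzK] with y hy
    rw [hy, one_mul]
  simp only [lelongJensenDensity, lap_congr near, near.eq_of_nhds]

theorem lintegral_eq (h : IsMAFamily u Ω ν μ) (hr : r < 0) (hv : ContDiffOn ℝ 2 v Ω)
    (hv0 : ∀ z ∈ Ω, 0 ≤ v z) (hlap : ∀ z ∈ Ω, 0 ≤ lap v z) :
    ∫⁻ z, ENNReal.ofReal (v z) ∂μ r =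
      ∫⁻ z in {z | z ∈ Ω ∧ u z < r}, ENNReal.ofReal (lelongJensenDensity u r v z) := by
  have hu := h.isStrictExhaustion
  obtain ⟨hInt, heq⟩ := h.integrable_and_integral_eq hr hv
  have ae_mem : ∀ᵐ z ∂μ r, z ∈ Ω := h.measure_compl hr
  rw [← ofReal_integral_eq_lintegral_ofReal hInt (ae_mem.mono hv0), heq,
    ← ofReal_integral_eq_lintegral_ofReal (hu.integrableOn_lelongJensenDensity hr hv)]
  filter_upwards [ae_restrict_mem (hu.isOpen_sublevel r).measurableSet] with z hz
  have hlapu := (hu.lap_pos z hz.1).le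
  have hvz := hv0 z hz.1
  have hlapv := hlap z hz.1
  have hru := sub_nonneg.2 hz.2.le
  simp only [lelongJensenDensity, Pi.zero_apply]
  positivity

end IsMAFamily

end LelongJensen

section PeakExhaustion

/-- The barrier `(1 - |z|²) (1 - Re z)^(-1 / 4)`, which is comparable to `-u₀` on the disc. -/
def barrier (z : ℂ) : ℝ := (1 - normSq z) * (1 - z.re) ^ (-(1 / 4) : ℝ)

/-- The exhaustion `u₀` of the unit disc, characterised as the solution of
`Δu = (3 / 16) (1 - Re z)^(-5 / 4)` which vanishes on the unit circle. -/
structure IsPeakExhaustion (u : ℂ → ℝ) : Prop where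
  continuousOn : ContinuousOn u (closedBall 0 1)
  contDiffOn : ContDiffOn ℝ 2 u (ball 0 1)
  lap_eq : ∀ z ∈ ball (0 : ℂ) 1, lap u z = 3 / 16 * (1 - z.re) ^ (-(5 / 4) : ℝ)
  eq_zero : ∀ z ∈ sphere (0 : ℂ) 1, u z = 0

variable {z : ℂ} {u ρ : ℂ → ℝ} {q : ℝ}

lemma re_lt_one (hz : z ∈ ball (0 : ℂ) 1) : z.re < 1 :=
  (re_le_norm z).trans_lt (mem_ball_zero_iff.1 hz)

lemma re_le_one (hz : z ∈ closedBall (0 : ℂ) 1) : z.re ≤ 1 :=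
  (re_le_norm z).trans (mem_closedBall_zero_iff.1 hz)

lemma normSq_lt_one (hz : z ∈ ball (0 : ℂ) 1) : normSq z < 1 := by
  rw [normSq_eq_norm_sq, sq_lt_one_iff₀ (norm_nonneg z)]
  exact mem_ball_zero_iff.1 hz

lemma normSq_le_one (hz : z ∈ closedBall (0 : ℂ) 1) : normSq z ≤ 1 := by
  rw [normSq_eq_norm_sq, sq_le_one_iff₀ (norm_nonneg z)]
  exact mem_closedBall_zero_iff.1 hz

lemma normSq_one_sub (z : ℂ) : normSq (1 - z) = 2 * (1 - z.re) - (1 - normSq z) := by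
  simp only [normSq_apply, sub_re, sub_im, one_re, one_im]
  ring

lemma one_sub_normSq_le (z : ℂ) : 1 - normSq z ≤ 2 * (1 - z.re) := by
  linarith [normSq_one_sub z, normSq_nonneg (1 - z)]

lemma contDiffAt_one_sub_re_rpow (hz : z.re < 1) (q : ℝ) :
    ContDiffAt ℝ 2 (fun y : ℂ => (1 - y.re) ^ q) z :=
  (contDiffAt_const.sub contDiff_re.contDiffAt).rpow_const_of_ne (sub_pos.2 hz).ne'

lemma fderiv_one_sub_re_apply (z e : ℂ) : fderiv ℝ (fun y : ℂ => 1 - y.re) z e = -e.re := by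
  rw [fderiv_const_sub, _root_.neg_apply, fderiv_re_apply]

lemma fderiv_one_sub_re_rpow_apply (hz : z.re < 1) (q : ℝ) (e : ℂ) :
    fderiv ℝ (fun y : ℂ => (1 - y.re) ^ q) z e = -(q * (1 - z.re) ^ (q - 1) * e.re) := by
  have hT : DifferentiableAt ℝ (fun y : ℂ => 1 - y.re) z :=
    (contDiff_const.sub (contDiff_re (n := 1))).contDiffAt.differentiableAt one_ne_zero
  have h := (Real.hasDerivAt_rpow_const (p := q) (Or.inl (sub_pos.2 hz).ne')).comp_hasFDerivAt z
    hT.hasFDerivAt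
  rw [show fderiv ℝ (fun y : ℂ => (1 - y.re) ^ q) z = _ from h.fderiv]
  simp [fderiv_one_sub_re_apply]

lemma lap_one_sub_re_rpow (hz : z.re < 1) (q : ℝ) :
    lap (fun y : ℂ => (1 - y.re) ^ q) z = q * (q - 1) * (1 - z.re) ^ (q - 2) := by
  have hpos : 0 < 1 - z.re := sub_pos.2 hz
  have hT : ContDiffAt ℝ 2 (fun y : ℂ => 1 - y.re) z :=
    contDiffAt_const.sub contDiff_re.contDiffAt
  have lap_T : lap (fun y : ℂ => 1 - y.re) z = 0 := by
    rw [lap_sub contDiffAt_const contDiff_re.contDiffAt, lap_re]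
    simp [lap]
  have hM : ∀ᶠ t in 𝓝 (1 - z.re), HasDerivAt (fun s : ℝ => s ^ q) (q * t ^ (q - 1)) t := by
    filter_upwards [lt_mem_nhds hpos] with t ht
    exact Real.hasDerivAt_rpow_const (Or.inl ht.ne')
  rw [lap_comp (v := fun y : ℂ => 1 - y.re) hT hM
    ((Real.hasDerivAt_rpow_const (Or.inl hpos.ne')).const_mul q), lap_T,
    fderiv_one_sub_re_apply, fderiv_one_sub_re_apply, show q - 1 - 1 = q - 2 by ring]
  simp only [one_re, I_re]
  ring

lemma contDiffAt_barrier (hz : z.re < 1) : ContDiffAt ℝ 2 barrier z :=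
  (contDiffAt_const.sub contDiff_normSq.contDiffAt).mul (contDiffAt_one_sub_re_rpow hz _)

lemma lap_barrier (hz : z.re < 1) :
    lap barrier z = (1 - normSq z) * (5 / 16) * (1 - z.re) ^ (-(9 / 4) : ℝ)
      - 4 * (1 - z.re) ^ (-(1 / 4) : ℝ) - z.re * (1 - z.re) ^ (-(5 / 4) : ℝ) := by
  have hA : ContDiffAt ℝ 2 (fun y : ℂ => 1 - normSq y) z :=
    contDiffAt_const.sub contDiff_normSq.contDiffAt
  have lap_A : lap (fun y : ℂ => 1 - normSq y) z = -4 := by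
    rw [lap_sub contDiffAt_const contDiff_normSq.contDiffAt, lap_normSq]
    simp [lap]
  have fderiv_A (e : ℂ) :
      fderiv ℝ (fun y : ℂ => 1 - normSq y) z e = -(2 * (z.re * e.re + z.im * e.im)) := by
    rw [fderiv_const_sub, _root_.neg_apply, fderiv_normSq_apply]
  rw [show barrier = fun y => (1 - normSq y) * (1 - y.re) ^ (-(1 / 4) : ℝ) from rfl,
    lap_mul hA (contDiffAt_one_sub_re_rpow hz _), lap_A, lap_one_sub_re_rpow hz,
    fderiv_one_sub_re_rpow_apply hz, fderiv_one_sub_re_rpow_apply hz, fderiv_A, fderiv_A]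
  norm_num
  ring

lemma rpow_neg_five_quarters_mul_self {t : ℝ} (ht : 0 < t) :
    t ^ (-(5 / 4) : ℝ) * t = t ^ (-(1 / 4) : ℝ) := by
  rw [← Real.rpow_add_one ht.ne']
  norm_num

lemma lap_barrier_le (hz : z ∈ ball (0 : ℂ) 1) :
    lap barrier z ≤ -(3 / 8) * (1 - z.re) ^ (-(5 / 4) : ℝ) := by
  have ht : 0 < 1 - z.re := sub_pos.2 (re_lt_one hz)
  have h9 : (1 - z.re) ^ (-(9 / 4) : ℝ) * (1 - z.re) = (1 - z.re) ^ (-(5 / 4) : ℝ) := by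
    rw [← Real.rpow_add_one ht.ne']
    norm_num
  have hmul := mul_le_mul_of_nonneg_right (one_sub_normSq_le z)
    (Real.rpow_nonneg ht.le (-(9 / 4) : ℝ))
  have hpos := mul_pos (Real.rpow_pos_of_pos ht (-(5 / 4) : ℝ)) ht
  rw [lap_barrier (re_lt_one hz), ← rpow_neg_five_quarters_mul_self ht]
  linarith

lemma neg_le_lap_barrier (hz : z ∈ ball (0 : ℂ) 1) :
    -7 * (1 - z.re) ^ (-(5 / 4) : ℝ) ≤ lap barrier z := by
  have ht : 0 < 1 - z.re := sub_pos.2 (re_lt_one hz)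
  have ht2 : 1 - z.re ≤ 2 := by
    linarith [neg_le_of_abs_le ((abs_re_le_norm z).trans (mem_ball_zero_iff.1 hz).le)]
  have h9 := mul_nonneg (sub_pos.2 (normSq_lt_one hz)).le (Real.rpow_nonneg ht.le (-(9 / 4) : ℝ))
  have hmul := mul_le_mul_of_nonneg_left ht2 (Real.rpow_nonneg ht.le (-(5 / 4) : ℝ))
  rw [lap_barrier (re_lt_one hz), ← rpow_neg_five_quarters_mul_self ht]
  linarith

lemma barrier_pos (hz : z ∈ ball (0 : ℂ) 1) : 0 < barrier z :=
  mul_pos (sub_pos.2 (normSq_lt_one hz)) (Real.rpow_pos_of_pos (sub_pos.2 (re_lt_one hz)) _)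

lemma barrier_nonneg (hz : z ∈ closedBall (0 : ℂ) 1) : 0 ≤ barrier z :=
  mul_nonneg (sub_nonneg.2 (normSq_le_one hz)) (Real.rpow_nonneg (sub_nonneg.2 (re_le_one hz)) _)

lemma barrier_le (hz : z ∈ closedBall (0 : ℂ) 1) : barrier z ≤ 2 * (1 - z.re) ^ (3 / 4 : ℝ) := by
  rcases (re_le_one hz).lt_or_eq with hlt | heq
  · have ht : 0 < 1 - z.re := sub_pos.2 hlt
    rw [show (3 / 4 : ℝ) = -(1 / 4) + 1 by norm_num, Real.rpow_add_one ht.ne']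
    calc barrier z ≤ 2 * (1 - z.re) * (1 - z.re) ^ (-(1 / 4) : ℝ) :=
          mul_le_mul_of_nonneg_right (one_sub_normSq_le z) (Real.rpow_nonneg ht.le _)
      _ = _ := by ring
  · simp [barrier, heq, Real.zero_rpow]

lemma continuous_one_sub_re_rpow (hq : 0 ≤ q) : Continuous fun y : ℂ => (1 - y.re) ^ q :=
  (continuous_const.sub continuous_re).rpow_const fun _ => Or.inr hq

lemma continuousOn_barrier : ContinuousOn barrier (closedBall 0 1) := by
  intro z hz
  rcases (re_le_one hz).lt_or_eq with hlt | heq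
  · exact (contDiffAt_barrier hlt).continuousAt.continuousWithinAt
  have hc : Continuous fun y : ℂ => 2 * (1 - y.re) ^ (3 / 4 : ℝ) :=
    continuous_const.mul (continuous_one_sub_re_rpow (by norm_num))
  have hlim : Tendsto (fun y : ℂ => 2 * (1 - y.re) ^ (3 / 4 : ℝ)) (𝓝[closedBall 0 1] z) (𝓝 0) := by
    simpa [heq, Real.zero_rpow] using (hc.tendsto z).mono_left
      (nhdsWithin_le_nhds (s := closedBall (0 : ℂ) 1))
  rw [ContinuousWithinAt, show barrier z = 0 by simp [barrier, heq, Real.zero_rpow]]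
  refine tendsto_of_tendsto_of_tendsto_of_le_of_le' tendsto_const_nhds hlim ?_ ?_
  · filter_upwards [self_mem_nhdsWithin] with y hy using barrier_nonneg hy
  · filter_upwards [self_mem_nhdsWithin] with y hy using barrier_le hy

lemma barrier_eq_zero (hz : z ∈ sphere (0 : ℂ) 1) : barrier z = 0 := by
  simp [barrier, normSq_eq_norm_sq, mem_sphere_zero_iff_norm.1 hz]

lemma isPeakExhaustion_of_harmonicOn (hcont : ContinuousOn ρ (closedBall 0 1))
    (hharm : HarmonicOn ρ (ball 0 1))
    (hbd : ∀ z ∈ sphere (0 : ℂ) 1, ρ z = -(1 - z.re) ^ (3 / 4 : ℝ)) :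
    IsPeakExhaustion fun z => -(1 - z.re) ^ (3 / 4 : ℝ) - ρ z where
  continuousOn := (continuous_one_sub_re_rpow (by norm_num)).neg.continuousOn.sub hcont
  contDiffOn := ContDiffOn.sub (fun z hz =>
    (contDiffAt_one_sub_re_rpow (re_lt_one hz) _).neg.contDiffWithinAt) hharm.1
  lap_eq z hz := by
    have hρ := hharm.1.contDiffAt (isOpen_ball.mem_nhds hz)
    have hT := contDiffAt_one_sub_re_rpow (re_lt_one hz) (3 / 4)
    simp only [neg_eq_neg_one_mul ((1 - _ : ℝ) ^ (3 / 4 : ℝ))]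
    rw [lap_sub (contDiffAt_const.mul hT) hρ, lap_const_mul hT, hharm.2 z hz,
      lap_one_sub_re_rpow (re_lt_one hz)]
    norm_num
  eq_zero z hz := by rw [hbd z hz, sub_self]

namespace IsPeakExhaustion

lemma contDiffAt (hu : IsPeakExhaustion u) (hz : z ∈ ball (0 : ℂ) 1) : ContDiffAt ℝ 2 u z :=
  hu.contDiffOn.contDiffAt (isOpen_ball.mem_nhds hz)

lemma lap_pos (hu : IsPeakExhaustion u) (hz : z ∈ ball (0 : ℂ) 1) : 0 < lap u z := by
  rw [hu.lap_eq z hz]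
  exact mul_pos (by norm_num) (Real.rpow_pos_of_pos (sub_pos.2 (re_lt_one hz)) _)

lemma neg_barrier_le (hu : IsPeakExhaustion u) (hz : z ∈ ball (0 : ℂ) 1) :
    -(1 / 2) * barrier z ≤ u z := by
  refine sub_nonpos.1 <| nonpos_of_lap_nonneg_of_frontier (v := fun y => -(1 / 2) * barrier y - u y)
    isOpen_ball isBounded_ball ?_ (fun y hy => (ContDiffAt.sub (contDiffAt_const.mul
      (contDiffAt_barrier (re_lt_one hy))) (hu.contDiffAt hy)).contDiffWithinAt) ?_ ?_ hz
  · rw [closure_ball _ one_ne_zero]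
    exact (continuousOn_const.mul continuousOn_barrier).sub hu.continuousOn
  · intro y hy
    have hb := contDiffAt_barrier (re_lt_one hy)
    rw [lap_sub (contDiffAt_const.mul hb) (hu.contDiffAt hy), lap_const_mul hb, hu.lap_eq y hy]
    linarith [lap_barrier_le hy]
  · rw [frontier_ball _ one_ne_zero]
    intro y hy
    simp [barrier_eq_zero hy, hu.eq_zero y hy]

lemma le_neg_barrier (hu : IsPeakExhaustion u) (hz : z ∈ ball (0 : ℂ) 1) :
    u z ≤ -(3 / 112) * barrier z := by
  refine sub_nonpos.1 <| nonpos_of_lap_nonneg_of_frontier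
    (v := fun y => u y - -(3 / 112) * barrier y)
    isOpen_ball isBounded_ball ?_ (fun y hy => (ContDiffAt.sub (hu.contDiffAt hy)
      (contDiffAt_const.mul (contDiffAt_barrier (re_lt_one hy)))).contDiffWithinAt) ?_ ?_ hz
  · rw [closure_ball _ one_ne_zero]
    exact hu.continuousOn.sub (continuousOn_const.mul continuousOn_barrier)
  · intro y hy
    have hb := contDiffAt_barrier (re_lt_one hy)
    rw [lap_sub (hu.contDiffAt hy) (contDiffAt_const.mul hb), lap_const_mul hb, hu.lap_eq y hy]
    linarith [neg_le_lap_barrier hy]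
  · rw [frontier_ball _ one_ne_zero]
    intro y hy
    simp [barrier_eq_zero hy, hu.eq_zero y hy]

lemma neg (hu : IsPeakExhaustion u) (hz : z ∈ ball (0 : ℂ) 1) : u z < 0 := by
  linarith [hu.le_neg_barrier hz, barrier_pos hz]

end IsPeakExhaustion

section Integrability

lemma integrableOn_norm_sub_rpow_neg {E : Type*} [NormedAddCommGroup E] [NormedSpace ℝ E]
    [FiniteDimensional ℝ E] [MeasureSpace E] [BorelSpace E]
    [(volume : Measure E).IsAddHaarMeasure] (hE : 1 ≤ Module.finrank ℝ E) {s : ℝ}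
    (hs : s < Module.finrank ℝ E) (b : E) {K : Set E} (hK : Bornology.IsBounded K) :
    IntegrableOn (fun x => ‖x - b‖ ^ (-s)) K := by
  obtain ⟨R, hKR⟩ := hK.subset_closedBall b
  have : ProperSpace E := FiniteDimensional.proper ℝ E
  have hloc : LocallyIntegrable (fun x : E => ‖x‖ ^ (-s)) :=
    locallyIntegrable_of_norm_le_rpow (C := 1) hE hs
      (Eventually.of_forall fun x => by rw [one_mul, Real.norm_of_nonneg (by positivity)])
      (Measurable.aestronglyMeasurable (by fun_prop))
  have hball := hloc.integrableOn_isCompact (isCompact_closedBall 0 R)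
  have := (measurePreserving_sub_right volume b).integrableOn_comp_preimage
    (MeasurableEquiv.subRight b).measurableEmbedding |>.2 hball
  exact this.mono_set fun x hx => by simpa [dist_eq_norm] using hKR hx

lemma integrableOn_re_mul_im {f g : ℝ → ℝ} {s t : Set ℝ} (hf : IntegrableOn f s)
    (hg : IntegrableOn g t) : IntegrableOn (fun z : ℂ => f z.re * g z.im) (s ×ℂ t) := by
  have hprod : IntegrableOn (fun p : ℝ × ℝ => f p.1 * g p.2) (s ×ˢ t) := by
    rw [IntegrableOn, Measure.volume_eq_prod, ← Measure.prod_restrict]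
    exact hf.mul_prod hg
  exact volume_preserving_equiv_real_prod.integrableOn_comp_preimage
    measurableEquivRealProd.measurableEmbedding |>.2 hprod

lemma ae_im_ne_zero : ∀ᵐ z : ℂ, z.im ≠ 0 := by
  have hprod : ∀ᵐ p : ℝ × ℝ, p.2 ≠ 0 :=
    (Measure.quasiMeasurePreserving_snd (μ := (volume : Measure ℝ)) (ν := (volume : Measure ℝ))).ae
      (p := fun x : ℝ => x ≠ 0) (by simp [ae_iff])
  exact volume_preserving_equiv_real_prod.quasiMeasurePreserving.ae hprod

/- Since `|Im z|² ≤ 2 (1 - Re z)`, part of the singularity can be traded for one in `Im z`. -/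
lemma one_sub_re_rpow_le (hz : z ∈ ball (0 : ℂ) 1) (him : z.im ≠ 0) :
    (1 - z.re) ^ (-(5 / 4) : ℝ) ≤ 2 * (|z.re - 1| ^ (-(7 / 8) : ℝ) * |z.im| ^ (-(3 / 4) : ℝ)) := by
  have ht : 0 < 1 - z.re := sub_pos.2 (re_lt_one hz)
  have hle : |z.im| ^ 2 / 2 ≤ 1 - z.re := by
    have hn := normSq_lt_one hz
    rw [normSq_apply] at hn
    rw [sq_abs]
    nlinarith [mul_self_nonneg (z.re - 1)]
  have him_rpow : (1 - z.re) ^ (-(3 / 8) : ℝ) ≤ 2 * |z.im| ^ (-(3 / 4) : ℝ) := by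
    calc (1 - z.re) ^ (-(3 / 8) : ℝ) ≤ (|z.im| ^ 2 / 2) ^ (-(3 / 8) : ℝ) :=
          Real.rpow_le_rpow_of_nonpos (by positivity) hle (by norm_num)
      _ = 2 ^ (3 / 8 : ℝ) * |z.im| ^ (-(3 / 4) : ℝ) := by
          rw [Real.div_rpow (by positivity) zero_le_two, ← Real.rpow_natCast,
            ← Real.rpow_mul (abs_nonneg _), Real.rpow_neg zero_le_two, div_inv_eq_mul, mul_comm]
          norm_num
      _ ≤ 2 * |z.im| ^ (-(3 / 4) : ℝ) := by
          gcongr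
          exact Real.rpow_le_self_of_one_le one_le_two (by norm_num)
  calc (1 - z.re) ^ (-(5 / 4) : ℝ) = (1 - z.re) ^ (-(7 / 8) : ℝ) * (1 - z.re) ^ (-(3 / 8) : ℝ) := by
        rw [← Real.rpow_add ht]
        norm_num
    _ ≤ (1 - z.re) ^ (-(7 / 8) : ℝ) * (2 * |z.im| ^ (-(3 / 4) : ℝ)) :=
        mul_le_mul_of_nonneg_left him_rpow (Real.rpow_nonneg ht.le _)
    _ = _ := by
        rw [abs_sub_comm, abs_of_pos ht]
        ring

lemma integrableOn_one_sub_re_rpow :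
    IntegrableOn (fun z : ℂ => (1 - z.re) ^ (-(5 / 4) : ℝ)) (ball 0 1) := by
  have hI : Bornology.IsBounded (Icc (-1 : ℝ) 1) := isBounded_Icc _ _
  have hre := integrableOn_norm_sub_rpow_neg (s := 7 / 8) (by simp) (by norm_num) (1 : ℝ) hI
  have him := integrableOn_norm_sub_rpow_neg (s := 3 / 4) (by simp) (by norm_num) (0 : ℝ) hI
  have hsub : ball (0 : ℂ) 1 ⊆ Icc (-1) 1 ×ℂ Icc (-1) 1 := fun z hz => by
    have hz1 := (mem_ball_zero_iff.1 hz).le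
    exact ⟨abs_le.1 ((abs_re_le_norm z).trans hz1), abs_le.1 ((abs_im_le_norm z).trans hz1)⟩
  refine Integrable.mono' (((integrableOn_re_mul_im hre him).mono_set hsub).const_mul 2)
    (Measurable.aestronglyMeasurable (by fun_prop)) ?_
  rw [ae_restrict_iff' measurableSet_ball]
  filter_upwards [ae_im_ne_zero] with z him hz
  rw [Real.norm_of_nonneg (Real.rpow_nonneg (sub_pos.2 (re_lt_one hz)).le _)]
  simpa using one_sub_re_rpow_le hz him

end Integrability

lemma IsPeakExhaustion.isStrictExhaustion (hu : IsPeakExhaustion u) :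
    IsStrictExhaustion u (ball 0 1) where
  isOpen := isOpen_ball
  nonempty := nonempty_ball.2 one_pos
  contDiffOn := hu.contDiffOn
  lap_pos _ hz := hu.lap_pos hz
  integrableOn_lap := IntegrableOn.congr_fun
    (integrableOn_one_sub_re_rpow.const_mul (3 / 16))
    (fun z hz => (hu.lap_eq z hz).symm) measurableSet_ball
  isCompact_sublevel r hr := by
    have hcpt := (isCompact_closedBall (0 : ℂ) 1).of_isClosed_subset
      (hu.continuousOn.preimage_isClosed_of_isClosed isClosed_closedBall (isClosed_Iic (a := r)))
      inter_subset_left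
    convert hcpt using 1
    ext z
    refine ⟨fun hz => ⟨ball_subset_closedBall hz.1, hz.2⟩, fun hz => ⟨?_, hz.2⟩⟩
    by_contra hball
    have hsphere : z ∈ sphere (0 : ℂ) 1 := by
      rw [← closedBall_sdiff_ball]
      exact ⟨hz.1, hball⟩
    exact (hu.eq_zero z hsphere ▸ hz.2 : (0 : ℝ) ≤ r).not_gt hr

end PeakExhaustion

section Mobius

/-- The Möbius map `z ↦ c (z - a) / (1 - ā z)`, an automorphism of the unit disc when `‖c‖ = 1`
and `‖a‖ < 1`. -/
def mobius (c a z : ℂ) : ℂ := c * ((z - a) / (1 - (starRingEnd ℂ) a * z))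

variable {c a z w : ℂ}

lemma norm_conj_mul_le (hz : ‖z‖ ≤ 1) : ‖(starRingEnd ℂ) a * z‖ ≤ ‖a‖ := by
  rw [norm_mul, RCLike.norm_conj]
  exact mul_le_of_le_one_right (norm_nonneg a) hz

lemma one_sub_norm_le_norm_one_sub_conj_mul (hz : ‖z‖ ≤ 1) :
    1 - ‖a‖ ≤ ‖1 - (starRingEnd ℂ) a * z‖ := by
  have htri := norm_sub_norm_le 1 ((starRingEnd ℂ) a * z)
  rw [norm_one] at htri
  linarith [norm_conj_mul_le (a := a) hz]

lemma norm_one_sub_conj_mul_le_two (ha : ‖a‖ < 1) (hz : ‖z‖ ≤ 1) :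
    ‖1 - (starRingEnd ℂ) a * z‖ ≤ 2 := by
  have htri := norm_sub_le 1 ((starRingEnd ℂ) a * z)
  rw [norm_one] at htri
  linarith [norm_conj_mul_le (a := a) hz]

lemma one_sub_conj_mul_ne_zero (ha : ‖a‖ < 1) (hz : ‖z‖ ≤ 1) : 1 - (starRingEnd ℂ) a * z ≠ 0 :=
  norm_pos_iff.1 ((sub_pos.2 ha).trans_le (one_sub_norm_le_norm_one_sub_conj_mul hz))

lemma conj_mul_self_of_norm_eq_one (hc : ‖c‖ = 1) : (starRingEnd ℂ) c * c = 1 := by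
  rw [conj_mul', hc, ofReal_one, one_pow]

lemma norm_one_sub_conj_mul_self (ha : ‖a‖ ≤ 1) : ‖1 - (starRingEnd ℂ) a * a‖ = 1 - ‖a‖ ^ 2 := by
  rw [conj_mul', ← ofReal_pow, ← ofReal_one, ← ofReal_sub, norm_real, Real.norm_of_nonneg]
  nlinarith [norm_nonneg a]

lemma one_sub_norm_le_one_sub_norm_sq (ha : ‖a‖ < 1) : 1 - ‖a‖ ≤ 1 - ‖a‖ ^ 2 := by
  nlinarith [norm_nonneg a]

lemma mobius_sub_mobius (c : ℂ) (ha : ‖a‖ < 1) (hz : ‖z‖ ≤ 1) (hw : ‖w‖ ≤ 1) :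
    mobius c a z - mobius c a w = c * (1 - (starRingEnd ℂ) a * a) * (z - w) /
      ((1 - (starRingEnd ℂ) a * z) * (1 - (starRingEnd ℂ) a * w)) := by
  have hz0 := one_sub_conj_mul_ne_zero ha hz
  have hw0 := one_sub_conj_mul_ne_zero ha hw
  rw [mobius, mobius, ← mul_sub, div_sub_div _ _ hz0 hw0, mul_div_assoc']
  ring

lemma one_sub_normSq_mobius (hc : ‖c‖ = 1) (ha : ‖a‖ < 1) (hz : ‖z‖ ≤ 1) :
    1 - normSq (mobius c a z) =
      (1 - ‖a‖ ^ 2) * (1 - normSq z) / normSq (1 - (starRingEnd ℂ) a * z) := by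
  have hN : normSq (1 - (starRingEnd ℂ) a * z) ≠ 0 :=
    (normSq_pos.2 (one_sub_conj_mul_ne_zero ha hz)).ne'
  rw [mobius, normSq_mul, normSq_div, normSq_eq_norm_sq c, hc, one_pow, one_mul, eq_div_iff hN,
    sub_mul, div_mul_cancel₀ _ hN, one_mul, ← normSq_eq_norm_sq]
  simp only [normSq_apply, sub_re, sub_im, mul_re, mul_im, conj_re, conj_im, one_re, one_im]
  ring

lemma hasDerivAt_mobius (c : ℂ) (ha : ‖a‖ < 1) (hz : ‖z‖ ≤ 1) :
    HasDerivAt (mobius c a)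
      (c * (1 - (starRingEnd ℂ) a * a) / (1 - (starRingEnd ℂ) a * z) ^ 2) z := by
  have hden : HasDerivAt (fun y => 1 - (starRingEnd ℂ) a * y) (-(starRingEnd ℂ) a) z := by
    simpa using ((hasDerivAt_id z).const_mul ((starRingEnd ℂ) a)).const_sub 1
  refine ((((hasDerivAt_id z).sub_const a).div hden
    (one_sub_conj_mul_ne_zero ha hz)).const_mul c).congr_deriv ?_
  rw [mul_div_assoc, id]
  ring

lemma differentiableOn_mobius (c : ℂ) (ha : ‖a‖ < 1) :
    DifferentiableOn ℂ (mobius c a) (ball 0 1) := fun _ hz =>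
  (hasDerivAt_mobius c ha (mem_ball_zero_iff.1 hz).le).differentiableAt.differentiableWithinAt

lemma continuousOn_mobius (c : ℂ) (ha : ‖a‖ < 1) : ContinuousOn (mobius c a) (closedBall 0 1) :=
  fun _ hz => (hasDerivAt_mobius c ha
    (mem_closedBall_zero_iff.1 hz)).continuousAt.continuousWithinAt

lemma measurable_mobius (c a : ℂ) : Measurable (mobius c a) := by
  unfold mobius
  fun_prop

lemma mapsTo_mobius_ball (hc : ‖c‖ = 1) (ha : ‖a‖ < 1) :
    MapsTo (mobius c a) (ball 0 1) (ball 0 1) := by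
  intro z hz
  have hz1 := (mem_ball_zero_iff.1 hz).le
  have hpos : 0 < 1 - normSq (mobius c a z) := by
    rw [one_sub_normSq_mobius hc ha hz1]
    exact div_pos (mul_pos ((sub_pos.2 ha).trans_le (one_sub_norm_le_one_sub_norm_sq ha))
      (sub_pos.2 (normSq_lt_one hz))) (normSq_pos.2 (one_sub_conj_mul_ne_zero ha hz1))
  rwa [sub_pos, normSq_eq_norm_sq, sq_lt_one_iff₀ (norm_nonneg _), ← mem_ball_zero_iff] at hpos

lemma mapsTo_mobius_sphere (hc : ‖c‖ = 1) (ha : ‖a‖ < 1) :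
    MapsTo (mobius c a) (sphere 0 1) (sphere 0 1) := by
  intro z hz
  have hz1 := mem_sphere_zero_iff_norm.1 hz
  have heq := one_sub_normSq_mobius hc ha hz1.le
  rw [normSq_eq_norm_sq z, hz1, one_pow, sub_self, mul_zero, zero_div, sub_eq_zero,
    normSq_eq_norm_sq] at heq
  exact mem_sphere_zero_iff_norm.2
    ((pow_eq_one_iff_of_nonneg (norm_nonneg _) two_ne_zero).1 heq.symm)

lemma mapsTo_mobius_closedBall (hc : ‖c‖ = 1) (ha : ‖a‖ < 1) :
    MapsTo (mobius c a) (closedBall 0 1) (closedBall 0 1) := by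
  rw [← ball_union_sphere]
  exact (mapsTo_mobius_ball hc ha).union_union (mapsTo_mobius_sphere hc ha)

lemma mobius_conj_neg_mul_mobius (hc : ‖c‖ = 1) (ha : ‖a‖ < 1) (hz : ‖z‖ ≤ 1) :
    mobius ((starRingEnd ℂ) c) (-(c * a)) (mobius c a z) = z := by
  have hz0 := one_sub_conj_mul_ne_zero ha hz
  have ha0 := one_sub_conj_mul_ne_zero ha ha.le
  have hcc := conj_mul_self_of_norm_eq_one hc
  have hnum : mobius c a z - -(c * a) =
      c * (z * (1 - (starRingEnd ℂ) a * a) / (1 - (starRingEnd ℂ) a * z)) := by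
    rw [mobius, sub_neg_eq_add, ← mul_add, div_add' _ _ _ hz0]
    ring
  have hden : 1 - (starRingEnd ℂ) (-(c * a)) * mobius c a z =
      (1 - (starRingEnd ℂ) a * a) / (1 - (starRingEnd ℂ) a * z) := by
    calc 1 - (starRingEnd ℂ) (-(c * a)) * mobius c a z
        = 1 + ((starRingEnd ℂ) c * c) *
            ((starRingEnd ℂ) a * ((z - a) / (1 - (starRingEnd ℂ) a * z))) := by
          rw [mobius, map_neg, map_mul]
          ring
      _ = _ := by
          rw [hcc, one_mul, mul_div_assoc', one_add_div hz0]
          ring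
  rw [mobius, hnum, hden, mul_div_assoc, ← mul_assoc, hcc, one_mul,
    div_div_div_cancel_right₀ hz0, mul_div_cancel_right₀ _ ha0]

lemma mobius_mobius_conj_neg_mul (hc : ‖c‖ = 1) (ha : ‖a‖ < 1) (hz : ‖z‖ ≤ 1) :
    mobius c a (mobius ((starRingEnd ℂ) c) (-(c * a)) z) = z := by
  have hinv := mobius_conj_neg_mul_mobius (c := (starRingEnd ℂ) c) (a := -(c * a))
    (by rwa [RCLike.norm_conj]) (by rwa [norm_neg, norm_mul, hc, one_mul]) hz
  rwa [mul_neg, neg_neg, ← mul_assoc, conj_mul_self_of_norm_eq_one hc, one_mul, conj_conj] at hinv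

lemma injOn_mobius (hc : ‖c‖ = 1) (ha : ‖a‖ < 1) : InjOn (mobius c a) (closedBall 0 1) :=
  LeftInvOn.injOn (f₁' := mobius ((starRingEnd ℂ) c) (-(c * a))) fun _ hz =>
    mobius_conj_neg_mul_mobius hc ha (mem_closedBall_zero_iff.1 hz)

lemma norm_mobius_sub_mobius_le (hc : ‖c‖ = 1) (ha : ‖a‖ < 1) (hz : ‖z‖ ≤ 1) (hw : ‖w‖ ≤ 1) :
    ‖mobius c a z - mobius c a w‖ ≤ ‖z - w‖ / (1 - ‖a‖) ^ 2 := by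
  have : 0 < 1 - ‖a‖ := sub_pos.2 ha
  rw [mobius_sub_mobius c ha hz hw, norm_div, norm_mul, norm_mul, norm_mul, hc, one_mul,
    norm_one_sub_conj_mul_self ha.le, sq (1 - ‖a‖)]
  gcongr ?_ / (?_ * ?_)
  · exact mul_le_of_le_one_left (norm_nonneg _) (sub_le_self _ (sq_nonneg _))
  · exact one_sub_norm_le_norm_one_sub_conj_mul hz
  · exact one_sub_norm_le_norm_one_sub_conj_mul hw

lemma lipschitzOnWith_mobius (hc : ‖c‖ = 1) (ha : ‖a‖ < 1) :
    LipschitzOnWith (Real.toNNReal (1 / (1 - ‖a‖) ^ 2)) (mobius c a) (closedBall 0 1) :=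
  LipschitzOnWith.of_dist_le_mul fun z hz w hw => by
    rw [dist_eq_norm, dist_eq_norm, Real.coe_toNNReal _ (by positivity), one_div_mul_eq_div]
    exact norm_mobius_sub_mobius_le hc ha (mem_closedBall_zero_iff.1 hz)
      (mem_closedBall_zero_iff.1 hw)

lemma le_normSq_deriv_mobius (hc : ‖c‖ = 1) (ha : ‖a‖ < 1) (hz : ‖z‖ ≤ 1) :
    (1 - ‖a‖) ^ 2 / 16 ≤ normSq (deriv (mobius c a) z) := by
  have hd : 0 < 1 - ‖a‖ := sub_pos.2 ha
  have hN := hd.trans_le (one_sub_norm_le_norm_one_sub_conj_mul hz)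
  have hle : (1 - ‖a‖) / 2 ^ 2 ≤ ‖deriv (mobius c a) z‖ := by
    rw [(hasDerivAt_mobius c ha hz).deriv, norm_div, norm_mul, hc, one_mul, norm_pow,
      norm_one_sub_conj_mul_self ha.le]
    gcongr ?_ / ?_ ^ 2
    · exact hd.le.trans (one_sub_norm_le_one_sub_norm_sq ha)
    · exact one_sub_norm_le_one_sub_norm_sq ha
    · exact norm_one_sub_conj_mul_le_two ha hz
  calc (1 - ‖a‖) ^ 2 / 16 = ((1 - ‖a‖) / 2 ^ 2) ^ 2 := by ring
    _ ≤ ‖deriv (mobius c a) z‖ ^ 2 := by gcongr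
    _ = _ := (normSq_eq_norm_sq _).symm

lemma one_sub_normSq_mobius_le (hc : ‖c‖ = 1) (ha : ‖a‖ < 1) (hz : ‖z‖ ≤ 1) :
    1 - normSq (mobius c a z) ≤ (1 - normSq z) / (1 - ‖a‖) ^ 2 := by
  have : 0 < 1 - ‖a‖ := sub_pos.2 ha
  have hz0 : 0 ≤ 1 - normSq z := sub_nonneg.2 (normSq_le_one (mem_closedBall_zero_iff.2 hz))
  rw [one_sub_normSq_mobius hc ha hz, normSq_eq_norm_sq (1 - _)]
  gcongr
  · exact mul_le_of_le_one_left hz0 (sub_le_self _ (sq_nonneg _))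
  · exact one_sub_norm_le_norm_one_sub_conj_mul hz

lemma le_one_sub_normSq_mobius (hc : ‖c‖ = 1) (ha : ‖a‖ < 1) (hz : ‖z‖ ≤ 1) :
    (1 - ‖a‖) / 4 * (1 - normSq z) ≤ 1 - normSq (mobius c a z) := by
  have hz0 : 0 ≤ 1 - normSq z := sub_nonneg.2 (normSq_le_one (mem_closedBall_zero_iff.2 hz))
  have hN := normSq_pos.2 (one_sub_conj_mul_ne_zero ha hz)
  have hN4 : normSq (1 - (starRingEnd ℂ) a * z) ≤ 4 := by
    rw [normSq_eq_norm_sq]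
    nlinarith [norm_one_sub_conj_mul_le_two ha hz, norm_nonneg (1 - (starRingEnd ℂ) a * z)]
  have hle := one_sub_norm_le_one_sub_norm_sq ha
  rw [one_sub_normSq_mobius hc ha hz, div_mul_eq_mul_div]
  gcongr
  exact mul_nonneg ((sub_nonneg.2 ha.le).trans hle) hz0

lemma one_sub_re_mobius_le (hc : ‖c‖ = 1) (ha : ‖a‖ < 1) (h1 : mobius c a 1 = 1) (hz : ‖z‖ ≤ 1) :
    1 - (mobius c a z).re ≤ (1 - z.re) / (1 - ‖a‖) ^ 4 := by
  have hd : 0 < 1 - ‖a‖ := sub_pos.2 ha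
  have hd1 : (1 - ‖a‖) ^ 4 ≤ (1 - ‖a‖) ^ 2 :=
    pow_le_pow_of_le_one hd.le (sub_le_self _ (norm_nonneg a)) (by norm_num)
  have hz0 : 0 ≤ 1 - normSq z := sub_nonneg.2 (normSq_le_one (mem_closedBall_zero_iff.2 hz))
  have hdist : normSq (1 - mobius c a z) ≤ normSq (1 - z) / (1 - ‖a‖) ^ 4 := by
    have hlip := norm_mobius_sub_mobius_le hc ha norm_one.le hz
    rw [h1] at hlip
    calc normSq (1 - mobius c a z) = ‖1 - mobius c a z‖ ^ 2 := normSq_eq_norm_sq _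
      _ ≤ (‖1 - z‖ / (1 - ‖a‖) ^ 2) ^ 2 := by gcongr
      _ = _ := by rw [div_pow, ← normSq_eq_norm_sq, ← pow_mul]
  have hbdry : 1 - normSq (mobius c a z) ≤ (1 - normSq z) / (1 - ‖a‖) ^ 4 :=
    (one_sub_normSq_mobius_le hc ha hz).trans (by gcongr)
  rw [normSq_one_sub, normSq_one_sub, sub_div] at hdist
  have hsum : 2 * (1 - (mobius c a z).re) ≤ 2 * (1 - z.re) / (1 - ‖a‖) ^ 4 := by linarith
  rw [mul_div_assoc] at hsum
  linarith

lemma one_sub_re_rpow_le_one_sub_re_mobius_rpow (hc : ‖c‖ = 1) (ha : ‖a‖ < 1)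
    (h1 : mobius c a 1 = 1) (hz : z ∈ ball (0 : ℂ) 1) {q : ℝ} (hq : q ≤ 0) :
    (1 - ‖a‖) ^ (-(4 * q)) * (1 - z.re) ^ q ≤ (1 - (mobius c a z).re) ^ q := by
  have hd : 0 ≤ 1 - ‖a‖ := sub_nonneg.2 ha.le
  calc (1 - ‖a‖) ^ (-(4 * q)) * (1 - z.re) ^ q = ((1 - z.re) / (1 - ‖a‖) ^ 4) ^ q := by
        rw [Real.div_rpow (sub_nonneg.2 (re_lt_one hz).le) (by positivity), Real.rpow_neg hd,
          Real.rpow_mul hd, inv_mul_eq_div]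
        norm_num
    _ ≤ _ := Real.rpow_le_rpow_of_nonpos (sub_pos.2 (re_lt_one (mapsTo_mobius_ball hc ha hz)))
        (one_sub_re_mobius_le hc ha h1 (mem_ball_zero_iff.1 hz).le) hq

lemma barrier_le_barrier_mobius (hc : ‖c‖ = 1) (ha : ‖a‖ < 1) (h1 : mobius c a 1 = 1)
    (hz : z ∈ ball (0 : ℂ) 1) : (1 - ‖a‖) ^ 2 / 4 * barrier z ≤ barrier (mobius c a z) := by
  have hrpow := one_sub_re_rpow_le_one_sub_re_mobius_rpow hc ha h1 hz (q := -(1 / 4)) (by norm_num)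
  rw [show -(4 * -(1 / 4) : ℝ) = 1 by norm_num, Real.rpow_one] at hrpow
  have hd : 0 ≤ 1 - ‖a‖ := sub_nonneg.2 ha.le
  have hre : 0 ≤ (1 - z.re) ^ (-(1 / 4) : ℝ) := Real.rpow_nonneg (sub_nonneg.2 (re_lt_one hz).le) _
  have hmz := normSq_lt_one (mapsTo_mobius_ball hc ha hz)
  calc (1 - ‖a‖) ^ 2 / 4 * barrier z
      = ((1 - ‖a‖) / 4 * (1 - normSq z)) * ((1 - ‖a‖) * (1 - z.re) ^ (-(1 / 4) : ℝ)) := by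
        rw [barrier]
        ring
    _ ≤ (1 - normSq (mobius c a z)) * (1 - (mobius c a z).re) ^ (-(1 / 4) : ℝ) :=
        mul_le_mul (le_one_sub_normSq_mobius hc ha (mem_ball_zero_iff.1 hz).le) hrpow
          (mul_nonneg hd hre) (sub_nonneg.2 hmz.le)
    _ = _ := rfl

end Mobius

section QuasiInvariance

/-- An injective holomorphic self-map `f` of `Ω` along which the exhaustion `u` and its
Monge–Ampère density are preserved up to the factor `C`; it induces a bounded composition
operator on the Hardy spaces of `u`. -/
structure IsQuasiInvariant (u : ℂ → ℝ) (Ω : Set ℂ) (f : ℂ → ℂ) (C : ℝ) : Prop where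
  pos : 0 < C
  differentiableOn : DifferentiableOn ℂ f Ω
  mapsTo : MapsTo f Ω Ω
  injOn : InjOn f Ω
  mul_le : ∀ z ∈ Ω, C * u (f z) ≤ u z
  lap_le : ∀ z ∈ Ω, lap u z ≤ C * (lap u (f z) * normSq (deriv f z))

variable {u V : ℂ → ℝ} {Ω : Set ℂ} {f g : ℂ → ℂ} {C p r ε : ℝ} {ν : Measure ℂ}
  {μ : ℝ → Measure ℂ}

lemma det_fderiv_holomorphic (w : ℂ) :
    ((ContinuousLinearMap.toSpanSingleton ℂ w : ℂ →L[ℂ] ℂ).restrictScalars ℝ).det = normSq w := by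
  rw [← Algebra.norm_complex_apply, Algebra.norm_apply, ContinuousLinearMap.det]
  congr 1
  ext
  all_goals simp [mul_comm]

lemma lintegral_image_eq_lintegral_normSq_deriv_mul {s : Set ℂ} (hΩ : IsOpen Ω)
    (hf : DifferentiableOn ℂ f Ω) (hs : MeasurableSet s) (hsΩ : s ⊆ Ω) (hinj : InjOn f s)
    (F : ℂ → ℝ≥0∞) :
    ∫⁻ w in f '' s, F w = ∫⁻ z in s, ENNReal.ofReal (normSq (deriv f z)) * F (f z) := by
  rw [lintegral_image_eq_lintegral_abs_det_fderiv_mul volume hs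
    (f' := fun z => (ContinuousLinearMap.toSpanSingleton ℂ (deriv f z)).restrictScalars ℝ)
    (fun z hz => ((hf.differentiableAt (hΩ.mem_nhds
      (hsΩ hz))).hasDerivAt.hasFDerivAt.restrictScalars ℝ).hasFDerivWithinAt) hinj]
  simp only [det_fderiv_holomorphic, abs_of_nonneg (normSq_nonneg _)]

lemma norm_rpow_eq_normSq_rpow (w : ℂ) (p : ℝ) : ‖w‖ ^ p = (normSq w + 0) ^ (p / 2) := by
  rw [add_zero, normSq_eq_norm_sq, ← Real.rpow_natCast, ← Real.rpow_mul (norm_nonneg _),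
    Nat.cast_ofNat, mul_div_cancel₀ _ two_ne_zero]

lemma normSq_add_pos (hε : 0 < ε) (w : ℂ) : 0 < normSq w + ε :=
  add_pos_of_nonneg_of_pos (normSq_nonneg w) hε

lemma contDiffOn_normSq_comp_add_rpow (hΩ : IsOpen Ω) (hg : DifferentiableOn ℂ g Ω)
    (hε : 0 < ε) (q : ℝ) : ContDiffOn ℝ 2 (fun z => (normSq (g z) + ε) ^ q) Ω :=
  contDiffOn_comp_holomorphicOn (Ω' := univ) hΩ (fun w _ =>
    (contDiffAt_normSq_add_rpow (normSq_add_pos hε w)).contDiffWithinAt) hg (mapsTo_univ _ _)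

lemma lap_normSq_comp_add_rpow_nonneg {z : ℂ} {q : ℝ} (hg : AnalyticAt ℂ g z) (hε : 0 < ε)
    (hq : 0 ≤ q) : 0 ≤ lap (fun z => (normSq (g z) + ε) ^ q) z := by
  have hpos := normSq_add_pos hε (g z)
  have := normSq_nonneg (g z)
  have := normSq_nonneg (deriv g z)
  rw [lap_normSq_comp_add_rpow hg hpos]
  positivity

/- Dominated convergence as `ε ↓ 0`, with the case `ε = 1` as majorant. -/
lemma IsMAFamily.tendsto_lintegral_normSq_add_rpow (h : IsMAFamily u Ω ν μ) (hr : r < 0)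
    (hg : DifferentiableOn ℂ g Ω) (hp : 0 < p) :
    Tendsto (fun n : ℕ => ∫⁻ z, ENNReal.ofReal ((normSq (g z) + 1 / ((n : ℝ) + 1)) ^ (p / 2)) ∂μ r)
      atTop (𝓝 (∫⁻ z, ENNReal.ofReal (‖g z‖ ^ p) ∂μ r)) := by
  have hInt (ε : ℝ) (hε : 0 < ε) : Integrable (fun z => (normSq (g z) + ε) ^ (p / 2)) (μ r) :=
    (h.integrable_and_integral_eq hr
      (contDiffOn_normSq_comp_add_rpow h.isStrictExhaustion.isOpen hg hε _)).1
  refine tendsto_lintegral_of_dominated_convergence'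
    (fun z => ENNReal.ofReal ((normSq (g z) + 1) ^ (p / 2)))
    (fun n => (hInt _ Nat.one_div_pos_of_nat).aestronglyMeasurable.aemeasurable.ennreal_ofReal)
    (fun n => Eventually.of_forall fun z => ?_) (hInt 1 one_pos).lintegral_lt_top.ne
    (Eventually.of_forall fun z => ENNReal.tendsto_ofReal ?_)
  · have hle : 1 / ((n : ℝ) + 1) ≤ 1 := by simpa using Nat.one_div_le_one_div (α := ℝ) n.zero_le
    have := normSq_nonneg (g z)
    exact ENNReal.ofReal_le_ofReal (by gcongr)
  · rw [norm_rpow_eq_normSq_rpow]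
    exact (tendsto_const_nhds.add tendsto_one_div_add_atTop_nhds_zero_nat).rpow_const
      (Or.inr (by positivity))

namespace IsQuasiInvariant

lemma div_neg (hf : IsQuasiInvariant u Ω f C) (hr : r < 0) : r / C < 0 :=
  div_neg_of_neg_of_pos hr hf.pos

lemma image_sublevel_subset (hf : IsQuasiInvariant u Ω f C) :
    f '' {z | z ∈ Ω ∧ u z < r} ⊆ {z | z ∈ Ω ∧ u z < r / C} := by
  rintro _ ⟨z, ⟨hz, hzr⟩, rfl⟩
  exact ⟨hf.mapsTo hz, (lt_div_iff₀' hf.pos).2 ((hf.mul_le z hz).trans_lt hzr)⟩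

lemma lelongJensenDensity_comp_le (hf : IsQuasiInvariant u Ω f C) (hΩ : IsOpen Ω)
    (hV : ContDiffOn ℝ 2 V Ω) (hV0 : ∀ z ∈ Ω, 0 ≤ V z) (hlap : ∀ z ∈ Ω, 0 ≤ lap V z)
    {z : ℂ} (hz : z ∈ Ω) :
    lelongJensenDensity u r (fun y => V (f y)) z ≤
      C * (normSq (deriv f z) * lelongJensenDensity u (r / C) V (f z)) := by
  have hfz := hf.mapsTo hz
  rw [lelongJensenDensity, lap_comp_holomorphic (hf.differentiableOn.analyticAt (hΩ.mem_nhds hz))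
    (hV.contDiffAt (hΩ.mem_nhds hfz))]
  have hlapu := mul_le_mul_of_nonneg_right (hf.lap_le z hz) (hV0 _ hfz)
  have hru : r - u z ≤ C * (r / C - u (f z)) := by
    rw [mul_sub, mul_div_cancel₀ _ hf.pos.ne']
    exact sub_le_sub_left (hf.mul_le z hz) r
  have hlapV := mul_le_mul_of_nonneg_right hru
    (mul_nonneg (normSq_nonneg (deriv f z)) (hlap _ hfz))
  rw [lelongJensenDensity]
  linarith

theorem lintegral_comp_le (hf : IsQuasiInvariant u Ω f C) (h : IsMAFamily u Ω ν μ) (hr : r < 0)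
    (hV : ContDiffOn ℝ 2 V Ω) (hV0 : ∀ z ∈ Ω, 0 ≤ V z) (hlap : ∀ z ∈ Ω, 0 ≤ lap V z) :
    ∫⁻ z, ENNReal.ofReal (V (f z)) ∂μ r ≤
      ENNReal.ofReal C * ∫⁻ z, ENNReal.ofReal (V z) ∂μ (r / C) := by
  have hu := h.isStrictExhaustion
  have hΩ := hu.isOpen
  have hS := (hu.isOpen_sublevel r).measurableSet
  have hcomp_nonneg (z) (hz : z ∈ Ω) : 0 ≤ lap (fun y => V (f y)) z := by
    rw [lap_comp_holomorphic (hf.differentiableOn.analyticAt (hΩ.mem_nhds hz))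
      (hV.contDiffAt (hΩ.mem_nhds (hf.mapsTo hz)))]
    exact mul_nonneg (normSq_nonneg _) (hlap _ (hf.mapsTo hz))
  rw [h.lintegral_eq hr (contDiffOn_comp_holomorphicOn hΩ hV hf.differentiableOn hf.mapsTo)
    (fun z hz => hV0 _ (hf.mapsTo hz)) hcomp_nonneg, h.lintegral_eq (hf.div_neg hr) hV hV0 hlap]
  calc ∫⁻ z in {z | z ∈ Ω ∧ u z < r}, ENNReal.ofReal (lelongJensenDensity u r (fun y => V (f y)) z)
      ≤ ∫⁻ z in {z | z ∈ Ω ∧ u z < r}, ENNReal.ofReal C * (ENNReal.ofReal (normSq (deriv f z)) *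
          ENNReal.ofReal (lelongJensenDensity u (r / C) V (f z))) := by
        refine setLIntegral_mono' hS fun z hz => ?_
        rw [← ENNReal.ofReal_mul (normSq_nonneg _), ← ENNReal.ofReal_mul hf.pos.le]
        exact ENNReal.ofReal_le_ofReal (hf.lelongJensenDensity_comp_le hΩ hV hV0 hlap hz.1)
    _ = ENNReal.ofReal C * ∫⁻ z in f '' {z | z ∈ Ω ∧ u z < r},
          ENNReal.ofReal (lelongJensenDensity u (r / C) V z) := by
        rw [lintegral_const_mul' _ _ ENNReal.ofReal_ne_top,
          lintegral_image_eq_lintegral_normSq_deriv_mul hΩ hf.differentiableOn hS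
            (fun _ hz => hz.1) (hf.injOn.mono fun _ hz => hz.1)]
    _ ≤ _ := mul_le_mul_right (lintegral_mono_set hf.image_sublevel_subset) _

theorem lintegral_norm_rpow_comp_le (hf : IsQuasiInvariant u Ω f C) (h : IsMAFamily u Ω ν μ)
    (hr : r < 0) (hg : DifferentiableOn ℂ g Ω) (hp : 0 < p) :
    ∫⁻ z, ENNReal.ofReal (‖g (f z)‖ ^ p) ∂μ r ≤
      ENNReal.ofReal C * ∫⁻ z, ENNReal.ofReal (‖g z‖ ^ p) ∂μ (r / C) := by
  have hΩ := h.isStrictExhaustion.isOpen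
  refine ge_of_tendsto' (ENNReal.Tendsto.const_mul
    (h.tendsto_lintegral_normSq_add_rpow (hf.div_neg hr) hg hp)
    (Or.inr ENNReal.ofReal_ne_top)) fun n => ?_
  have hε : 0 < 1 / ((n : ℝ) + 1) := Nat.one_div_pos_of_nat
  refine le_trans (lintegral_mono fun z => ENNReal.ofReal_le_ofReal ?_)
    (hf.lintegral_comp_le h hr (contDiffOn_normSq_comp_add_rpow hΩ hg hε (p / 2))
      (fun z _ => Real.rpow_nonneg (normSq_add_pos hε _).le _)
      fun z hz => lap_normSq_comp_add_rpow_nonneg (hg.analyticAt (hΩ.mem_nhds hz)) hε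
        (by positivity))
  have := normSq_nonneg (g (f z))
  rw [norm_rpow_eq_normSq_rpow]
  gcongr

lemma tendsto_div (hf : IsQuasiInvariant u Ω f C) :
    Tendsto (fun r => r / C) (𝓝[<] 0) (𝓝[<] 0) := by
  refine tendsto_nhdsWithin_iff.2 ⟨?_, eventually_mem_nhdsWithin.mono fun r hr => hf.div_neg hr⟩
  simpa using (tendsto_id.div_const C).mono_left (nhdsWithin_le_nhds (a := (0 : ℝ)))

lemma psNormPow_comp_le (hf : IsQuasiInvariant u Ω f C) (h : IsMAFamily u Ω ν μ)
    (hg : DifferentiableOn ℂ g Ω) (hp : 0 < p) :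
    psNormPow p μ (g ∘ f) ≤ ENNReal.ofReal C * psNormPow p μ g := by
  calc psNormPow p μ (g ∘ f)
      ≤ limsup (fun r => ENNReal.ofReal C * ∫⁻ z, ENNReal.ofReal (‖g z‖ ^ p) ∂μ (r / C)) (𝓝[<] 0) :=
        limsup_le_limsup <| eventually_mem_nhdsWithin.mono fun _ hr =>
          hf.lintegral_norm_rpow_comp_le h hr hg hp
    _ = ENNReal.ofReal C *
          limsup (fun r => ∫⁻ z, ENNReal.ofReal (‖g z‖ ^ p) ∂μ (r / C)) (𝓝[<] 0) :=
        ENNReal.limsup_const_mul_of_ne_top ENNReal.ofReal_ne_top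
    _ ≤ _ := mul_le_mul_right (limsup_le_limsup_of_le (f := map (· / C) (𝓝[<] 0))
        (u := fun r => ∫⁻ z, ENNReal.ofReal (‖g z‖ ^ p) ∂μ r) hf.tendsto_div) _

theorem boundedCompOp (hf : IsQuasiInvariant u (ball 0 1) f C)
    (h : IsMAFamily u (ball 0 1) ν μ) (hp : 0 < p) : BoundedCompOp p μ f := by
  have hp_inv : 0 ≤ 1 / p := by positivity
  refine ⟨C ^ (1 / p), Real.rpow_pos_of_pos hf.pos _, fun g hg => ?_⟩
  have hle := hf.psNormPow_comp_le h hg.1 hp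
  refine ⟨⟨hg.1.comp hf.differentiableOn hf.mapsTo,
    hle.trans_lt (ENNReal.mul_lt_top ENNReal.ofReal_lt_top hg.2)⟩, ?_⟩
  rw [psNorm, psNorm, ← ENNReal.ofReal_rpow_of_pos hf.pos, ← ENNReal.mul_rpow_of_nonneg _ _ hp_inv]
  exact ENNReal.rpow_le_rpow hle hp_inv

end IsQuasiInvariant

lemma IsPeakExhaustion.isQuasiInvariant_mobius {c a : ℂ} (hu : IsPeakExhaustion u) (hc : ‖c‖ = 1)
    (ha : ‖a‖ < 1) (h1 : mobius c a 1 = 1) :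
    IsQuasiInvariant u (ball 0 1) (mobius c a) (75 / (1 - ‖a‖) ^ 7) := by
  have hd : 0 < 1 - ‖a‖ := sub_pos.2 ha
  have hd7 (n : ℕ) (hn : n ≤ 7) : 75 ≤ 75 / (1 - ‖a‖) ^ 7 * (1 - ‖a‖) ^ n := by
    rw [div_mul_eq_mul_div, le_div_iff₀ (by positivity)]
    exact mul_le_mul_of_nonneg_left
      (pow_le_pow_of_le_one hd.le (sub_le_self _ (norm_nonneg a)) hn) (by norm_num)
  refine ⟨by positivity, differentiableOn_mobius c ha, mapsTo_mobius_ball hc ha,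
    (injOn_mobius hc ha).mono ball_subset_closedBall, fun z hz => ?_, fun z hz => ?_⟩
  · have hmz := mapsTo_mobius_ball hc ha hz
    have hC : 0 < 75 / (1 - ‖a‖) ^ 7 := by positivity
    have hb := mul_le_mul_of_nonneg_left (barrier_le_barrier_mobius hc ha h1 hz) hC.le
    have h75 := mul_le_mul_of_nonneg_right (hd7 2 (by norm_num)) (barrier_pos hz).le
    have hupper := mul_le_mul_of_nonneg_left (hu.le_neg_barrier hmz) hC.le
    linarith [hu.neg_barrier_le hz, barrier_pos hz]
  · have hmz := mapsTo_mobius_ball hc ha hz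
    have hrpow :=
      one_sub_re_rpow_le_one_sub_re_mobius_rpow hc ha h1 hz (q := -(5 / 4)) (by norm_num)
    rw [show -(4 * -(5 / 4) : ℝ) = (5 : ℕ) by norm_num, Real.rpow_natCast] at hrpow
    have hre : 0 ≤ (1 - z.re) ^ (-(5 / 4) : ℝ) := Real.rpow_nonneg (sub_pos.2 (re_lt_one hz)).le _
    have hmre : 0 ≤ (1 - (mobius c a z).re) ^ (-(5 / 4) : ℝ) :=
      Real.rpow_nonneg (sub_pos.2 (re_lt_one hmz)).le _
    rw [hu.lap_eq z hz, hu.lap_eq _ hmz]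
    calc 3 / 16 * (1 - z.re) ^ (-(5 / 4) : ℝ) ≤ 3 / 16 * ((1 - z.re) ^ (-(5 / 4) : ℝ) *
          (75 / (1 - ‖a‖) ^ 7 * (1 - ‖a‖) ^ 7 / 16)) := by
          gcongr
          exact le_mul_of_one_le_right hre (by linarith [hd7 7 le_rfl])
      _ = 75 / (1 - ‖a‖) ^ 7 * (3 / 16 * ((1 - ‖a‖) ^ 5 * (1 - z.re) ^ (-(5 / 4) : ℝ)) *
          ((1 - ‖a‖) ^ 2 / 16)) := by ring
      _ ≤ _ := by
          gcongr
          exact le_normSq_deriv_mobius hc ha (mem_ball_zero_iff.1 hz).le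

end QuasiInvariance

section PeakFunctions

/-- The affine function `1 + δ - b̄ z`, whose zero `(1 + δ) b` approaches the boundary point `b`
of the unit disc as `δ ↓ 0`. -/
def peakDenom (b : ℂ) (δ : ℝ) (z : ℂ) : ℂ := 1 + δ - (starRingEnd ℂ) b * z

/-- The subharmonic function `|1 + δ - b̄ z| ^ (-3 / 4)`, peaking at the boundary point `b`; it is
`|f| ^ p` for the test functions `f` against which boundedness is disproved. -/
def peakFun (b : ℂ) (δ : ℝ) (z : ℂ) : ℝ := ‖peakDenom b δ z‖ ^ (-(3 / 4) : ℝ)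

variable {b z a c : ℂ} {δ r p s : ℝ} {u : ℂ → ℝ} {ν : Measure ℂ} {μ : ℝ → Measure ℂ}

lemma le_re_peakDenom (hb : ‖b‖ = 1) (hz : ‖z‖ ≤ 1) : δ ≤ (peakDenom b δ z).re := by
  have hle : ((starRingEnd ℂ) b * z).re ≤ 1 := by
    refine (re_le_norm _).trans ?_
    rwa [norm_mul, RCLike.norm_conj, hb, one_mul]
  simp only [peakDenom, sub_re, add_re, one_re, ofReal_re]
  linarith

lemma peakDenom_ne_zero (hb : ‖b‖ = 1) (hz : ‖z‖ ≤ 1) (hδ : 0 < δ) : peakDenom b δ z ≠ 0 :=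
  fun h => (hδ.trans_le (le_re_peakDenom hb hz)).ne' (by rw [h, zero_re])

lemma norm_peakDenom_zero (hb : ‖b‖ = 1) (z : ℂ) : ‖peakDenom b 0 z‖ = ‖z - b‖ := by
  have hfactor : peakDenom b 0 z = (starRingEnd ℂ) b * (b - z) := by
    rw [mul_sub, conj_mul_self_of_norm_eq_one hb, peakDenom, ofReal_zero, add_zero]
  rw [hfactor, norm_mul, RCLike.norm_conj, hb, one_mul, norm_sub_rev]

lemma peakDenom_eq_ofReal_add (b : ℂ) (δ : ℝ) (z : ℂ) :
    peakDenom b δ z = δ + peakDenom b 0 z := by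
  rw [peakDenom, peakDenom, ofReal_zero]
  ring

lemma norm_sub_le_norm_peakDenom (hb : ‖b‖ = 1) (hz : ‖z‖ ≤ 1) (hδ : 0 ≤ δ) :
    ‖z - b‖ ≤ ‖peakDenom b δ z‖ := by
  have hre : 0 ≤ (peakDenom b 0 z).re := le_re_peakDenom hb hz
  rw [← norm_peakDenom_zero hb, peakDenom_eq_ofReal_add b δ]
  refine (sq_le_sq₀ (norm_nonneg _) (norm_nonneg _)).1 ?_
  simp only [← normSq_eq_norm_sq, normSq_apply, add_re, add_im, ofReal_re, ofReal_im]
  nlinarith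

lemma norm_peakDenom_le (hb : ‖b‖ = 1) (hδ : 0 ≤ δ) (z : ℂ) :
    ‖peakDenom b δ z‖ ≤ δ + ‖z - b‖ := by
  rw [← norm_peakDenom_zero hb, peakDenom_eq_ofReal_add]
  exact (norm_add_le _ _).trans_eq (by rw [norm_real, Real.norm_of_nonneg hδ])

lemma differentiable_peakDenom (b : ℂ) (δ : ℝ) : Differentiable ℂ (peakDenom b δ) :=
  ((differentiable_id.const_mul ((starRingEnd ℂ) b)).const_sub (1 + (δ : ℂ)))

lemma continuousOn_peakFun (hb : ‖b‖ = 1) (hδ : 0 < δ) :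
    ContinuousOn (peakFun b δ) (closedBall 0 1) :=
  (differentiable_peakDenom b δ).continuous.norm.continuousOn.rpow_const fun _ hz =>
    Or.inl (norm_ne_zero_iff.2 (peakDenom_ne_zero hb (mem_closedBall_zero_iff.1 hz) hδ))

lemma measurable_peakFun (b : ℂ) (δ : ℝ) : Measurable (peakFun b δ) :=
  (differentiable_peakDenom b δ).continuous.norm.measurable.pow_const _

lemma deriv_peakDenom (b : ℂ) (δ : ℝ) (z : ℂ) :
    deriv (peakDenom b δ) z = -(starRingEnd ℂ) b := by
  have h := ((hasDerivAt_id z).const_mul ((starRingEnd ℂ) b)).const_sub (1 + (δ : ℂ))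
  rw [mul_one] at h
  exact h.deriv

lemma peakFun_nonneg (b : ℂ) (δ : ℝ) (z : ℂ) : 0 ≤ peakFun b δ z :=
  Real.rpow_nonneg (norm_nonneg _) _

lemma normSq_peakDenom_pos (hb : ‖b‖ = 1) (hδ : 0 < δ) (hz : z ∈ ball (0 : ℂ) 1) :
    0 < normSq (peakDenom b δ z) + 0 := by
  rw [add_zero]
  exact normSq_pos.2 (peakDenom_ne_zero hb (mem_ball_zero_iff.1 hz).le hδ)

lemma peakFun_eq (b : ℂ) (δ : ℝ) :
    peakFun b δ = fun z => (normSq (peakDenom b δ z) + 0) ^ (-(3 / 4) / 2 : ℝ) :=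
  funext fun _ => norm_rpow_eq_normSq_rpow _ _

lemma contDiffOn_peakFun (hb : ‖b‖ = 1) (hδ : 0 < δ) :
    ContDiffOn ℝ 2 (peakFun b δ) (ball 0 1) := by
  rw [peakFun_eq]
  exact contDiffOn_comp_holomorphicOn (Ω' := {w | 0 < normSq w + 0}) isOpen_ball
    (fun w hw => (contDiffAt_normSq_add_rpow hw).contDiffWithinAt)
    (differentiable_peakDenom b δ).differentiableOn fun z hz => normSq_peakDenom_pos hb hδ hz

lemma lap_peakFun (hb : ‖b‖ = 1) (hδ : 0 < δ) (hz : z ∈ ball (0 : ℂ) 1) :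
    lap (peakFun b δ) z = 9 / 16 * ‖peakDenom b δ z‖ ^ (-(11 / 4) : ℝ) := by
  have hpos := normSq_peakDenom_pos hb hδ hz
  rw [peakFun_eq, lap_normSq_comp_add_rpow ((differentiable_peakDenom b δ).analyticAt z) hpos,
    deriv_peakDenom, normSq_neg, normSq_conj, normSq_eq_norm_sq b, hb, norm_rpow_eq_normSq_rpow,
    show (-(11 / 4) / 2 : ℝ) = -(3 / 4) / 2 - 2 + 1 by norm_num, Real.rpow_add_one hpos.ne']
  ring

lemma lap_peakFun_nonneg (hb : ‖b‖ = 1) (hδ : 0 < δ) (hz : z ∈ ball (0 : ℂ) 1) :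
    0 ≤ lap (peakFun b δ) z := by
  rw [lap_peakFun hb hδ hz]
  positivity

lemma exists_norm_rpow_eq_peakFun (hb : ‖b‖ = 1) (hδ : 0 < δ) (hp : 0 < p) :
    ∃ f : ℂ → ℂ, DifferentiableOn ℂ f (ball 0 1) ∧
      ∀ z ∈ ball (0 : ℂ) 1, ‖f z‖ ^ p = peakFun b δ z := by
  refine ⟨fun z => peakDenom b δ z ^ ((-(3 / 4) / p : ℝ) : ℂ), fun z hz => ?_, fun z _ => ?_⟩
  · refine ((differentiable_peakDenom b δ z).cpow_const (Or.inl ?_)).differentiableWithinAt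
    exact hδ.trans_le (le_re_peakDenom hb (mem_ball_zero_iff.1 hz).le)
  · rw [norm_cpow_real, ← Real.rpow_mul (norm_nonneg _), div_mul_cancel₀ _ hp.ne', peakFun]

lemma IsPeakExhaustion.sub_le_of_neg (hu : IsPeakExhaustion u) (hb : ‖b‖ = 1)
    (hz : z ∈ ball (0 : ℂ) 1) (hr : r < 0) :
    r - u z ≤ 2 * (1 - z.re) ^ (-(5 / 4) : ℝ) * ‖z - b‖ := by
  have ht : 0 < 1 - z.re := sub_pos.2 (re_lt_one hz)
  have hz1 := (mem_ball_zero_iff.1 hz).le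
  have hdist : 1 - ‖z‖ ≤ ‖z - b‖ := by
    simpa only [hb, norm_sub_rev] using norm_sub_norm_le b z
  have hnormSq : 1 - normSq z ≤ 2 * ‖z - b‖ := by
    rw [normSq_eq_norm_sq]
    nlinarith [norm_nonneg z]
  have ht2 : 1 - z.re ≤ 2 := by linarith [neg_le_of_abs_le ((abs_re_le_norm z).trans hz1)]
  calc r - u z ≤ 1 / 2 * ((1 - normSq z) * (1 - z.re) ^ (-(1 / 4) : ℝ)) := by
        have hbarrier := hu.neg_barrier_le hz
        rw [barrier] at hbarrier
        linarith
    _ ≤ 1 / 2 * (2 * ‖z - b‖ * ((1 - z.re) ^ (-(5 / 4) : ℝ) * 2)) := by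
        rw [← rpow_neg_five_quarters_mul_self ht]
        gcongr
    _ = _ := by ring

lemma IsPeakExhaustion.lelongJensenDensity_peakFun_le (hu : IsPeakExhaustion u) (hb : ‖b‖ = 1)
    (hδ : 0 < δ) (hr : r < 0) (hz : z ∈ ball (0 : ℂ) 1) :
    lelongJensenDensity u r (peakFun b δ) z ≤
      (1 - z.re) ^ (-(5 / 4) : ℝ) * ‖z - b‖ ^ (-(7 / 4) : ℝ) := by
  have hz1 := mem_ball_zero_iff.1 hz
  have hx : 0 < ‖z - b‖ :=
    norm_pos_iff.2 <| sub_ne_zero.2 fun h => (h ▸ hz1 : ‖b‖ < 1).ne hb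
  have hx2 : ‖z - b‖ ≤ 2 := by linarith [norm_sub_le z b]
  have hrpow_le (q : ℝ) (hq : q ≤ 0) : ‖peakDenom b δ z‖ ^ q ≤ ‖z - b‖ ^ q :=
    Real.rpow_le_rpow_of_nonpos hx (norm_sub_le_norm_peakDenom hb hz1.le hδ.le) hq
  have hmul_self (q : ℝ) : ‖z - b‖ * ‖z - b‖ ^ q = ‖z - b‖ ^ (q + 1) := by
    rw [mul_comm, Real.rpow_add_one hx.ne']
  have ht : 0 < (1 - z.re) ^ (-(5 / 4) : ℝ) :=
    Real.rpow_pos_of_pos (sub_pos.2 (re_lt_one hz)) _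
  have hleft : peakFun b δ z ≤ 2 * ‖z - b‖ ^ (-(7 / 4) : ℝ) := by
    refine (hrpow_le (-(3 / 4)) (by norm_num)).trans ?_
    rw [show (-(3 / 4) : ℝ) = -(7 / 4) + 1 by norm_num, ← hmul_self]
    gcongr
  have hright : (r - u z) * lap (peakFun b δ) z ≤
      9 / 8 * ((1 - z.re) ^ (-(5 / 4) : ℝ) * ‖z - b‖ ^ (-(7 / 4) : ℝ)) := by
    calc (r - u z) * lap (peakFun b δ) z
        ≤ 2 * (1 - z.re) ^ (-(5 / 4) : ℝ) * ‖z - b‖ * (9 / 16 * ‖z - b‖ ^ (-(11 / 4) : ℝ)) := by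
          refine (mul_le_mul_of_nonneg_right (hu.sub_le_of_neg hb hz hr)
            (lap_peakFun_nonneg hb hδ hz)).trans ?_
          rw [lap_peakFun hb hδ hz]
          gcongr _ * (9 / 16 * ?_)
          exact hrpow_le (-(11 / 4)) (by norm_num)
      _ = 9 / 8 * ((1 - z.re) ^ (-(5 / 4) : ℝ) * (‖z - b‖ * ‖z - b‖ ^ (-(11 / 4) : ℝ))) := by ring
      _ = _ := by
          rw [hmul_self]
          norm_num
  rw [lelongJensenDensity, hu.lap_eq z hz]
  have hprod := mul_le_mul_of_nonneg_left hleft ht.le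
  have hpos := mul_pos ht (Real.rpow_pos_of_pos hx (-(7 / 4)))
  linarith

/- The two singularities, at `1` and at `b`, are separated, so that everywhere on the disc one of
the two factors is bounded. -/
lemma integrableOn_one_sub_re_rpow_mul_norm_sub_rpow (hb : b ≠ 1) :
    IntegrableOn (fun z : ℂ => (1 - z.re) ^ (-(5 / 4) : ℝ) * ‖z - b‖ ^ (-(7 / 4) : ℝ))
      (ball 0 1) := by
  have hd : 0 < ‖1 - b‖ := norm_pos_iff.2 (sub_ne_zero.2 hb.symm)
  set m : ℝ := (‖1 - b‖ / 2) ^ (-(7 / 4) : ℝ) + (‖1 - b‖ ^ 2 / 8) ^ (-(5 / 4) : ℝ)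
  have hm1 : 0 < (‖1 - b‖ / 2) ^ (-(7 / 4) : ℝ) := by positivity
  have hm2 : 0 < (‖1 - b‖ ^ 2 / 8) ^ (-(5 / 4) : ℝ) := by positivity
  have hsum := integrableOn_one_sub_re_rpow.add (integrableOn_norm_sub_rpow_neg (s := 7 / 4)
    (by simp) (by rw [finrank_real_complex]; norm_num) b isBounded_ball)
  refine Integrable.mono' (hsum.const_mul m) (Measurable.aestronglyMeasurable (by fun_prop)) ?_
  filter_upwards [ae_restrict_mem measurableSet_ball] with z hz
  have ht : 0 < 1 - z.re := sub_pos.2 (re_lt_one hz)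
  have hA : 0 ≤ (1 - z.re) ^ (-(5 / 4) : ℝ) := by positivity
  have hB : 0 ≤ ‖z - b‖ ^ (-(7 / 4) : ℝ) := by positivity
  have hsep : (1 - z.re) ^ (-(5 / 4) : ℝ) ≤ m ∨ ‖z - b‖ ^ (-(7 / 4) : ℝ) ≤ m := by
    rcases le_total (‖1 - b‖ / 2) ‖z - b‖ with hfar | hnear
    · right
      have := Real.rpow_le_rpow_of_nonpos (z := -(7 / 4)) (by positivity) hfar (by norm_num)
      linarith
    · left
      have hdist : ‖1 - b‖ / 2 ≤ ‖1 - z‖ := by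
        linarith [norm_sub_le_norm_sub_add_norm_sub 1 z b]
      have hsq : (‖1 - b‖ / 2) ^ 2 ≤ 2 * (1 - z.re) := by
        have hle := pow_le_pow_left₀ (by positivity) hdist 2
        rw [← normSq_eq_norm_sq (1 - z), normSq_one_sub] at hle
        linarith [normSq_lt_one hz]
      have := Real.rpow_le_rpow_of_nonpos (x := ‖1 - b‖ ^ 2 / 8) (y := 1 - z.re) (z := -(5 / 4))
        (by positivity) (by linarith) (by norm_num)
      linarith
  rw [Real.norm_of_nonneg (mul_nonneg hA hB), Pi.add_apply, mul_add]
  rcases hsep with h | h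
  · nlinarith [mul_le_mul_of_nonneg_right h hB]
  · nlinarith [mul_le_mul_of_nonneg_left h hA]

theorem IsMAFamily.exists_lintegral_peakFun_le (hu : IsPeakExhaustion u)
    (h : IsMAFamily u (ball 0 1) ν μ) (hb : ‖b‖ = 1) (hb1 : b ≠ 1) :
    ∃ C : ℝ≥0∞, C < ⊤ ∧ ∀ δ > 0, ∀ r < 0, ∫⁻ z, ENNReal.ofReal (peakFun b δ z) ∂μ r ≤ C := by
  refine ⟨_, (integrableOn_one_sub_re_rpow_mul_norm_sub_rpow hb1).lintegral_lt_top,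
    fun δ hδ r hr => ?_⟩
  rw [h.lintegral_eq hr (contDiffOn_peakFun hb hδ) (fun z _ => peakFun_nonneg b δ z)
    fun z hz => lap_peakFun_nonneg hb hδ hz]
  refine (setLIntegral_mono' (h.isStrictExhaustion.isOpen_sublevel r).measurableSet fun z hz =>
    ENNReal.ofReal_le_ofReal ?_).trans (lintegral_mono_set fun _ hz => hz.1)
  exact hu.lelongJensenDensity_peakFun_le hb hδ hr hz.1

/-- A box inside the unit disc adjacent to the boundary point `1`, at distance about `s ^ 8` from
the circle; with this choice of side lengths all powers of `s` that occur are integral. -/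
def peakBox (s : ℝ) : Set ℂ := Ioo (1 - 2 * s ^ 8) (1 - s ^ 8) ×ℂ Ioo (-s ^ 4) (s ^ 4)

lemma measurableSet_peakBox (s : ℝ) : MeasurableSet (peakBox s) :=
  (isOpen_Ioo.reProdIm isOpen_Ioo).measurableSet

lemma volume_reProdIm (s t : Set ℝ) : volume (s ×ℂ t) = volume s * volume t := by
  have h := volume_preserving_equiv_real_prod.measure_preimage_equiv (s ×ˢ t)
  rwa [Measure.volume_eq_prod, Measure.prod_prod] at h

lemma volume_peakBox (s : ℝ) : volume (peakBox s) = ENNReal.ofReal (2 * s ^ 12) := by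
  rw [peakBox, volume_reProdIm, Real.volume_Ioo, Real.volume_Ioo,
    ← ENNReal.ofReal_mul (by ring_nf; positivity)]
  ring_nf

lemma pow_lt_one_sub_re_of_mem_peakBox (hz : z ∈ peakBox s) : s ^ 8 < 1 - z.re := by
  linarith [hz.1.2]

lemma one_sub_re_lt_of_mem_peakBox (hz : z ∈ peakBox s) : 1 - z.re < 2 * s ^ 8 := by
  linarith [hz.1.1]

lemma sq_im_lt_of_mem_peakBox (hz : z ∈ peakBox s) : z.im ^ 2 < s ^ 8 := by
  rw [show s ^ 8 = (s ^ 4) ^ 2 by ring]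
  exact sq_lt_sq' hz.2.1 hz.2.2

lemma pow_eight_le (hs : 0 < s) (hs2 : s ≤ 1 / 2) : s ^ 8 ≤ 1 / 256 :=
  (pow_le_pow_left₀ hs.le hs2 8).trans_eq (by norm_num)

lemma half_pow_le_one_sub_normSq (hs : 0 < s) (hs2 : s ≤ 1 / 2) (hz : z ∈ peakBox s) :
    s ^ 8 / 2 ≤ 1 - normSq z := by
  rw [normSq_apply]
  nlinarith [pow_lt_one_sub_re_of_mem_peakBox hz, one_sub_re_lt_of_mem_peakBox hz,
    sq_im_lt_of_mem_peakBox hz, pow_eight_le hs hs2]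

lemma peakBox_subset_ball (hs : 0 < s) (hs2 : s ≤ 1 / 2) : peakBox s ⊆ ball 0 1 := fun z hz => by
  have hlt : normSq z < 1 := by
    linarith [half_pow_le_one_sub_normSq hs hs2 hz, pow_pos hs 8]
  rw [normSq_eq_norm_sq, sq_lt_one_iff₀ (norm_nonneg z)] at hlt
  exact mem_ball_zero_iff.2 hlt

lemma norm_one_sub_le_of_mem_peakBox (hs : 0 < s) (hs2 : s ≤ 1 / 2) (hz : z ∈ peakBox s) :
    ‖z - 1‖ ≤ 2 * s ^ 4 := by
  refine (sq_le_sq₀ (norm_nonneg _) (by positivity)).1 ?_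
  rw [← normSq_eq_norm_sq, normSq_apply, sub_re, sub_im, one_re, one_im,
    show (2 * s ^ 4) ^ 2 = 4 * s ^ 8 by ring]
  nlinarith [pow_lt_one_sub_re_of_mem_peakBox hz, one_sub_re_lt_of_mem_peakBox hz,
    sq_im_lt_of_mem_peakBox hz, pow_eight_le hs hs2, pow_pos hs 8]

lemma IsPeakExhaustion.peakBox_subset_sublevel (hu : IsPeakExhaustion u) (hs : 0 < s)
    (hs2 : s ≤ 1 / 2) (hr : -(3 / 224) * s ^ 8 < r) :
    peakBox s ⊆ {z | z ∈ ball (0 : ℂ) 1 ∧ u z < r} := fun z hz => by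
  have hzb := peakBox_subset_ball hs hs2 hz
  have hone : 1 ≤ (1 - z.re) ^ (-(1 / 4) : ℝ) :=
    Real.one_le_rpow_of_pos_of_le_one_of_nonpos (sub_pos.2 (re_lt_one hzb))
      (by linarith [one_sub_re_lt_of_mem_peakBox hz, pow_eight_le hs hs2]) (by norm_num)
  have hbarrier : s ^ 8 / 2 ≤ barrier z :=
    (half_pow_le_one_sub_normSq hs hs2 hz).trans
      (le_mul_of_one_le_right (sub_nonneg.2 (normSq_lt_one hzb).le) hone)
  exact ⟨hzb, by linarith [hu.le_neg_barrier hzb]⟩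

lemma pow_rpow_eq_inv_pow (hs : 0 < s) (m n : ℕ) (q : ℝ) (hq : m * q = -n) :
    (s ^ m) ^ q = (s ^ n)⁻¹ := by
  rw [← Real.rpow_natCast, ← Real.rpow_mul hs.le, hq, Real.rpow_neg hs.le, Real.rpow_natCast]

lemma IsPeakExhaustion.le_lap_of_mem_peakBox (hu : IsPeakExhaustion u) (hs : 0 < s)
    (hs2 : s ≤ 1 / 2) (hz : z ∈ peakBox s) :
    3 / 16 * (2 ^ (-(5 / 4) : ℝ) * (s ^ 10)⁻¹) ≤ lap u z := by
  have hzb := peakBox_subset_ball hs hs2 hz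
  rw [hu.lap_eq z hzb, ← pow_rpow_eq_inv_pow hs 8 10 (-(5 / 4)) (by norm_num),
    ← Real.mul_rpow zero_le_two (by positivity)]
  gcongr 3 / 16 * ?_
  exact Real.rpow_le_rpow_of_nonpos (sub_pos.2 (re_lt_one hzb))
    (one_sub_re_lt_of_mem_peakBox hz).le (by norm_num)

lemma le_peakFun_mobius_of_mem_peakBox (hc : ‖c‖ = 1) (ha : ‖a‖ < 1) (hs : 0 < s)
    (hs2 : s ≤ 1 / 2) (hz : z ∈ peakBox s) :
    (1 + 2 / (1 - ‖a‖) ^ 2) ^ (-(3 / 4) : ℝ) * (s ^ 3)⁻¹ ≤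
      peakFun (mobius c a 1) (s ^ 8) (mobius c a z) := by
  have hzb := peakBox_subset_ball hs hs2 hz
  have : 0 < 1 - ‖a‖ := sub_pos.2 ha
  have hb : ‖mobius c a 1‖ = 1 :=
    mem_sphere_zero_iff_norm.1 (mapsTo_mobius_sphere hc ha (by simp))
  have hlip : ‖mobius c a z - mobius c a 1‖ ≤ 2 * s ^ 4 / (1 - ‖a‖) ^ 2 :=
    (norm_mobius_sub_mobius_le hc ha (mem_ball_zero_iff.1 hzb).le (by simp)).trans <|
      div_le_div_of_nonneg_right (norm_one_sub_le_of_mem_peakBox hs hs2 hz) (by positivity)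
  have hpow : s ^ 8 ≤ s ^ 4 := pow_le_pow_of_le_one hs.le (by linarith) (by norm_num)
  have hle : ‖peakDenom (mobius c a 1) (s ^ 8) (mobius c a z)‖ ≤
      (1 + 2 / (1 - ‖a‖) ^ 2) * s ^ 4 := by
    refine (norm_peakDenom_le hb (by positivity) _).trans ((add_le_add hpow hlip).trans_eq ?_)
    ring
  rw [← pow_rpow_eq_inv_pow hs 4 3 (-(3 / 4)) (by norm_num),
    ← Real.mul_rpow (by positivity) (by positivity)]
  exact Real.rpow_le_rpow_of_nonpos (norm_pos_iff.2 (peakDenom_ne_zero hb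
    (mem_ball_zero_iff.1 (mapsTo_mobius_ball hc ha hzb)).le (by positivity))) hle (by norm_num)

lemma contDiffOn_peakFun_comp_mobius (hb : ‖b‖ = 1) (hδ : 0 < δ) (hc : ‖c‖ = 1) (ha : ‖a‖ < 1) :
    ContDiffOn ℝ 2 (fun z => peakFun b δ (mobius c a z)) (ball 0 1) :=
  contDiffOn_comp_holomorphicOn isOpen_ball (contDiffOn_peakFun hb hδ)
    (differentiableOn_mobius c ha) (mapsTo_mobius_ball hc ha)

lemma lap_peakFun_comp_mobius_nonneg (hb : ‖b‖ = 1) (hδ : 0 < δ) (hc : ‖c‖ = 1) (ha : ‖a‖ < 1)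
    (hz : z ∈ ball (0 : ℂ) 1) : 0 ≤ lap (fun z => peakFun b δ (mobius c a z)) z := by
  have hmz := mapsTo_mobius_ball hc ha hz
  rw [lap_comp_holomorphic ((differentiableOn_mobius c ha).analyticAt (isOpen_ball.mem_nhds hz))
    ((contDiffOn_peakFun hb hδ).contDiffAt (isOpen_ball.mem_nhds hmz))]
  exact mul_nonneg (normSq_nonneg _) (lap_peakFun_nonneg hb hδ hmz)

lemma IsPeakExhaustion.le_lelongJensenDensity_peakFun_mobius (hu : IsPeakExhaustion u)
    (hc : ‖c‖ = 1) (ha : ‖a‖ < 1) (hs : 0 < s) (hs2 : s ≤ 1 / 2) (hr : -(3 / 224) * s ^ 8 < r)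
    (hz : z ∈ peakBox s) :
    3 / 64 * 2 ^ (-(5 / 4) : ℝ) * (1 + 2 / (1 - ‖a‖) ^ 2) ^ (-(3 / 4) : ℝ) * (s ^ 13)⁻¹ ≤
      lelongJensenDensity u r (fun z => peakFun (mobius c a 1) (s ^ 8) (mobius c a z)) z := by
  have hb : ‖mobius c a 1‖ = 1 :=
    mem_sphere_zero_iff_norm.1 (mapsTo_mobius_sphere hc ha (by simp))
  obtain ⟨hzb, hur⟩ := hu.peakBox_subset_sublevel hs hs2 hr hz
  have hlapu := hu.le_lap_of_mem_peakBox hs hs2 hz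
  have hpeak := le_peakFun_mobius_of_mem_peakBox hc ha hs hs2 hz
  have hlap := lap_peakFun_comp_mobius_nonneg hb (pow_pos hs 8) hc ha hzb
  have hlap_pos := hu.lap_pos hzb
  have : 0 < 1 - ‖a‖ := sub_pos.2 ha
  set B : ℝ := (1 + 2 / (1 - ‖a‖) ^ 2) ^ (-(3 / 4) : ℝ)
  calc 3 / 64 * 2 ^ (-(5 / 4) : ℝ) * B * (s ^ 13)⁻¹
      = 3 / 16 * (2 ^ (-(5 / 4) : ℝ) * (s ^ 10)⁻¹) / 4 * (B * (s ^ 3)⁻¹) := by ring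
    _ ≤ lap u z / 4 * peakFun (mobius c a 1) (s ^ 8) (mobius c a z) := by gcongr
    _ ≤ _ := le_add_of_nonneg_right
      (div_nonneg (mul_nonneg (sub_nonneg.2 hur.le) hlap) zero_le_four)

/- The density is at least of order `s ^ (-13)` on a box of volume `2 s ^ 12`. -/
theorem IsMAFamily.exists_le_lintegral_peakFun_mobius (hu : IsPeakExhaustion u)
    (h : IsMAFamily u (ball 0 1) ν μ) (hc : ‖c‖ = 1) (ha : ‖a‖ < 1) :
    ∃ k > 0, ∀ s > 0, s ≤ 1 / 2 → ∀ r < 0, -(3 / 224) * s ^ 8 < r →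
      ENNReal.ofReal (k / s) ≤
        ∫⁻ z, ENNReal.ofReal (peakFun (mobius c a 1) (s ^ 8) (mobius c a z)) ∂μ r := by
  have hb : ‖mobius c a 1‖ = 1 :=
    mem_sphere_zero_iff_norm.1 (mapsTo_mobius_sphere hc ha (by simp))
  have : 0 < 1 - ‖a‖ := sub_pos.2 ha
  set B : ℝ := (1 + 2 / (1 - ‖a‖) ^ 2) ^ (-(3 / 4) : ℝ)
  refine ⟨3 / 32 * 2 ^ (-(5 / 4) : ℝ) * B, by positivity, fun s hs hs2 r hr hrs => ?_⟩
  have hs8 := pow_pos hs 8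
  rw [h.lintegral_eq hr (contDiffOn_peakFun_comp_mobius hb hs8 hc ha)
    (fun z _ => peakFun_nonneg _ _ _) fun z => lap_peakFun_comp_mobius_nonneg hb hs8 hc ha]
  calc ENNReal.ofReal (3 / 32 * 2 ^ (-(5 / 4) : ℝ) * B / s)
      = ∫⁻ _ in peakBox s, ENNReal.ofReal (3 / 64 * 2 ^ (-(5 / 4) : ℝ) * B * (s ^ 13)⁻¹) := by
        rw [setLIntegral_const, volume_peakBox s, ← ENNReal.ofReal_mul (by positivity)]
        congr 1
        field_simp
        ring
    _ ≤ ∫⁻ z in peakBox s, ENNReal.ofReal (lelongJensenDensity u r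
          (fun z => peakFun (mobius c a 1) (s ^ 8) (mobius c a z)) z) :=
        setLIntegral_mono' (measurableSet_peakBox s) fun z hz => ENNReal.ofReal_le_ofReal
          (hu.le_lelongJensenDensity_peakFun_mobius hc ha hs hs2 hrs hz)
    _ ≤ _ := lintegral_mono_set (hu.peakBox_subset_sublevel hs hs2 hrs)

lemma IsMAFamily.psNormPow_eq_limsup {Ω : Set ℂ} {f : ℂ → ℂ} {V : ℂ → ℝ}
    (h : IsMAFamily u Ω ν μ) (hf : ∀ z ∈ Ω, ‖f z‖ ^ p = V z) :
    psNormPow p μ f = limsup (fun r => ∫⁻ z, ENNReal.ofReal (V z) ∂μ r) (𝓝[<] 0) := by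
  refine limsup_congr (eventually_mem_nhdsWithin.mono fun r hr => lintegral_congr_ae ?_)
  have ae_mem : ∀ᵐ z ∂μ r, z ∈ Ω := h.measure_compl hr
  exact ae_mem.mono fun z hz => congrArg ENNReal.ofReal (hf z hz)

lemma exists_psNormPow_comp_le_of_boundedCompOp {φ : ℂ → ℂ} (hp : 0 < p)
    (hφ : BoundedCompOp p μ φ) :
    ∃ M : ℝ≥0∞, M < ⊤ ∧ ∀ f, MemPS p (ball 0 1) μ f →
      psNormPow p μ (f ∘ φ) ≤ M * psNormPow p μ f := by
  obtain ⟨M, -, hM⟩ := hφ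
  refine ⟨ENNReal.ofReal M ^ p, ENNReal.rpow_lt_top_of_nonneg hp.le ENNReal.ofReal_ne_top,
    fun f hf => ?_⟩
  have h := ENNReal.rpow_le_rpow (hM f hf).2 hp.le
  simpa only [psNorm, ENNReal.mul_rpow_of_nonneg _ _ hp.le, ← ENNReal.rpow_mul,
    one_div_mul_cancel hp.ne', ENNReal.rpow_one] using h

lemma not_forall_ofReal_div_le {k : ℝ} {D : ℝ≥0∞} (hk : 0 < k) (hD : D < ⊤) :
    ¬∀ s > 0, s ≤ 1 / 2 → ENNReal.ofReal (k / s) ≤ D := by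
  intro hle
  have hblowup : Tendsto (fun s : ℝ => k / s) (𝓝[>] 0) atTop :=
    tendsto_inv_nhdsGT_zero.const_mul_atTop hk
  obtain ⟨s, hks, hs, hs2⟩ := ((hblowup.eventually_gt_atTop D.toReal).and
    (eventually_mem_nhdsWithin.and (mem_nhdsWithin_of_mem_nhds
      (Iic_mem_nhds (one_half_pos (α := ℝ)))))).exists
  exact hks.not_ge ((ENNReal.ofReal_le_iff_le_toReal hD.ne).1 (hle s hs hs2))

theorem IsMAFamily.mobius_one_eq_one_of_boundedCompOp (hu : IsPeakExhaustion u)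
    (h : IsMAFamily u (ball 0 1) ν μ) (hc : ‖c‖ = 1) (ha : ‖a‖ < 1) (hp : 0 < p)
    (hφ : BoundedCompOp p μ (mobius c a)) : mobius c a 1 = 1 := by
  by_contra hb1
  have hb : ‖mobius c a 1‖ = 1 :=
    mem_sphere_zero_iff_norm.1 (mapsTo_mobius_sphere hc ha (by simp))
  obtain ⟨C, hC, hle⟩ := h.exists_lintegral_peakFun_le hu hb hb1
  obtain ⟨M, hM, hcomp⟩ := exists_psNormPow_comp_le_of_boundedCompOp hp hφ
  obtain ⟨k, hk, hge⟩ := h.exists_le_lintegral_peakFun_mobius hu hc ha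
  have hbound (s : ℝ) (hs : 0 < s) (hs2 : s ≤ 1 / 2) : ENNReal.ofReal (k / s) ≤ M * C := by
    obtain ⟨f, hf, hfV⟩ := exists_norm_rpow_eq_peakFun hb (pow_pos hs 8) hp
    have hfC : psNormPow p μ f ≤ C := by
      rw [h.psNormPow_eq_limsup hfV]
      exact limsup_le_of_le (by isBoundedDefault)
        (eventually_mem_nhdsWithin.mono fun r hr => hle _ (pow_pos hs 8) r hr)
    calc ENNReal.ofReal (k / s) ≤ psNormPow p μ (f ∘ mobius c a) := by
          rw [h.psNormPow_eq_limsup (f := f ∘ mobius c a)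
            fun z hz => hfV _ (mapsTo_mobius_ball hc ha hz)]
          refine le_limsup_of_frequently_le (Eventually.frequently ?_) (by isBoundedDefault)
          filter_upwards [eventually_mem_nhdsWithin, mem_nhdsWithin_of_mem_nhds
            (Ioi_mem_nhds (show -(3 / 224) * s ^ 8 < 0 by linarith [pow_pos hs 8]))] with r hr hrs
          exact hge s hs hs2 r hr hrs
      _ ≤ M * psNormPow p μ f := hcomp f ⟨hf, hfC.trans_lt hC⟩
      _ ≤ M * C := mul_le_mul_right hfC M
  exact not_forall_ofReal_div_le hk (ENNReal.mul_lt_top hM hC) hbound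

end PeakFunctions

section CircleApproximation

lemma exists_eq_add_conj_of_mem_span_fourier {T : ℝ} {h : C(AddCircle T, ℂ)}
    (hh : h ∈ Submodule.span ℂ (range (fourier (T := T)))) :
    ∃ P Q : ℂ → ℂ, Differentiable ℂ P ∧ Differentiable ℂ Q ∧
      ∀ x : AddCircle T, h x = P x.toCircle + (starRingEnd ℂ) (Q x.toCircle) := by
  induction hh using Submodule.span_induction with
  | mem h hh =>
    obtain ⟨n, rfl⟩ := hh
    obtain ⟨m, rfl | rfl⟩ := n.eq_nat_or_neg
    · refine ⟨fun z => z ^ m, fun _ => 0, by fun_prop, by fun_prop, fun x => ?_⟩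
      rw [fourier_apply, AddCircle.toCircle_zsmul]
      simp
    · refine ⟨fun _ => 0, fun z => z ^ m, by fun_prop, by fun_prop, fun x => ?_⟩
      rw [fourier_apply, AddCircle.toCircle_zsmul, zpow_neg, Circle.coe_inv_eq_conj]
      simp
  | zero => exact ⟨fun _ => 0, fun _ => 0, by fun_prop, by fun_prop, fun x => by simp⟩
  | add h₁ h₂ _ _ ih₁ ih₂ =>
    obtain ⟨P₁, Q₁, hP₁, hQ₁, heq₁⟩ := ih₁
    obtain ⟨P₂, Q₂, hP₂, hQ₂, heq₂⟩ := ih₂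
    refine ⟨fun z => P₁ z + P₂ z, fun z => Q₁ z + Q₂ z, by fun_prop, by fun_prop, fun x => ?_⟩
    rw [ContinuousMap.add_apply, heq₁, heq₂, map_add]
    ring
  | smul k h _ ih =>
    obtain ⟨P, Q, hP, hQ, heq⟩ := ih
    refine ⟨fun z => k * P z, fun z => (starRingEnd ℂ) k * Q z, by fun_prop, by fun_prop,
      fun x => ?_⟩
    rw [ContinuousMap.smul_apply, heq, map_mul, conj_conj, smul_eq_mul]
    ring

lemma exists_differentiable_abs_re_sub_le {g : ℂ → ℝ} {ε : ℝ}
    (hg : ContinuousOn g (sphere 0 1)) (hε : 0 < ε) :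
    ∃ F : ℂ → ℂ, Differentiable ℂ F ∧ ∀ z ∈ sphere (0 : ℂ) 1, |(F z).re - g z| ≤ ε := by
  have : Fact (0 < 2 * π) := ⟨Real.two_pi_pos⟩
  have hcont : Continuous fun x : AddCircle (2 * π) => g x.toCircle :=
    hg.comp_continuous (continuous_subtype_val.comp AddCircle.continuous_toCircle) fun x =>
      mem_sphere_zero_iff_norm.2 (Circle.norm_coe _)
  set G : C(AddCircle (2 * π), ℂ) := ⟨fun x => g x.toCircle, continuous_ofReal.comp hcont⟩
  have hdense : G ∈ closure (Submodule.span ℂ (range (fourier (T := 2 * π))) :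
      Set C(AddCircle (2 * π), ℂ)) := by
    rw [← Submodule.topologicalClosure_coe, span_fourier_closure_eq_top]
    trivial
  obtain ⟨h, hh, hdist⟩ := Metric.mem_closure_iff.1 hdense ε hε
  obtain ⟨P, Q, hP, hQ, hPQ⟩ := exists_eq_add_conj_of_mem_span_fourier hh
  refine ⟨fun z => P z + Q z, by fun_prop, fun z hz => ?_⟩
  obtain ⟨x, hx⟩ := (AddCircle.homeomorphCircle Real.two_pi_pos.ne').surjective ⟨z, hz⟩
  rw [AddCircle.homeomorphCircle_apply] at hx
  have hnorm := (ContinuousMap.dist_apply_le_dist (f := G) (g := h) x).trans hdist.le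
  have hG : G x = (g x.toCircle : ℂ) := rfl
  rw [dist_eq_norm, hPQ, hG, hx] at hnorm
  rw [abs_sub_comm]
  simpa only [sub_re, add_re, ofReal_re, conj_re] using (abs_re_le_norm _).trans hnorm

lemma exists_differentiable_le_re_le {g : ℂ → ℝ} {ε : ℝ} (hg : ContinuousOn g (sphere 0 1))
    (hε : 0 < ε) :
    ∃ F : ℂ → ℂ, Differentiable ℂ F ∧
      ∀ z ∈ sphere (0 : ℂ) 1, g z ≤ (F z).re ∧ (F z).re ≤ g z + ε := by
  obtain ⟨F, hF, hFg⟩ := exists_differentiable_abs_re_sub_le hg (half_pos hε)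
  refine ⟨fun z => F z + (ε / 2 : ℝ), hF.add_const _, fun z hz => ?_⟩
  have habs := abs_le.1 (hFg z hz)
  rw [add_re, ofReal_re]
  constructor <;> linarith

end CircleApproximation

section BoundaryMeasure

variable {u g V : ℂ → ℝ} {Ω K : Set ℂ} {f F : ℂ → ℂ} {C r s ε : ℝ} {ν m μb : Measure ℂ}
  {μ : ℝ → Measure ℂ}

lemma integrable_of_continuousOn_of_isCompact [IsFiniteMeasure m] (hK : IsCompact K)
    (hmK : m Kᶜ = 0) (hg : ContinuousOn g K) : Integrable g m := by
  rw [← Measure.restrict_eq_self_of_ae_mem (s := K) hmK]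
  exact hg.integrableOn_compact hK

lemma re_nonneg_of_frontier (hΩ : IsOpen Ω) (hb : Bornology.IsBounded Ω)
    (hF : DiffContOnCl ℂ F Ω) (hfr : ∀ z ∈ frontier Ω, 0 ≤ (F z).re) :
    ∀ z ∈ closure Ω, 0 ≤ (F z).re := by
  intro z hz
  rw [closure_eq_self_union_frontier] at hz
  refine hz.elim (fun hz => ?_) (hfr z)
  have hneg : (-F z).re ≤ 0 := nonpos_of_lap_nonneg_of_frontier (v := fun z => (-F z).re) hΩ hb
    (continuous_re.comp_continuousOn hF.neg.continuousOn)
    (contDiffOn_comp_holomorphicOn hΩ contDiff_re.contDiffOn hF.neg.differentiableOn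
      (mapsTo_univ _ _))
    (fun z hz => (lap_re_comp_holomorphic
      (hF.neg.differentiableOn.analyticAt (hΩ.mem_nhds hz))).ge)
    (fun z hz => neg_nonpos.2 (hfr z hz)) hz
  exact neg_nonpos.1 hneg

namespace IsMAFamily

lemma measureReal_univ (h : IsMAFamily u Ω ν μ) (hr : r < 0) :
    (μ r).real univ = ∫ z in {z | z ∈ Ω ∧ u z < r}, lap u z / 4 := by
  have heq := (h.integrable_and_integral_eq hr (v := fun _ => 1) contDiffOn_const).2
  simpa [lelongJensenDensity, lap] using heq

lemma measureReal_univ_mono (h : IsMAFamily u Ω ν μ) (hr : r < 0) (hsr : s ≤ r) :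
    (μ s).real univ ≤ (μ r).real univ := by
  have hu := h.isStrictExhaustion
  rw [h.measureReal_univ hr, h.measureReal_univ (hsr.trans_lt hr)]
  refine setIntegral_mono_set ((hu.integrableOn_lap.mono_set fun _ hz => hz.1).div_const 4) ?_
    (LE.le.eventuallyLE fun z hz => ⟨hz.1, hz.2.trans_le hsr⟩)
  filter_upwards [ae_restrict_mem (hu.isOpen_sublevel r).measurableSet] with z hz
    using div_nonneg (hu.lap_pos z hz.1).le zero_le_four

lemma measureReal_univ_pos (h : IsMAFamily u Ω ν μ) (hr : r < 0)
    (hne : {z | z ∈ Ω ∧ u z < r}.Nonempty) : 0 < (μ r).real univ := by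
  have hu := h.isStrictExhaustion
  have hpos : ∀ z ∈ {z | z ∈ Ω ∧ u z < r}, 0 < lap u z / 4 := fun z hz =>
    div_pos (hu.lap_pos z hz.1) zero_lt_four
  rw [h.measureReal_univ hr, setIntegral_pos_iff_support_of_nonneg_ae _
    ((hu.integrableOn_lap.mono_set fun _ hz => hz.1).div_const 4)]
  · exact ((hu.isOpen_sublevel r).measure_pos volume hne).trans_le
      (measure_mono fun z hz => ⟨(hpos z hz).ne', hz⟩)
  · filter_upwards [ae_restrict_mem (hu.isOpen_sublevel r).measurableSet] with z hz
      using (hpos z hz).le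

/- An infinite `μb` would integrate the constant `1` to the junk value `0`, whereas the masses of
`μ r` increase with `r`. -/
lemma isFiniteMeasure_boundary (h : IsMAFamily u Ω ν μ) (hμb : IsBoundaryMA μ μb)
    (hne : {z | z ∈ Ω ∧ u z < 0}.Nonempty) : IsFiniteMeasure μb := by
  by_contra hinf
  have htop : μb univ = ⊤ := not_lt_top_iff.1 fun hlt => hinf ⟨hlt⟩
  have hlim : Tendsto (fun r => (μ r).real univ) (𝓝[<] 0) (𝓝 0) := by
    simpa [measureReal_def, htop] using hμb (fun _ => 1) continuous_const
  obtain ⟨z₀, hz₀, hneg⟩ := hne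
  have hr₀ : u z₀ / 2 < 0 := by linarith
  refine (h.measureReal_univ_pos hr₀ ⟨z₀, hz₀, by linarith⟩).not_ge (ge_of_tendsto hlim ?_)
  filter_upwards [eventually_mem_nhdsWithin, mem_nhdsWithin_of_mem_nhds (Ioi_mem_nhds hr₀)]
    with r hr hr₀r using h.measureReal_univ_mono hr (mem_Ioi.1 hr₀r).le

lemma tendsto_integral_of_continuousOn (h : IsMAFamily u Ω ν μ) (hμb : IsBoundaryMA μ μb)
    (hK : IsClosed K) (hΩK : Ω ⊆ K) (hμbK : μb Kᶜ = 0) (hg : ContinuousOn g K) :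
    Tendsto (fun r => ∫ z, g z ∂μ r) (𝓝[<] 0) (𝓝 (∫ z, g z ∂μb)) := by
  obtain ⟨G, hG⟩ := ContinuousMap.exists_restrict_eq hK ⟨K.domRestrict g, hg.domRestrict⟩
  have heq : EqOn G g K := fun z hz => DFunLike.congr_fun hG ⟨z, hz⟩
  have hμbmem : ∀ᵐ z ∂μb, z ∈ K := hμbK
  rw [← integral_congr_ae (hμbmem.mono heq)]
  refine (hμb G G.continuous).congr' ?_
  filter_upwards [eventually_mem_nhdsWithin] with r hr
  have hμmem : ∀ᵐ z ∂μ r, z ∈ Ω := h.measure_compl hr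
  exact integral_congr_ae (hμmem.mono fun z hz => heq (hΩK hz))

lemma tendsto_lintegral_of_continuousOn [IsFiniteMeasure μb] (h : IsMAFamily u Ω ν μ)
    (hμb : IsBoundaryMA μ μb) (hK : IsCompact K) (hΩK : Ω ⊆ K) (hμbK : μb Kᶜ = 0)
    (hg : ContinuousOn g K) (hg0 : ∀ z ∈ K, 0 ≤ g z) :
    Tendsto (fun r => ∫⁻ z, ENNReal.ofReal (g z) ∂μ r) (𝓝[<] 0)
      (𝓝 (∫⁻ z, ENNReal.ofReal (g z) ∂μb)) := by
  have lintegral_eq_ofReal {m : Measure ℂ} [IsFiniteMeasure m] (hm : m Kᶜ = 0) :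
      ENNReal.ofReal (∫ z, g z ∂m) = ∫⁻ z, ENNReal.ofReal (g z) ∂m :=
    have hmem : ∀ᵐ z ∂m, z ∈ K := hm
    ofReal_integral_eq_lintegral_ofReal (integrable_of_continuousOn_of_isCompact hK hm hg)
      (hmem.mono hg0)
  rw [← lintegral_eq_ofReal hμbK]
  refine (ENNReal.tendsto_ofReal (h.tendsto_integral_of_continuousOn hμb hK.isClosed hΩK hμbK
    hg)).congr' ?_
  filter_upwards [eventually_mem_nhdsWithin] with r hr
  have := h.isFiniteMeasure hr
  exact lintegral_eq_ofReal (measure_mono_null (compl_subset_compl.2 hΩK) (h.measure_compl hr))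

end IsMAFamily

namespace IsQuasiInvariant

lemma lintegral_comp_le_boundary [IsFiniteMeasure μb] (hf : IsQuasiInvariant u Ω f C)
    (h : IsMAFamily u Ω ν μ) (hμb : IsBoundaryMA μ μb) (hK : IsCompact K) (hΩK : Ω ⊆ K)
    (hμbK : μb Kᶜ = 0) (hfK : ContinuousOn f K) (hmaps : MapsTo f K K)
    (hVK : ContinuousOn V K) (hV : ContDiffOn ℝ 2 V Ω) (hV0 : ∀ z ∈ K, 0 ≤ V z)
    (hlap : ∀ z ∈ Ω, 0 ≤ lap V z) :
    ∫⁻ z, ENNReal.ofReal (V (f z)) ∂μb ≤ ENNReal.ofReal C * ∫⁻ z, ENNReal.ofReal (V z) ∂μb := by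
  have hlim := h.tendsto_lintegral_of_continuousOn hμb hK hΩK hμbK hVK hV0
  have hlim_comp := h.tendsto_lintegral_of_continuousOn hμb hK hΩK hμbK (hVK.comp hfK hmaps)
    fun z hz => hV0 _ (hmaps hz)
  refine le_of_tendsto_of_tendsto hlim_comp
    (ENNReal.Tendsto.const_mul (hlim.comp hf.tendsto_div) (Or.inr ENNReal.ofReal_ne_top)) ?_
  filter_upwards [eventually_mem_nhdsWithin] with r hr
    using hf.lintegral_comp_le h hr hV (fun z hz => hV0 z (hΩK hz)) hlap

lemma lintegral_re_comp_le [IsFiniteMeasure μb] (hf : IsQuasiInvariant u Ω f C)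
    (h : IsMAFamily u Ω ν μ) (hμb : IsBoundaryMA μ μb) (hb : Bornology.IsBounded Ω)
    (hμbΩ : μb (closure Ω)ᶜ = 0) (hfc : ContinuousOn f (closure Ω))
    (hmaps : MapsTo f (closure Ω) (closure Ω)) (hF : DiffContOnCl ℂ F Ω)
    (hF0 : ∀ z ∈ frontier Ω, 0 ≤ (F z).re) :
    ∫⁻ z, ENNReal.ofReal (F (f z)).re ∂μb ≤
      ENNReal.ofReal C * ∫⁻ z, ENNReal.ofReal (F z).re ∂μb :=
  have hΩ := h.isStrictExhaustion.isOpen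
  hf.lintegral_comp_le_boundary (V := fun z => (F z).re) h hμb hb.isCompact_closure
    subset_closure hμbΩ hfc hmaps (continuous_re.comp_continuousOn hF.continuousOn)
    (contDiffOn_comp_holomorphicOn hΩ contDiff_re.contDiffOn hF.differentiableOn
      (mapsTo_univ _ _))
    (re_nonneg_of_frontier hΩ hb hF hF0)
    fun _ hz => (lap_re_comp_holomorphic (hF.differentiableOn.analyticAt (hΩ.mem_nhds hz))).ge

lemma lintegral_comp_le_mul_add [IsFiniteMeasure μb]
    (hf : IsQuasiInvariant u (ball 0 1) f C) (h : IsMAFamily u (ball 0 1) ν μ)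
    (hμb : IsBoundaryMA μ μb) (hμbS : μb (sphere 0 1)ᶜ = 0)
    (hfc : ContinuousOn f (closedBall 0 1)) (hmaps : MapsTo f (sphere 0 1) (sphere 0 1))
    (hg : ContinuousOn g (sphere 0 1)) (hg0 : ∀ z ∈ sphere (0 : ℂ) 1, 0 ≤ g z) (hε : 0 < ε) :
    ∫⁻ z, ENNReal.ofReal (g (f z)) ∂μb ≤
      ENNReal.ofReal C * (∫⁻ z, ENNReal.ofReal (g z) ∂μb + ENNReal.ofReal ε * μb univ) := by
  have hmem : ∀ᵐ z ∂μb, z ∈ sphere (0 : ℂ) 1 := hμbS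
  have hclosure : closure (ball (0 : ℂ) 1) = closedBall 0 1 := closure_ball _ one_ne_zero
  have hmaps' : MapsTo f (closedBall 0 1) (closedBall 0 1) := by
    rw [← ball_union_sphere]
    exact hf.mapsTo.union_union hmaps
  obtain ⟨F, hF, hFg⟩ := exists_differentiable_le_re_le hg hε
  calc ∫⁻ z, ENNReal.ofReal (g (f z)) ∂μb
      ≤ ∫⁻ z, ENNReal.ofReal (F (f z)).re ∂μb := lintegral_mono_ae <|
        hmem.mono fun z hz => ENNReal.ofReal_le_ofReal (hFg _ (hmaps hz)).1
    _ ≤ ENNReal.ofReal C * ∫⁻ z, ENNReal.ofReal (F z).re ∂μb :=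
        hf.lintegral_re_comp_le h hμb isBounded_ball
          (measure_mono_null (compl_subset_compl.2 (hclosure ▸ sphere_subset_closedBall)) hμbS)
          (hclosure ▸ hfc) (hclosure ▸ hmaps') hF.diffContOnCl fun z hz =>
            have hz := frontier_ball (0 : ℂ) one_ne_zero ▸ hz
            (hg0 z hz).trans (hFg z hz).1
    _ ≤ ENNReal.ofReal C * ∫⁻ z, (ENNReal.ofReal (g z) + ENNReal.ofReal ε) ∂μb := by
        refine mul_le_mul_right (lintegral_mono_ae (hmem.mono fun z hz => ?_)) _
        exact (ENNReal.ofReal_le_ofReal (hFg z hz).2).trans ENNReal.ofReal_add_le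
    _ = _ := by rw [lintegral_add_right _ measurable_const, lintegral_const]

lemma lintegral_comp_le_of_continuousOn_sphere [IsFiniteMeasure μb]
    (hf : IsQuasiInvariant u (ball 0 1) f C) (h : IsMAFamily u (ball 0 1) ν μ)
    (hμb : IsBoundaryMA μ μb) (hμbS : μb (sphere 0 1)ᶜ = 0)
    (hfc : ContinuousOn f (closedBall 0 1)) (hmaps : MapsTo f (sphere 0 1) (sphere 0 1))
    (hg : ContinuousOn g (sphere 0 1)) (hg0 : ∀ z ∈ sphere (0 : ℂ) 1, 0 ≤ g z) :
    ∫⁻ z, ENNReal.ofReal (g (f z)) ∂μb ≤ ENNReal.ofReal C * ∫⁻ z, ENNReal.ofReal (g z) ∂μb := by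
  have hε : Tendsto ENNReal.ofReal (𝓝[>] 0) (𝓝 0) := by
    simpa using (ENNReal.continuous_ofReal.tendsto 0).mono_left nhdsWithin_le_nhds
  have hlim : Tendsto (fun ε : ℝ => ENNReal.ofReal C *
      (∫⁻ z, ENNReal.ofReal (g z) ∂μb + ENNReal.ofReal ε * μb univ)) (𝓝[>] 0)
      (𝓝 (ENNReal.ofReal C * (∫⁻ z, ENNReal.ofReal (g z) ∂μb + 0 * μb univ))) :=
    ENNReal.Tendsto.const_mul (tendsto_const_nhds.add
      (ENNReal.Tendsto.mul_const hε (Or.inr (measure_ne_top _ _)))) (Or.inr ENNReal.ofReal_ne_top)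
  rw [zero_mul, add_zero] at hlim
  exact ge_of_tendsto hlim <| eventually_mem_nhdsWithin.mono fun _ hε =>
    hf.lintegral_comp_le_mul_add h hμb hμbS hfc hmaps hg hg0 hε

theorem map_boundary_le [IsFiniteMeasure μb] (hf : IsQuasiInvariant u (ball 0 1) f C)
    (h : IsMAFamily u (ball 0 1) ν μ) (hμb : IsBoundaryMA μ μb) (hμbS : μb (sphere 0 1)ᶜ = 0)
    (hfc : ContinuousOn f (closedBall 0 1)) (hmaps : MapsTo f (sphere 0 1) (sphere 0 1)) :
    μb.map f ≤ ENNReal.ofReal C • μb := by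
  have hfm : AEMeasurable f μb := by
    rw [← Measure.restrict_eq_self_of_ae_mem (s := sphere (0 : ℂ) 1) hμbS]
    exact (hfc.mono sphere_subset_closedBall).aemeasurable isClosed_sphere.measurableSet
  refine measure_le_of_forall_isTestFun isOpen_univ (by simp)
    (fun K _ _ => ENNReal.mul_lt_top ENNReal.ofReal_lt_top (measure_lt_top μb K))
    fun ψ hψ hψ0 => ?_
  have hψc := hψ.contDiff.continuous
  rw [lintegral_map' hψc.measurable.ennreal_ofReal.aemeasurable hfm, lintegral_smul_measure]
  exact hf.lintegral_comp_le_of_continuousOn_sphere h hμb hμbS hfc hmaps hψc.continuousOn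
    fun z _ => hψ0 z

end IsQuasiInvariant

theorem IsMAFamily.mobius_one_eq_one_of_map_le [IsFiniteMeasure μb] {c a : ℂ} {M : ℝ}
    (hu : IsPeakExhaustion u) (h : IsMAFamily u (ball 0 1) ν μ) (hμb : IsBoundaryMA μ μb)
    (hμbS : μb (sphere 0 1)ᶜ = 0) (hc : ‖c‖ = 1) (ha : ‖a‖ < 1)
    (hM : μb.map (mobius c a) ≤ ENNReal.ofReal M • μb) : mobius c a 1 = 1 := by
  set b := mobius c a 1
  have hb : ‖b‖ = 1 := mem_sphere_zero_iff_norm.1 (mapsTo_mobius_sphere hc ha (by simp))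
  have hμbK : μb (closedBall 0 1)ᶜ = 0 :=
    measure_mono_null (compl_subset_compl.2 sphere_subset_closedBall) hμbS
  have hlim {g : ℂ → ℝ} := h.tendsto_lintegral_of_continuousOn (g := g) hμb
    (isCompact_closedBall 0 1) ball_subset_closedBall hμbK
  by_contra hb1
  obtain ⟨C, hC, upper⟩ := h.exists_lintegral_peakFun_le hu hb hb1
  obtain ⟨k, hk, lower⟩ := h.exists_le_lintegral_peakFun_mobius hu hc ha
  refine not_forall_ofReal_div_le hk
    (ENNReal.mul_lt_top (a := ENNReal.ofReal M) ENNReal.ofReal_lt_top hC)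
    fun s hs hs2 => ?_
  have hs8 : 0 < s ^ 8 := pow_pos hs 8
  have hcont := continuousOn_peakFun hb hs8
  calc ENNReal.ofReal (k / s)
      ≤ ∫⁻ z, ENNReal.ofReal (peakFun b (s ^ 8) (mobius c a z)) ∂μb := by
        refine ge_of_tendsto (hlim (hcont.comp (continuousOn_mobius c ha)
          (mapsTo_mobius_closedBall hc ha)) fun z _ => peakFun_nonneg _ _ _) ?_
        filter_upwards [eventually_mem_nhdsWithin, mem_nhdsWithin_of_mem_nhds
          (Ioi_mem_nhds (show -(3 / 224) * s ^ 8 < 0 by linarith))] with r hr hr'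
          using lower s hs hs2 r hr hr'
    _ = ∫⁻ w, ENNReal.ofReal (peakFun b (s ^ 8) w) ∂μb.map (mobius c a) :=
        (lintegral_map (measurable_peakFun b _).ennreal_ofReal (measurable_mobius c a)).symm
    _ ≤ ENNReal.ofReal M * ∫⁻ w, ENNReal.ofReal (peakFun b (s ^ 8) w) ∂μb :=
        (lintegral_mono' hM le_rfl).trans_eq (lintegral_smul_measure _ _)
    _ ≤ ENNReal.ofReal M * C := by
        refine mul_le_mul_right (le_of_tendsto (hlim hcont fun z _ => peakFun_nonneg _ _ _) ?_) _
        filter_upwards [eventually_mem_nhdsWithin] with r hr using upper _ hs8 r hr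

end BoundaryMeasure

section ChangeOfVariables

variable {X Y : Type*} {S : Set X} {f g : X → X} {C : ℝ≥0∞}

lemma hausdorffMeasure_restrict_le_smul_map [EMetricSpace X] [MeasurableSpace X] [BorelSpace X]
    [EMetricSpace Y] [MeasurableSpace Y] [BorelSpace Y] {T : Set Y} {f : X → Y} {L : NNReal}
    {d : ℝ} (hd : 0 ≤ d) (hf : Measurable f) (hsurj : SurjOn f S T) (hlip : LipschitzOnWith L f S) :
    (μH[d] : Measure Y).restrict T ≤ (L : ℝ≥0∞) ^ d • ((μH[d] : Measure X).restrict S).map f := by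
  refine Measure.le_iff.2 fun E hE => ?_
  rw [Measure.smul_apply, Measure.map_apply hf hE, Measure.restrict_apply hE,
    Measure.restrict_apply (hf hE), smul_eq_mul]
  have hsub : E ∩ T ⊆ f '' (f ⁻¹' E ∩ S) := by
    rintro y ⟨hyE, hyT⟩
    obtain ⟨x, hxS, rfl⟩ := hsurj hyT
    exact ⟨x, ⟨hyE, hxS⟩, rfl⟩
  exact (measure_mono hsub).trans
    ((hlip.mono inter_subset_right).hausdorffMeasure_image_le hd)

variable [MeasurableSpace X] {σ : Measure X} {E : Set X} {K : ℝ≥0∞}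

lemma setLIntegral_comp_le_of_le_map (hf : Measurable f) (hgf : ∀ᵐ x ∂σ, g (f x) = x)
    (hσ : σ ≤ C • σ.map f) (hE : MeasurableSet E) (B : X → ℝ≥0∞) :
    ∫⁻ x in E, B (g x) ∂σ ≤ C * ∫⁻ x in f ⁻¹' E, B x ∂σ := by
  obtain ⟨B', hB', hle, heq⟩ := exists_measurable_le_lintegral_eq (σ.restrict E) fun x => B (g x)
  calc ∫⁻ x in E, B (g x) ∂σ = ∫⁻ x in E, B' x ∂σ := heq
    _ ≤ ∫⁻ x in E, B' x ∂(C • σ.map f) :=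
        lintegral_mono' (Measure.restrict_mono_measure hσ E) le_rfl
    _ = C * ∫⁻ x in f ⁻¹' E, B' (f x) ∂σ := by
        rw [Measure.restrict_smul, lintegral_smul_measure, setLIntegral_map hE hB' hf, smul_eq_mul]
    _ ≤ C * ∫⁻ x in f ⁻¹' E, B x ∂σ := by
        refine mul_le_mul_right (lintegral_mono_ae ?_) _
        filter_upwards [ae_restrict_of_ae hgf] with x hx
        exact (hle (f x)).trans_eq (congrArg B hx)

variable {β : X → ℝ≥0∞}

lemma setLIntegral_comp_le_of_map_withDensity_le (hf : Measurable f)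
    (hgf : ∀ᵐ x ∂σ, g (f x) = x) (hσ : σ ≤ C • σ.map f)
    (hK : (σ.withDensity β).map f ≤ K • σ.withDensity β) (hE : MeasurableSet E) :
    ∫⁻ x in E, β (g x) ∂σ ≤ C * K * ∫⁻ x in E, β x ∂σ := by
  have hKE := Measure.le_iff.1 hK E hE
  rw [Measure.map_apply hf hE, Measure.smul_apply, withDensity_apply _ (hf hE),
    withDensity_apply _ hE, smul_eq_mul] at hKE
  rw [mul_assoc]
  exact (setLIntegral_comp_le_of_le_map hf hgf hσ hE β).trans (mul_le_mul_right hKE C)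

lemma map_withDensity_le_of_setLIntegral_comp_le (hS : MeasurableSet S) (hσS : ∀ᵐ x ∂σ, x ∈ S)
    (hf : Measurable f) (hg : Measurable g) (hgf : ∀ᵐ x ∂σ, g (f x) = x)
    (hfg : ∀ᵐ x ∂σ, f (g x) = x) (hσ : σ ≤ C • σ.map g)
    (hK : ∀ E ⊆ S, MeasurableSet E → ∫⁻ x in E, β (g x) ∂σ ≤ K * ∫⁻ x in E, β x ∂σ) :
    (σ.withDensity β).map f ≤ (C * K) • σ.withDensity β := by
  refine Measure.le_iff.2 fun E hE => ?_
  have preimage_ae_eq : g ⁻¹' (f ⁻¹' E) =ᵐ[σ] (E ∩ S : Set X) := by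
    filter_upwards [hσS, hfg] with x hxS hx
    refine propext ⟨fun h => ⟨hx ▸ h, hxS⟩, fun h => ?_⟩
    exact mem_preimage.2 (mem_preimage.2 (hx.symm ▸ h.1))
  rw [Measure.map_apply hf hE, Measure.smul_apply, withDensity_apply _ (hf hE),
    withDensity_apply _ hE, smul_eq_mul]
  calc ∫⁻ x in f ⁻¹' E, β x ∂σ = ∫⁻ x in f ⁻¹' E, β (g (f x)) ∂σ :=
        lintegral_congr_ae (ae_restrict_of_ae (hgf.mono fun x hx => (congrArg β hx).symm))
    _ ≤ C * ∫⁻ x in g ⁻¹' (f ⁻¹' E), β (g x) ∂σ :=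
        setLIntegral_comp_le_of_le_map hg hfg hσ (hf hE) fun x => β (g x)
    _ = C * ∫⁻ x in E ∩ S, β (g x) ∂σ := by rw [setLIntegral_congr preimage_ae_eq]
    _ ≤ C * (K * ∫⁻ x in E, β x ∂σ) := mul_le_mul_right
        ((hK _ inter_subset_right (hE.inter hS)).trans
          (mul_le_mul_right (lintegral_mono_set inter_subset_left) K)) C
    _ = C * K * ∫⁻ x in E, β x ∂σ := (mul_assoc _ _ _).symm

end ChangeOfVariables

section ArcLength

variable {c a : ℂ} {ψ : ℂ → ℂ} {β : ℂ → ℝ≥0∞}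

lemma arcLen_ball : arcLen (ball 0 1) = (μH[1] : Measure ℂ).restrict (sphere 0 1) := by
  rw [arcLen, frontier_ball _ one_ne_zero]

lemma ae_mem_sphere_arcLen : ∀ᵐ z ∂arcLen (ball 0 1), z ∈ sphere (0 : ℂ) 1 := by
  rw [arcLen_ball]
  exact ae_restrict_mem isClosed_sphere.measurableSet

lemma arcLen_le_smul_map_mobius (hc : ‖c‖ = 1) (ha : ‖a‖ < 1) :
    arcLen (ball 0 1) ≤
      ENNReal.ofReal (1 / (1 - ‖a‖) ^ 2) • (arcLen (ball 0 1)).map (mobius c a) := by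
  have hsurj : SurjOn (mobius c a) (sphere 0 1) (sphere 0 1) := fun z hz =>
    ⟨_, mapsTo_mobius_sphere ((norm_conj c).trans hc) (by rwa [norm_neg, norm_mul, hc, one_mul]) hz,
      mobius_mobius_conj_neg_mul hc ha (mem_sphere_zero_iff_norm.1 hz).le⟩
  have hle := hausdorffMeasure_restrict_le_smul_map zero_le_one (measurable_mobius c a) hsurj
    ((lipschitzOnWith_mobius hc ha).mono sphere_subset_closedBall)
  rwa [ENNReal.rpow_one, ← arcLen_ball] at hle

theorem exists_setLIntegral_leftInv_mobius_le_iff (hc : ‖c‖ = 1) (ha : ‖a‖ < 1)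
    (hψ : LeftInvOn ψ (mobius c a) (sphere 0 1)) :
    (∃ K : ℝ, 0 < K ∧ ∀ E ⊆ sphere (0 : ℂ) 1, MeasurableSet E →
      ∫⁻ η in E, β (ψ η) ∂arcLen (ball 0 1) ≤
        ENNReal.ofReal K * ∫⁻ η in E, β η ∂arcLen (ball 0 1)) ↔
    ∃ K : ℝ, 0 < K ∧ ((arcLen (ball 0 1)).withDensity β).map (mobius c a) ≤
      ENNReal.ofReal K • (arcLen (ball 0 1)).withDensity β := by
  have hc' : ‖(starRingEnd ℂ) c‖ = 1 := (norm_conj c).trans hc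
  have ha' : ‖-(c * a)‖ < 1 := by rwa [norm_neg, norm_mul, hc, one_mul]
  set ω := mobius ((starRingEnd ℂ) c) (-(c * a))
  have hωφ : ∀ z ∈ sphere (0 : ℂ) 1, ω (mobius c a z) = z := fun z hz =>
    mobius_conj_neg_mul_mobius hc ha (mem_sphere_zero_iff_norm.1 hz).le
  have hφω : ∀ z ∈ sphere (0 : ℂ) 1, mobius c a (ω z) = z := fun z hz =>
    mobius_mobius_conj_neg_mul hc ha (mem_sphere_zero_iff_norm.1 hz).le
  have hψω : ∀ z ∈ sphere (0 : ℂ) 1, ψ z = ω z := fun z hz => by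
    conv_lhs => rw [← hφω z hz, hψ (mapsTo_mobius_sphere hc' ha' hz)]
  have hL {t : ℂ} (ht : ‖t‖ < 1) : 0 < 1 / (1 - ‖t‖) ^ 2 := by
    have := sub_pos.2 ht
    positivity
  have setLIntegral_eq (E : Set ℂ) (hE : E ⊆ sphere 0 1) (hEm : MeasurableSet E) :
      ∫⁻ η in E, β (ψ η) ∂arcLen (ball 0 1) = ∫⁻ η in E, β (ω η) ∂arcLen (ball 0 1) :=
    setLIntegral_congr_fun hEm fun z hz => congrArg β (hψω z (hE hz))
  constructor
  · rintro ⟨K, hK, hle⟩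
    refine ⟨1 / (1 - ‖-(c * a)‖) ^ 2 * K, mul_pos (hL ha') hK, ?_⟩
    rw [ENNReal.ofReal_mul (hL ha').le]
    exact map_withDensity_le_of_setLIntegral_comp_le isClosed_sphere.measurableSet
      ae_mem_sphere_arcLen (measurable_mobius c a) (measurable_mobius _ _)
      (ae_mem_sphere_arcLen.mono hωφ) (ae_mem_sphere_arcLen.mono hφω)
      (arcLen_le_smul_map_mobius hc' ha')
      fun E hE hEm => setLIntegral_eq E hE hEm ▸ hle E hE hEm
  · rintro ⟨K, hK, hle⟩
    refine ⟨1 / (1 - ‖a‖) ^ 2 * K, mul_pos (hL ha) hK, fun E hE hEm => ?_⟩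
    rw [ENNReal.ofReal_mul (hL ha).le, setLIntegral_eq E hE hEm]
    exact setLIntegral_comp_le_of_map_withDensity_le (measurable_mobius c a)
      (ae_mem_sphere_arcLen.mono hωφ) (arcLen_le_smul_map_mobius hc ha) hle hEm

end ArcLength

theorem stmt16_general {ρ : ℂ → ℝ} (hρcont : ContinuousOn ρ (closedBall 0 1))
    (hρharm : HarmonicOn ρ (ball 0 1))
    (hρbd : ∀ z ∈ sphere (0 : ℂ) 1, ρ z = -(1 - z.re) ^ (3 / 4 : ℝ)) {ν : Measure ℂ}
    (hν : IsRieszMeasure (fun z => -(1 - z.re) ^ (3 / 4 : ℝ) - ρ z) (ball 0 1) ν)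
    {μ : ℝ → Measure ℂ}
    (hμ : ∀ r < 0, IsMAMeasure (fun z => -(1 - z.re) ^ (3 / 4 : ℝ) - ρ z) (ball 0 1) ν r (μ r))
    {μb : Measure ℂ} (hμb : IsBoundaryMA μ μb) {β : ℂ → ℝ≥0∞}
    (hβ : μb = (arcLen (ball 0 1)).withDensity β) {a : ℂ} (ha : a ∈ ball (0 : ℂ) 1) {θ₀ : ℝ}
    {φ : ℂ → ℂ}
    (hφ : ∀ z, φ z = exp (θ₀ * I) * ((z - a) / (1 - (starRingEnd ℂ) a * z)))
    {φinv : ℂ → ℂ} (hφinv : LeftInvOn φinv φ (sphere 0 1)) {p : ℝ} (hp : 0 < p) :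
    (BoundedCompOp p μ φ ↔
      ∃ K : ℝ, 0 < K ∧ ∀ E ⊆ sphere (0 : ℂ) 1, MeasurableSet E →
        ∫⁻ η in E, β (φinv η) ∂arcLen (ball 0 1) ≤
          ENNReal.ofReal K * ∫⁻ η in E, β η ∂arcLen (ball 0 1)) ∧
    ((∃ K : ℝ, 0 < K ∧ ∀ E ⊆ sphere (0 : ℂ) 1, MeasurableSet E →
        ∫⁻ η in E, β (φinv η) ∂arcLen (ball 0 1) ≤
          ENNReal.ofReal K * ∫⁻ η in E, β η ∂arcLen (ball 0 1)) ↔ φ 1 = 1) := by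
  obtain rfl : φ = mobius (exp (θ₀ * I)) a := funext hφ
  have hc := norm_exp_ofReal_mul_I θ₀
  have ha1 := mem_ball_zero_iff.1 ha
  have hu := isPeakExhaustion_of_harmonicOn hρcont hρharm hρbd
  have h : IsMAFamily _ (ball 0 1) ν μ := ⟨hu.isStrictExhaustion, hν, hμ⟩
  have hμbS : μb (sphere 0 1)ᶜ = 0 :=
    hβ ▸ withDensity_absolutelyContinuous _ _ ae_mem_sphere_arcLen
  have := h.isFiniteMeasure_boundary hμb ⟨0, mem_ball_self one_pos, hu.neg (mem_ball_self one_pos)⟩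
  have bounded_iff : BoundedCompOp p μ (mobius (exp (θ₀ * I)) a) ↔
      mobius (exp (θ₀ * I)) a 1 = 1 :=
    ⟨h.mobius_one_eq_one_of_boundedCompOp hu hc ha1 hp,
      fun h1 => (hu.isQuasiInvariant_mobius hc ha1 h1).boundedCompOp h hp⟩
  have map_le_iff : (∃ K : ℝ, 0 < K ∧ μb.map (mobius (exp (θ₀ * I)) a) ≤ ENNReal.ofReal K • μb) ↔
      mobius (exp (θ₀ * I)) a 1 = 1 :=
    ⟨fun ⟨_, _, hK⟩ => h.mobius_one_eq_one_of_map_le hu hμb hμbS hc ha1 hK, fun h1 =>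
      have hq := hu.isQuasiInvariant_mobius hc ha1 h1
      ⟨_, hq.pos, hq.map_boundary_le h hμb hμbS (continuousOn_mobius _ ha1)
        (mapsTo_mobius_sphere hc ha1)⟩⟩
  have density_iff := (exists_setLIntegral_leftInv_mobius_le_iff hc ha1 hφinv).trans
    (hβ ▸ map_le_iff)
  exact ⟨bounded_iff.trans density_iff.symm, density_iff⟩

/-- For the exhaustion `u₀ = -(1-Re z)^{3/4} - ρ` of the unit disc with
boundary Monge–Ampère measure `dμ_{u₀} = β dσ`, and a Möbius automorphism
`φ(z) = e^{iθ₀}(z-a)/(1-āz)`, the following are equivalent for `1 ≤ p`: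
(i) `C_φ` is bounded on `H^p_{u₀}(𝔻)`;
(ii) `∃ K > 0`, `∫_E β(φ⁻¹(η)) dσ ≤ K ∫_E β(η) dσ` for all measurable `E ⊆ ∂𝔻`;
(iii) `φ(1) = 1`. -/
theorem stmt16 (ρ : ℂ → ℝ)
    (hρcont : ContinuousOn ρ (closedBall (0:ℂ) 1))
    (hρharm : HarmonicOn ρ (ball (0:ℂ) 1))
    (hρbd : ∀ z ∈ sphere (0:ℂ) 1, ρ z = -(1 - z.re) ^ (3/4 : ℝ))
    (ν : Measure ℂ)
    (hν : IsRieszMeasure (fun z => -(1 - z.re) ^ (3/4 : ℝ) - ρ z) (ball (0:ℂ) 1) ν)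
    (μfam : ℝ → Measure ℂ)
    (hμ : ∀ r : ℝ, r < 0 →
      IsMAMeasure (fun z => -(1 - z.re) ^ (3/4 : ℝ) - ρ z) (ball (0:ℂ) 1) ν r (μfam r))
    (μb : Measure ℂ) (hμb : IsBoundaryMA μfam μb)
    (β : ℂ → ℝ) (hβ0 : ∀ ξ, 0 ≤ β ξ)
    (hβ : μb = (arcLen (ball (0:ℂ) 1)).withDensity (fun ξ => ENNReal.ofReal (β ξ)))
    (a : ℂ) (ha : a ∈ ball (0:ℂ) 1) (θ₀ : ℝ) (φ : ℂ → ℂ)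
    (hφ : ∀ z, φ z = Complex.exp ((θ₀ : ℝ) * Complex.I) *
      ((z - a) / (1 - (starRingEnd ℂ) a * z)))
    (φinv : ℂ → ℂ)
    (hφinv : ∀ z ∈ closedBall (0:ℂ) 1, φ (φinv z) = z ∧ φinv (φ z) = z)
    (p : ℝ) (hp : 1 ≤ p) :
    (BoundedCompOp p μfam φ ↔
      (∃ K : ℝ, 0 < K ∧ ∀ E : Set ℂ, E ⊆ sphere (0:ℂ) 1 → MeasurableSet E →
        ∫⁻ η in E, ENNReal.ofReal (β (φinv η)) ∂(arcLen (ball (0:ℂ) 1)) ≤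
          ENNReal.ofReal K * ∫⁻ η in E, ENNReal.ofReal (β η) ∂(arcLen (ball (0:ℂ) 1)))) ∧
    ((∃ K : ℝ, 0 < K ∧ ∀ E : Set ℂ, E ⊆ sphere (0:ℂ) 1 → MeasurableSet E →
        ∫⁻ η in E, ENNReal.ofReal (β (φinv η)) ∂(arcLen (ball (0:ℂ) 1)) ≤
          ENNReal.ofReal K * ∫⁻ η in E, ENNReal.ofReal (β η) ∂(arcLen (ball (0:ℂ) 1))) ↔
      φ 1 = 1) := by
  exact stmt16_general hρcont hρharm hρbd hν hμ hμb hβ ha hφ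
    (fun z hz => (hφinv z (sphere_subset_closedBall hz)).2) (one_pos.trans_le hp)

end
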